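/- arXiv:2407.01341 — 2 statements merged into one kernel-verified Lean document; each statement's English description precedes it below -/
import Mathlib

section
/- Let q = ψ' + ψ² with ψ ∈ 𝒜(I_π). Then λ₁(I_π, q) ≥ 3, with equality if and only if q(x) = 1 + 2 tan²x; in the equality case an eigenfunction is cos²x. -/
open MeasureTheory Real Set Filter
open scoped ENNReal

noncomputable section

/-- Test class for the Dirichlet eigenvalue with measure potential on `(a,b)`:
`C¹` functions vanishing outside the open interval (a core of `H¹₀`). -/
def TestFun (a b : ℝ) (v : ℝ → ℝ) : Prop :=
  ContDiff ℝ 1 v ∧ ∀ x ∉ Ioo a b, v x = 0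

/-- Rayleigh quotient for the Dirichlet eigenvalue with (nonnegative, possibly infinite)
measure potential `q` on the interval `(a,b)`. -/
def dirRQ (a b : ℝ) (q : Measure ℝ) (v : ℝ → ℝ) : ℝ≥0∞ :=
  ((∫⁻ x in Ioo a b, ENNReal.ofReal ((deriv v x) ^ 2)) +
      ∫⁻ x in Ioo a b, ENNReal.ofReal ((v x) ^ 2) ∂q) /
    ∫⁻ x in Ioo a b, ENNReal.ofReal ((v x) ^ 2)

/-- `λ₁((a,b), q)`, the first Dirichlet eigenvalue with measure potential `q`. -/
def lam1 (a b : ℝ) (q : Measure ℝ) : ℝ≥0∞ :=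
  ⨅ (v : ℝ → ℝ)
    (_ : TestFun a b v ∧ (∫⁻ x in Ioo a b, ENNReal.ofReal ((v x) ^ 2)) ≠ 0),
    dirRQ a b q v

/-- The class `𝒜(I_π)`: an increasing function `psi` with finiteness domain `dom ⊆ I_π`
(an interval), satisfying the improved-monotonicity gap condition, together with the
measure `nu` representing its distributional derivative `ψ'` on `dom`. -/
structure PsiA where
  dom : Set ℝ
  domSub : dom ⊆ Ioo (-(π / 2)) (π / 2)
  domConn : dom.OrdConnected
  psi : ℝ → ℝ
  mono : MonotoneOn psi dom
  gap : ∀ ⦃x⦄, x ∈ dom → ∀ ⦃y⦄, y ∈ dom → x < y →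
    2 * tan ((y - x) / 2) ≤ psi y - psi x
  nu : Measure ℝ
  nu_eq : ∀ ⦃x⦄, x ∈ dom → ∀ ⦃y⦄, y ∈ dom → x ≤ y →
    nu (Ioc x y) = ENNReal.ofReal (psi y - psi x)

/-- The measure `ψ'`, extended by `+∞` on `I_π \ dom ψ`. -/
def PsiA.derivM (P : PsiA) : Measure ℝ :=
  P.nu.restrict P.dom + (∞ : ℝ≥0∞) • volume.restrict (Ioo (-(π / 2)) (π / 2) \ P.dom)

/-- The measure `ψ² dx`, extended by `+∞` on `I_π \ dom ψ`. -/
def PsiA.sqM (P : PsiA) : Measure ℝ :=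
  (volume.restrict P.dom).withDensity (fun x => ENNReal.ofReal ((P.psi x) ^ 2)) +
    (∞ : ℝ≥0∞) • volume.restrict (Ioo (-(π / 2)) (π / 2) \ P.dom)

/-- The measure `q = ψ' + ψ²`, extended by `+∞` on `I_π \ dom ψ`. -/
def PsiA.qM (P : PsiA) : Measure ℝ :=
  P.nu.restrict P.dom +
    (volume.restrict P.dom).withDensity (fun x => ENNReal.ofReal ((P.psi x) ^ 2)) +
    (∞ : ℝ≥0∞) • volume.restrict (Ioo (-(π / 2)) (π / 2) \ P.dom)

/-- The function `cos² x` on `I_π`, extended by zero. -/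
def cosSq : ℝ → ℝ := fun x => if x ∈ Ioo (-(π / 2)) (π / 2) then cos x ^ 2 else 0

/-- The measure with density `1 + 2 tan² x` on `I_π`. -/
def tanWeight : Measure ℝ :=
  (volume.restrict (Ioo (-(π / 2)) (π / 2))).withDensity
    fun x => ENNReal.ofReal (1 + 2 * tan x ^ 2)

/-!
Write a ground state equation `-u'' + (p' + p²) u = l u` in the Prüfer angle
`tan θ = (p u - u') / (l u)`. The derivative `p'` of the potential drops out:
`θ' = cos² θ + l sin² θ - 2 p sin θ cos θ`. Take for `p` a Steklov mean of `ψ`, which is continuous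
and inherits the gap condition, and truncate the rate from below so that `θ` has an inverse `ξ`.
If `λ₁ < l`, Barta's inequality forces the solution starting at `θ = -π / 2` to reach `π / 2` on
an interval contained in `dom ψ`.

At the angles `±t` the gap condition reads `p (ξ t) - p (ξ (-t)) ≥ 2 tan δ` with
`δ t = (ξ t - ξ (-t)) / 2`, and adding the two equations gives a differential inequality for `δ`.
For `l = 3` it yields `δ t ≥ t` up to `t = π / 2`, which is impossible because `dom ψ ⊆ I_π`; hence
`λ₁ ≥ 3`. If `λ₁ = 3`, such angles exist for all `l > 3`, and Grönwall's inequality for `δ` together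
with the control of the midpoint `(ξ t + ξ (-t)) / 2` shows `θ → id` as `l → 3`. In the limit,
`cos² x + 3 sin² x - 2 ψ sin x cos x = 1`, that is, `ψ = tan`.
-/

open scoped Interval Topology

/-! ### Calculus on intervals -/

lemma sq_sub_le_mul_sub_of_sq_deriv_le {f f' g g' : ℝ → ℝ} {a b : ℝ} (hab : a ≤ b)
    (hf : ∀ x ∈ Icc a b, HasDerivAt f (f' x) x) (hg : ∀ x ∈ Icc a b, HasDerivAt g (g' x) x)
    (hfg : ∀ x ∈ Icc a b, f' x ^ 2 ≤ g' x) :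
    (f b - f a) ^ 2 ≤ (b - a) * (g b - g a) := by
  rcases hab.eq_or_lt with rfl | hlt
  · simp
  have hba : 0 < b - a := sub_pos.2 hlt
  set c := (f b - f a) / (b - a)
  have hcb : c * (b - a) = f b - f a := div_mul_cancel₀ _ hba.ne'
  have hderiv : ∀ x ∈ Icc a b,
      HasDerivAt (fun y => g y - 2 * c * f y + c ^ 2 * y) (g' x - 2 * c * f' x + c ^ 2) x :=
    fun x hx => ((hg x hx).sub ((hf x hx).const_mul (2 * c))).add
      (((hasDerivAt_id x).const_mul (c ^ 2)).congr_deriv (mul_one _))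
  have hmono : MonotoneOn (fun y => g y - 2 * c * f y + c ^ 2 * y) (Icc a b) :=
    monotoneOn_of_hasDerivWithinAt_nonneg (convex_Icc a b)
      (fun x hx => (hderiv x hx).continuousAt.continuousWithinAt)
      (fun x hx => (hderiv x (interior_subset hx)).hasDerivWithinAt)
      (fun x hx => by nlinarith [hfg x (interior_subset hx), sq_nonneg (f' x - c)])
  have hle : g a - 2 * c * f a + c ^ 2 * a ≤ g b - 2 * c * f b + c ^ 2 * b :=
    hmono (left_mem_Icc.2 hab) (right_mem_Icc.2 hab) hab
  have hcg : c ^ 2 * (b - a) ≤ g b - g a := by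
    linarith [congrArg (fun z => 2 * c * z) hcb, mul_assoc c c (b - a)]
  calc (f b - f a) ^ 2 = (b - a) * (c ^ 2 * (b - a)) := by rw [← hcb]; ring
    _ ≤ (b - a) * (g b - g a) := mul_le_mul_of_nonneg_left hcg hba.le

lemma gronwallBound_zero_nonneg {K ε x : ℝ} (hK : 0 ≤ K) (hε : 0 ≤ ε) (hx : 0 ≤ x) :
    0 ≤ gronwallBound 0 K ε x := by
  rcases hK.eq_or_lt with rfl | hK'
  · simpa only [gronwallBound_K0, zero_add] using mul_nonneg hε hx
  · have hexp : 1 ≤ exp (K * x) := one_le_exp (mul_nonneg hK hx)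
    simp only [gronwallBound_of_K_ne_0 hK'.ne', zero_mul, zero_add]
    exact mul_nonneg (div_nonneg hε hK) (sub_nonneg.2 hexp)

lemma le_gronwallBound_of_deriv_le_max_zero {f f' : ℝ → ℝ} {K ε a b : ℝ} (hK : 0 ≤ K) (hε : 0 ≤ ε)
    (hf : ∀ x ∈ Icc a b, HasDerivAt f (f' x) x) (ha : f a ≤ 0)
    (hbound : ∀ x ∈ Icc a b, f' x ≤ K * max (f x) 0 + ε) :
    ∀ x ∈ Icc a b, f x ≤ gronwallBound 0 K ε (x - a) := by
  have hstrict : ∀ x ∈ Icc a b, ∀ ε' ∈ Ioi ε, f x ≤ gronwallBound 0 K ε' (x - a) := by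
    intro x hx ε' hε'
    have hnonneg : ∀ y ∈ Icc a b, 0 ≤ gronwallBound 0 K ε' (y - a) := fun y hy =>
      gronwallBound_zero_nonneg hK (hε.trans hε'.out.le) (sub_nonneg.2 hy.1)
    refine image_le_of_deriv_right_lt_deriv_boundary
      (fun y hy => (hf y hy).continuousAt.continuousWithinAt)
      (fun y hy => (hf y (Ico_subset_Icc_self hy)).hasDerivWithinAt)
      (by rwa [sub_self, gronwallBound_x0]) (fun y => hasDerivAt_gronwallBound_shift 0 K ε' y a)
      (fun y hy hy_eq => ?_) hx
    have hy := Ico_subset_Icc_self hy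
    calc f' y ≤ K * max (f y) 0 + ε := hbound y hy
      _ = K * gronwallBound 0 K ε' (y - a) + ε := by rw [hy_eq, max_eq_left (hnonneg y hy)]
      _ < K * gronwallBound 0 K ε' (y - a) + ε' := by linarith [hε'.out]
  intro x hx
  exact ge_of_tendsto (gronwallBound_continuous_ε 0 K (x - a)).continuousWithinAt.tendsto
    (eventually_mem_nhdsWithin.mono (hstrict x hx))

lemma tendsto_intervalIntegral_comp_of_bounded {E ι : Type*} [NormedAddCommGroup E] [ProperSpace E]
    {l : Filter ι} [l.IsCountablyGenerated] {Φ : ℝ × E → ℝ} (hΦ : Continuous Φ)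
    {g : ι → ℝ → E} {g₀ : ℝ → E} {a b M : ℝ}
    (hmeas : ∀ᶠ i in l, AEStronglyMeasurable (g i) (volume.restrict (Ι a b)))
    (hbound : ∀ᶠ i in l, ∀ s ∈ Ι a b, ‖g i s‖ ≤ M)
    (hlim : ∀ᵐ s, s ∈ Ι a b → Tendsto (fun i => g i s) l (𝓝 (g₀ s))) :
    Tendsto (fun i => ∫ s in a..b, Φ (s, g i s)) l (𝓝 (∫ s in a..b, Φ (s, g₀ s))) := by
  obtain ⟨C, hC⟩ :=
    (isCompact_uIcc.prod (isCompact_closedBall (0 : E) M)).exists_bound_of_continuousOn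
    (f := Φ) hΦ.continuousOn
  refine intervalIntegral.tendsto_integral_filter_of_dominated_convergence (fun _ => C)
    (hmeas.mono fun i hi => hΦ.comp_aestronglyMeasurable (aestronglyMeasurable_id.prodMk hi))
    (hbound.mono fun i hi => .of_forall fun s hs => hC (s, g i s)
      ⟨uIoc_subset_uIcc hs, mem_closedBall_zero_iff.2 (hi s hs)⟩)
    intervalIntegrable_const (hlim.mono fun s hs hmem => ?_)
  exact (hΦ.tendsto (s, g₀ s)).comp (tendsto_const_nhds.prodMk_nhds (hs hmem))

lemma exists_monotone_eqOn_Icc {f : ℝ → ℝ} {a b : ℝ} (hf : MonotoneOn f (Icc a b))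
    (hab : a ≤ b) :
    ∃ g : ℝ → ℝ, Monotone g ∧ EqOn g f (Icc a b) ∧ ∀ x, g x ∈ Icc (f a) (f b) := by
  have hproj (x : ℝ) : (projIcc a b hab x : ℝ) ∈ Icc a b := Subtype.coe_prop _
  refine ⟨fun x => f (projIcc a b hab x),
    fun x y hxy => hf (hproj x) (hproj y) (monotone_projIcc hab hxy),
    fun x hx => congrArg f (congrArg Subtype.val (projIcc_of_mem hab hx)), fun x =>
    ⟨hf (left_mem_Icc.2 hab) (hproj x) (hproj x).1, hf (hproj x) (right_mem_Icc.2 hab) (hproj x).2⟩⟩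

lemma strictMono_comp_projIcc_add {f : ℝ → ℝ} {a b : ℝ} (hmono : StrictMonoOn f (Icc a b))
    (hab : a ≤ b) :
    StrictMono fun x => f (projIcc a b hab x) + (min (x - a) 0 + max (x - b) 0) := by
  have hproj (x : ℝ) : (projIcc a b hab x : ℝ) ∈ Icc a b := Subtype.coe_prop _
  intro x y hxy
  have hf := hmono.monotoneOn (hproj x) (hproj y) (monotone_projIcc hab hxy.le)
  have hmin : min (x - a) 0 ≤ min (y - a) 0 := by gcongr
  have hmax : max (x - b) 0 ≤ max (y - b) 0 := by gcongr
  rcases le_or_gt y a with hya | hya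
  · have : min (x - a) 0 < min (y - a) 0 := by
      rwa [min_eq_left (by linarith), min_eq_left (by linarith), sub_lt_sub_iff_right]
    dsimp only; linarith
  rcases lt_or_ge b y with hby | hyb
  · have : max (x - b) 0 < max (y - b) 0 :=
      lt_max_of_lt_left (max_lt (by linarith) (by linarith))
    dsimp only; linarith
  have hproj_lt : (projIcc a b hab x : ℝ) < projIcc a b hab y := by
    rw [coe_projIcc, coe_projIcc, min_eq_right (hxy.le.trans hyb), min_eq_right hyb,
      max_eq_right hya.le]
    exact max_lt hya hxy
  have := hmono (hproj x) (hproj y) hproj_lt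
  dsimp only; linarith

lemma exists_orderIso_eqOn_Icc {f : ℝ → ℝ} {a b : ℝ} (hmono : StrictMonoOn f (Icc a b))
    (hcont : ContinuousOn f (Icc a b)) (hab : a ≤ b) :
    ∃ θ : ℝ ≃o ℝ, EqOn θ f (Icc a b) := by
  have hproj (x : ℝ) : (projIcc a b hab x : ℝ) ∈ Icc a b := Subtype.coe_prop _
  let θ : ℝ → ℝ := fun x => f (projIcc a b hab x) + (min (x - a) 0 + max (x - b) 0)
  have hθ_cont : Continuous θ :=
    (hcont.comp_continuous (continuous_subtype_val.comp continuous_projIcc) hproj).add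
      (by fun_prop)
  have hlower (x : ℝ) : f a - b + x ≤ θ x := by
    have := hmono.monotoneOn (left_mem_Icc.2 hab) (hproj x) (hproj x).1
    simp only [θ]; grind
  have hupper (x : ℝ) : θ x ≤ f b - a + x := by
    have := hmono.monotoneOn (hproj x) (right_mem_Icc.2 hab) (hproj x).2
    simp only [θ]; grind
  have hsurj : Function.Surjective θ := hθ_cont.surjective
    (tendsto_atTop_mono hlower (tendsto_atTop_add_const_left _ _ tendsto_id))
    (tendsto_atBot_mono hupper (tendsto_atBot_add_const_left _ _ tendsto_id))
  refine ⟨(strictMono_comp_projIcc_add hmono hab).orderIsoOfSurjective θ hsurj, fun x hx => ?_⟩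
  change f (projIcc a b hab x) + (min (x - a) 0 + max (x - b) 0) = f x
  rw [projIcc_of_mem hab hx, min_eq_right (sub_nonneg.2 hx.1),
    max_eq_right (sub_nonpos.2 hx.2), add_zero, add_zero]

/-! ### Sets and measures on the line -/

lemma subset_of_volume_diff_eq_zero {U D : Set ℝ} (hU : IsOpen U) (hD : D.OrdConnected)
    (h : volume (U \ D) = 0) : U ⊆ D := by
  intro x hx
  obtain ⟨r, hr, hball⟩ := Metric.isOpen_iff.1 hU x hx
  rw [Real.ball_eq_Ioo] at hball
  have hmeets {s : Set ℝ} (hs : IsOpen s) (hne : s.Nonempty) (hsU : s ⊆ U) : (s ∩ D).Nonempty := by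
    by_contra hempty
    have hsub : s ⊆ U \ D := fun y hy => ⟨hsU hy, fun hyD => hempty ⟨y, hy, hyD⟩⟩
    exact (hs.measure_pos volume hne).ne' (measure_mono_null hsub h)
  obtain ⟨y, hy, hyD⟩ := hmeets (isOpen_Ioo (a := x - r) (b := x)) (nonempty_Ioo.2 (by linarith))
    fun y hy => hball ⟨hy.1, by linarith [hy.2]⟩
  obtain ⟨z, hz, hzD⟩ := hmeets (isOpen_Ioo (a := x) (b := x + r)) (nonempty_Ioo.2 (by linarith))
    fun z hz => hball ⟨by linarith [hz.1], hz.2⟩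
  exact hD.out hyD hzD ⟨hy.2.le, hz.1.le⟩

lemma exists_subset_Ioo_of_isCompact {U K : Set ℝ} (hU : IsOpen U) (hK : IsCompact K)
    (hne : K.Nonempty) (hKU : K ⊆ U) :
    ∃ α β, α ∈ U ∧ β ∈ U ∧ α < β ∧ K ⊆ Ioo α β := by
  obtain ⟨r, hr, hball⟩ := Metric.isOpen_iff.1 hU _ (hKU (hK.sInf_mem hne))
  obtain ⟨r', hr', hball'⟩ := Metric.isOpen_iff.1 hU _ (hKU (hK.sSup_mem hne))
  rw [Real.ball_eq_Ioo] at hball hball'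
  have hle : sInf K ≤ sSup K := csInf_le hK.bddBelow (hK.sSup_mem hne)
  exact ⟨sInf K - r / 2, sSup K + r' / 2, hball ⟨by linarith, by linarith⟩,
    hball' ⟨by linarith, by linarith⟩, by linarith, fun x hx =>
      ⟨by linarith [csInf_le hK.bddBelow hx], by linarith [le_csSup hK.bddAbove hx]⟩⟩

lemma frequently_nhdsWithin_mem_of_dense {X : Type*} [TopologicalSpace X] {s t : Set X} {x : X}
    (ht : Dense t) (hs : IsOpen s) (hx : x ∈ closure s) : ∃ᶠ y in 𝓝[s] x, y ∈ t := by
  have hmem : x ∈ closure (s ∩ t) :=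
    closure_minimal (ht.open_subset_closure_inter hs) isClosed_closure hx
  rw [mem_closure_iff_frequently] at hmem
  exact frequently_nhdsWithin_iff.2 (hmem.mono fun y hy => hy.symm)

lemma eqOn_of_monotoneOn_of_ae_eq {f g : ℝ → ℝ} {a b : ℝ} (hf : MonotoneOn f (Ioo a b))
    (hg : ContinuousOn g (Ioo a b)) (hfg : ∀ᵐ s, s ∈ Ioo a b → f s = g s) :
    EqOn f g (Ioo a b) := by
  intro z hz
  have hdense : Dense {s | s ∈ Ioo a b → f s = g s} := Measure.dense_of_ae hfg
  have hgz : ContinuousAt g z := hg.continuousAt (Ioo_mem_nhds hz.1 hz.2)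
  have hnear : ∀ᶠ s in 𝓝 z, s ∈ Ioo a b := Ioo_mem_nhds hz.1 hz.2
  have hright : ∃ᶠ s in 𝓝[>] z, s ∈ Ioo a b → f s = g s :=
    frequently_nhdsWithin_mem_of_dense hdense isOpen_Ioi (by rw [closure_Ioi]; exact self_mem_Ici)
  have hleft : ∃ᶠ s in 𝓝[<] z, s ∈ Ioo a b → f s = g s :=
    frequently_nhdsWithin_mem_of_dense hdense isOpen_Iio (by rw [closure_Iio]; exact self_mem_Iic)
  refine le_antisymm ?_ ?_
  · refine ge_of_tendsto_of_frequently (hgz.tendsto.mono_left nhdsWithin_le_nhds)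
      ((hright.and_eventually ((hnear.filter_mono nhdsWithin_le_nhds).and
        eventually_mem_nhdsWithin)).mono fun s hs => ?_)
    exact (hf hz hs.2.1 hs.2.2.out.le).trans_eq (hs.1 hs.2.1)
  · refine le_of_tendsto_of_frequently (hgz.tendsto.mono_left nhdsWithin_le_nhds)
      ((hleft.and_eventually ((hnear.filter_mono nhdsWithin_le_nhds).and
        eventually_mem_nhdsWithin)).mono fun s hs => ?_)
    exact (hs.1 hs.2.1).symm.trans_le (hf hs.2.1 hz hs.2.2.out.le)

lemma restrict_Ioc_eq_of_forall_Ioc {μ ν : Measure ℝ} {c d : ℝ} (hfin : μ (Ioc c d) ≠ ∞)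
    (h : ∀ x y, c ≤ x → x ≤ y → y ≤ d → μ (Ioc x y) = ν (Ioc x y)) :
    μ.restrict (Ioc c d) = ν.restrict (Ioc c d) := by
  have hIoc (x y : ℝ) : μ.restrict (Ioc c d) (Ioc x y) = ν.restrict (Ioc c d) (Ioc x y) := by
    rw [Measure.restrict_apply measurableSet_Ioc, Measure.restrict_apply measurableSet_Ioc,
      Ioc_inter_Ioc]
    rcases le_total (max x c) (min y d) with hle | hle
    · exact h _ _ (le_max_right _ _) hle (min_le_right _ _)
    · rw [Ioc_eq_empty hle.not_gt, measure_empty, measure_empty]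
  have : IsFiniteMeasure (μ.restrict (Ioc c d)) :=
    ⟨by rw [Measure.restrict_apply_univ]; exact hfin.lt_top⟩
  refine Measure.ext_of_Ioc_finite _ _ ?_ fun x y _ => hIoc x y
  have hcd := hIoc c d
  rwa [Measure.restrict_apply_self, Measure.restrict_apply_self, ← Measure.restrict_apply_univ,
    ← Measure.restrict_apply_univ (μ := ν)] at hcd

lemma restrict_Ioo_eq_of_forall_Ioc {μ ν : Measure ℝ} {a b : ℝ} (hab : a < b)
    (hfin : ∀ x ∈ Ioo a b, ∀ y ∈ Ioo a b, μ (Ioc x y) ≠ ∞)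
    (h : ∀ x ∈ Ioo a b, ∀ y ∈ Ioo a b, x ≤ y → μ (Ioc x y) = ν (Ioc x y)) :
    μ.restrict (Ioo a b) = ν.restrict (Ioo a b) := by
  obtain ⟨u, -, hu, hua⟩ := exists_seq_strictAnti_tendsto' hab
  obtain ⟨v, -, hv, hvb⟩ := exists_seq_strictMono_tendsto' hab
  have hUnion : Ioo a b = ⋃ n, Ioc (u n) (v n) := by
    refine subset_antisymm (fun x hx => ?_)
      (iUnion_subset fun n x hx => ⟨(hu n).1.trans hx.1, hx.2.trans_lt (hv n).2⟩)
    obtain ⟨n, hun, hvn⟩ :=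
      ((hua.eventually_lt_const hx.1).and (hvb.eventually_const_lt hx.2)).exists
    exact mem_iUnion.2 ⟨n, hun, hvn.le⟩
  rw [hUnion, Measure.restrict_iUnion_congr]
  exact fun n => restrict_Ioc_eq_of_forall_Ioc (hfin _ (hu n) _ (hv n)) fun x y hx hxy hy =>
    h x ⟨(hu n).1.trans_le hx, (hxy.trans hy).trans_lt (hv n).2⟩
      y ⟨(hu n).1.trans_le (hx.trans hxy), hy.trans_lt (hv n).2⟩ hxy

lemma setLIntegral_Ioo_ofReal_eq_intervalIntegral {f : ℝ → ℝ} {a b : ℝ} (hab : a ≤ b)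
    (hf : Continuous f) (hf0 : ∀ x, 0 ≤ f x) :
    ∫⁻ x in Ioo a b, ENNReal.ofReal (f x) = ENNReal.ofReal (∫ x in a..b, f x) := by
  rw [intervalIntegral.integral_of_le hab, integral_Ioc_eq_integral_Ioo,
    ofReal_integral_eq_lintegral_ofReal
      ((hf.intervalIntegrable a b).1.mono_set Ioo_subset_Ioc_self) (.of_forall hf0)]

/-! ### The Prüfer angle -/

/-- Right-hand side of the Prüfer equation `θ' = cos² θ + l sin² θ - 2 p sin θ cos θ`, satisfied by
the angle with `tan θ = (p u - u') / (l u)` when `-u'' + (p' + p ^ 2) u = l u`. -/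
def prueferRate (l p t : ℝ) : ℝ := cos t ^ 2 + l * sin t ^ 2 - 2 * p * (sin t * cos t)

/-- The Prüfer rate truncated from below at `1 / 4`, so that the angle is strictly increasing. -/
def truncPrueferRate (l p t : ℝ) : ℝ := max (prueferRate l p t) (1 / 4)

lemma truncPrueferRate_pos (l p t : ℝ) : 0 < truncPrueferRate l p t :=
  lt_max_of_lt_right (by norm_num)

@[fun_prop]
lemma continuous_truncPrueferRate {X : Type*} [TopologicalSpace X] {l p t : X → ℝ}
    (hl : Continuous l) (hp : Continuous p) (ht : Continuous t) :
    Continuous fun x => truncPrueferRate (l x) (p x) (t x) := by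
  unfold truncPrueferRate prueferRate
  fun_prop

lemma abs_two_mul_sin_mul_cos_le (t : ℝ) : |2 * (sin t * cos t)| ≤ 1 := by
  rw [← mul_assoc, ← sin_two_mul]
  exact abs_sin_le_one _

lemma truncPrueferRate_le (l p t : ℝ) : truncPrueferRate l p t ≤ 1 + |l| + |p| := by
  have hl := abs_nonneg l
  have hp := abs_nonneg p
  refine max_le ?_ (by linarith)
  have hlsin : l * sin t ^ 2 ≤ |l| :=
    (mul_le_mul_of_nonneg_right (le_abs_self l) (sq_nonneg _)).trans
      (mul_le_of_le_one_right hl (sin_sq_le_one t))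
  have hpsin : -(p * (2 * (sin t * cos t))) ≤ |p| := (neg_le_abs _).trans <| by
    rw [abs_mul]
    exact mul_le_of_le_one_right hp (abs_two_mul_sin_mul_cos_le t)
  rw [prueferRate]
  linarith [cos_sq_le_one t]

lemma hasDerivAt_prueferRate (l p t : ℝ) :
    HasDerivAt (prueferRate l p) ((l - 1) * (2 * (sin t * cos t)) - 2 * (p * cos (2 * t))) t := by
  have hcos := (hasDerivAt_cos t).pow 2
  have hsin := ((hasDerivAt_sin t).pow 2).const_mul l
  have hmul := ((hasDerivAt_sin t).mul (hasDerivAt_cos t)).const_mul (2 * p)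
  refine ((hcos.add hsin).sub hmul).congr_deriv ?_
  rw [cos_two_mul']
  simp only [Nat.cast_ofNat, Nat.add_one_sub_one, pow_one]
  ring

lemma lipschitzWith_truncPrueferRate {l p M : ℝ} (hp : |p| ≤ M) :
    LipschitzWith (|l - 1| + 2 * M).toNNReal (truncPrueferRate l p) := by
  refine LipschitzWith.max_const (lipschitzWith_of_nnnorm_deriv_le
    (fun t => (hasDerivAt_prueferRate l p t).differentiableAt) fun t => ?_) _
  rw [(hasDerivAt_prueferRate l p t).deriv, ← NNReal.coe_le_coe, coe_nnnorm, Real.norm_eq_abs]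
  refine le_trans ?_ (Real.le_coe_toNNReal _)
  calc |(l - 1) * (2 * (sin t * cos t)) - 2 * (p * cos (2 * t))|
      ≤ |l - 1| * |2 * (sin t * cos t)| + 2 * (|p| * |cos (2 * t)|) := by
        refine (abs_sub _ _).trans_eq ?_
        rw [abs_mul (l - 1), abs_mul 2 (p * _), abs_mul p, abs_two]
    _ ≤ |l - 1| * 1 + 2 * (M * 1) := by
        have hM := (abs_nonneg p).trans hp
        gcongr
        exacts [abs_two_mul_sin_mul_cos_le t, abs_cos_le_one _]
    _ = |l - 1| + 2 * M := by ring

lemma isPicardLindelof_truncPrueferRate (l : ℝ) {p : ℝ → ℝ} (hp : Continuous p) {M : ℝ}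
    (hM : ∀ x, |p x| ≤ M) {c d : ℝ} (hcd : c ≤ d) (x₀ : Icc c d) (t₀ : ℝ) :
    IsPicardLindelof (fun x t => truncPrueferRate l (p x) t) x₀ t₀
      ((1 + |l| + M).toNNReal * (d - c).toNNReal) 0 (1 + |l| + M).toNNReal
      (|l - 1| + 2 * M).toNNReal where
  lipschitzOnWith x _ := (lipschitzWith_truncPrueferRate (hM x)).lipschitzOnWith
  continuousOn t _ := by fun_prop
  norm_le x _ t _ := by
    rw [Real.norm_eq_abs, abs_of_pos (truncPrueferRate_pos _ _ _)]
    refine le_trans ?_ (Real.le_coe_toNNReal _)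
    linarith [truncPrueferRate_le l (p x) t, hM x]
  mul_max_le := by
    rw [NNReal.coe_mul, NNReal.coe_zero, sub_zero, Real.coe_toNNReal (d - c) (sub_nonneg.2 hcd)]
    gcongr
    exact max_le (by linarith [x₀.2.1]) (by linarith [x₀.2.2])

lemma exists_prueferAngle (l : ℝ) {p : ℝ → ℝ} (hp : Continuous p) {M : ℝ} (hM : ∀ x, |p x| ≤ M)
    {α β : ℝ} (hαβ : α ≤ β) (t₀ : ℝ) :
    ∃ θ : ℝ ≃o ℝ, θ α = t₀ ∧
      ∀ x ∈ Icc α β, HasDerivAt θ (truncPrueferRate l (p x) (θ x)) x := by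
  have hcd : α - 1 < β + 1 := by linarith
  have hα : α ∈ Icc (α - 1) (β + 1) := ⟨by linarith, by linarith⟩
  obtain ⟨φ, hφα, hφ⟩ := (isPicardLindelof_truncPrueferRate l hp hM hcd.le
    ⟨α, hα⟩ t₀).exists_eq_forall_mem_Icc_hasDerivWithinAt₀
  have hcont : ContinuousOn φ (Icc (α - 1) (β + 1)) := fun x hx => (hφ x hx).continuousWithinAt
  have hmono : StrictMonoOn φ (Icc (α - 1) (β + 1)) :=
    strictMonoOn_of_hasDerivWithinAt_pos (convex_Icc _ _) hcont
      (fun x hx => (hφ x (interior_subset hx)).mono interior_subset)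
      fun x _ => truncPrueferRate_pos _ _ _
  obtain ⟨θ, hθ⟩ := exists_orderIso_eqOn_Icc hmono hcont hcd.le
  refine ⟨θ, (hθ hα).trans hφα, fun x hx => ?_⟩
  have hx' : x ∈ Icc (α - 1) (β + 1) := ⟨by linarith [hx.1], by linarith [hx.2]⟩
  have hnhds : Icc (α - 1) (β + 1) ∈ 𝓝 x :=
    Icc_mem_nhds (by linarith [hx.1]) (by linarith [hx.2])
  rw [hθ hx']
  exact ((hφ x hx').hasDerivAt hnhds).congr_of_eventuallyEq (hθ.eventuallyEq_of_mem hnhds)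

lemma mul_sq_sub_le_sub_sq {l p t : ℝ} (hl : 0 ≤ l) (ht : 0 < cos t) (u g : ℝ) :
    l * u ^ 2 - l * (2 * u * g * tan t + u ^ 2 * (1 / cos t ^ 2 * truncPrueferRate l p t)) ≤
      (g - p * u) ^ 2 := by
  have hrate : 1 + l * tan t ^ 2 - 2 * p * tan t ≤ 1 / cos t ^ 2 * truncPrueferRate l p t :=
    calc 1 + l * tan t ^ 2 - 2 * p * tan t = 1 / cos t ^ 2 * prueferRate l p t := by
          rw [tan_eq_sin_div_cos, prueferRate]; field_simp
      _ ≤ 1 / cos t ^ 2 * truncPrueferRate l p t := by gcongr; exact le_max_left _ _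
  have := mul_le_mul_of_nonneg_left hrate (mul_nonneg hl (sq_nonneg u))
  nlinarith [sq_nonneg (g - p * u + l * u * tan t)]

/-- Barta's inequality: integrate the derivative of `u² tan θ`. Only `u²` is differentiated, which
allows for functions `u` that are merely Lipschitz. -/
lemma mul_integral_sq_le_integral_sub_sq {l : ℝ} (hl : 0 ≤ l) {p θ u g : ℝ → ℝ}
    (hp : Continuous p) (hu : Continuous u) (hg : Continuous g)
    (hug : ∀ x, HasDerivAt (fun y => u y ^ 2) (2 * u x * g x) x)
    {α β : ℝ} (hαβ : α ≤ β) (hθ : Continuous θ)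
    (hderiv : ∀ x ∈ Icc α β, HasDerivAt θ (truncPrueferRate l (p x) (θ x)) x)
    (hmem : ∀ x ∈ Icc α β, θ x ∈ Ioo (-(π / 2)) (π / 2)) (hα : u α = 0) (hβ : u β = 0) :
    l * ∫ x in α..β, u x ^ 2 ≤ ∫ x in α..β, (g x - p x * u x) ^ 2 := by
  rw [← uIcc_of_le hαβ] at hderiv hmem
  have hcos : ∀ x ∈ uIcc α β, 0 < cos (θ x) := fun x hx => cos_pos_of_mem_Ioo (hmem x hx)
  set D : ℝ → ℝ := fun x => 2 * u x * g x * tan (θ x) +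
    u x ^ 2 * (1 / cos (θ x) ^ 2 * truncPrueferRate l (p x) (θ x))
  have hDcont : ContinuousOn D (uIcc α β) := by
    have htan : ContinuousOn (fun x => tan (θ x)) (uIcc α β) := fun x hx =>
      ((continuousAt_tan.2 (hcos x hx).ne').comp hθ.continuousAt).continuousWithinAt
    have hsec : ContinuousOn (fun x => 1 / cos (θ x) ^ 2) (uIcc α β) :=
      continuousOn_const.div (by fun_prop) fun x hx => pow_ne_zero 2 (hcos x hx).ne'
    fun_prop
  have hDint : ∫ x in α..β, D x = 0 := by
    have hprim : ∀ x ∈ uIcc α β, HasDerivAt (fun y => u y ^ 2 * tan (θ y)) (D x) x := fun x hx =>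
      (hug x).mul ((Real.hasDerivAt_tan (hcos x hx).ne').comp x (hderiv x hx))
    rw [intervalIntegral.integral_eq_sub_of_hasDerivAt hprim hDcont.intervalIntegrable, hα, hβ]
    ring
  have hpointwise : ∀ x ∈ Icc α β, l * u x ^ 2 - l * D x ≤ (g x - p x * u x) ^ 2 := fun x hx =>
    mul_sq_sub_le_sub_sq hl (hcos x (uIcc_of_le hαβ ▸ hx)) (u x) (g x)
  have husq : IntervalIntegrable (fun x => l * u x ^ 2) volume α β :=
    (by fun_prop : Continuous _).intervalIntegrable _ _
  have hlD : IntervalIntegrable (fun x => l * D x) volume α β :=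
    hDcont.intervalIntegrable.const_mul l
  calc l * ∫ x in α..β, u x ^ 2 = ∫ x in α..β, (l * u x ^ 2 - l * D x) := by
        rw [intervalIntegral.integral_sub husq hlD, intervalIntegral.integral_const_mul,
          intervalIntegral.integral_const_mul, hDint, mul_zero, sub_zero]
    _ ≤ ∫ x in α..β, (g x - p x * u x) ^ 2 := intervalIntegral.integral_mono_on hαβ (husq.sub hlD)
        ((by fun_prop : Continuous _).intervalIntegrable _ _) hpointwise

/-! ### Two-point comparison -/

/-- A Prüfer angle `θ` for the potential `p` that sweeps `[-π/2, π/2]` over an interval `[a, b]`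
strictly inside `(-π/2, π/2)`, on which `p` has the gap property of the class `𝒜(I_π)`. -/
structure PrueferArc (l : ℝ) (p : ℝ → ℝ) (θ : ℝ ≃o ℝ) (a b : ℝ) : Prop where
  neg_pi_div_two_lt : -(π / 2) < a
  lt_pi_div_two : b < π / 2
  map_left : θ a = -(π / 2)
  map_right : θ b = π / 2
  hasDerivAt : ∀ x ∈ Icc a b, HasDerivAt θ (truncPrueferRate l (p x) (θ x)) x
  gap : ∀ x ∈ Icc a b, ∀ y ∈ Icc a b, x < y → 2 * tan ((y - x) / 2) ≤ p y - p x

/-- Half the distance between the points where the angle `θ` equals `-t` and `t`. -/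
def angleHalfWidth (θ : ℝ ≃o ℝ) (t : ℝ) : ℝ := (θ.symm t - θ.symm (-t)) / 2

/-- The midpoint of the points where the angle `θ` equals `-t` and `t`. -/
def angleMidpoint (θ : ℝ ≃o ℝ) (t : ℝ) : ℝ := (θ.symm t + θ.symm (-t)) / 2

lemma angleHalfWidth_zero (θ : ℝ ≃o ℝ) : angleHalfWidth θ 0 = 0 := by
  simp [angleHalfWidth]

lemma angleHalfWidth_nonneg (θ : ℝ ≃o ℝ) {t : ℝ} (ht : 0 ≤ t) : 0 ≤ angleHalfWidth θ t :=
  div_nonneg (sub_nonneg.2 (θ.symm.monotone (by linarith))) zero_le_two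

lemma sq_sub_inv_max_le {g₁ g₂ B : ℝ} (hB : 0 ≤ B) (h : g₁ + g₂ ≤ 2 * (1 + B)) :
    (((max g₁ (1 / 4))⁻¹ - (max g₂ (1 / 4))⁻¹) / 2) ^ 2 ≤
      4 * (((max g₁ (1 / 4))⁻¹ + (max g₂ (1 / 4))⁻¹) / 2 - 1 + B) := by
  have hpos (g : ℝ) : 0 < (max g (1 / 4))⁻¹ := inv_pos.2 (lt_max_of_lt_right (by norm_num))
  have hle (g : ℝ) : (max g (1 / 4))⁻¹ ≤ 4 :=
    inv_le_of_inv_le₀ (by norm_num) ((le_max_right _ _).trans' (by norm_num))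
  have htrunc {g : ℝ} (hg : g ≤ 1 / 4) : (max g (1 / 4))⁻¹ = 4 := by
    rw [max_eq_right hg]; norm_num
  have hterm {g : ℝ} (hg : 1 / 4 ≤ g) :
      ((max g (1 / 4))⁻¹ - 1) ^ 2 ≤ 4 * ((max g (1 / 4))⁻¹ + g - 2) := by
    have hle := hle g
    rw [max_eq_left hg] at hle ⊢
    have : 0 < g := hg.trans_lt' (by norm_num)
    calc (g⁻¹ - 1) ^ 2 = g⁻¹ * (g⁻¹ + g - 2) := by field_simp; ring
      _ ≤ 4 * (g⁻¹ + g - 2) := by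
        refine mul_le_mul_of_nonneg_right hle ?_
        calc (0 : ℝ) ≤ (1 - g) ^ 2 / g := by positivity
          _ = g⁻¹ + g - 2 := by field_simp; ring
  rcases le_total g₁ (1 / 4) with h₁ | h₁
  · nlinarith [htrunc h₁, hpos g₂, hle g₂]
  rcases le_total g₂ (1 / 4) with h₂ | h₂
  · nlinarith [htrunc h₂, hpos g₁, hle g₁]
  nlinarith [hterm h₁, hterm h₂, sq_nonneg ((max g₁ (1 / 4))⁻¹ + (max g₂ (1 / 4))⁻¹ - 2)]

lemma sin_sub_cos_mul_tan_le {t t₁ d : ℝ} (htt₁ : t ≤ t₁) (ht₁ : t₁ < π / 2) (ht : 0 ≤ t)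
    (hd : 0 ≤ d) (hd₁ : d < π / 2) :
    sin t - cos t * tan d ≤ max (t - d) 0 / cos t₁ := by
  have hcosd : 0 < cos d := cos_pos_of_mem_Ioo ⟨by linarith, hd₁⟩
  have hcost₁ : 0 < cos t₁ := cos_pos_of_mem_Ioo ⟨by linarith, ht₁⟩
  have hsin : sin t - cos t * tan d = sin (t - d) / cos d := by
    rw [tan_eq_sin_div_cos, sin_sub]; field_simp
  rw [hsin]
  rcases le_total t d with h | h
  · rw [max_eq_right (by linarith), zero_div]
    exact div_nonpos_of_nonpos_of_nonneg
      (sin_nonpos_of_nonpos_of_neg_pi_le (by linarith) (by linarith)) hcosd.le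
  · rw [max_eq_left (by linarith)]
    have hcos : cos t₁ ≤ cos d := cos_le_cos_of_nonneg_of_le_pi hd (by linarith) (by linarith)
    exact div_le_div₀ (by linarith) (sin_le (by linarith)) hcost₁ hcos

lemma prueferRate_add_prueferRate_neg_le {l p₁ p₂ t t₁ d : ℝ} (hl : 3 ≤ l) (ht : 0 ≤ t)
    (htt₁ : t ≤ t₁) (ht₁ : t₁ < π / 2) (hd : 0 ≤ d) (hd₁ : d < π / 2)
    (hgap : 2 * tan d ≤ p₂ - p₁) :
    prueferRate l p₂ t + prueferRate l p₁ (-t) ≤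
      2 * (1 + (2 / cos t₁ * max (t - d) 0 + (l - 3))) := by
  have hcos : 0 < cos t := cos_pos_of_mem_Ioo ⟨by linarith, by linarith⟩
  have hcos₁ : 0 < cos t₁ := cos_pos_of_mem_Ioo ⟨by linarith, ht₁⟩
  have hsin : 0 ≤ sin t := sin_nonneg_of_nonneg_of_le_pi ht (by linarith)
  have hsq := sin_sq_add_cos_sq t
  have hgap' : 2 * tan d * (sin t * cos t) ≤ (p₂ - p₁) * (sin t * cos t) :=
    mul_le_mul_of_nonneg_right hgap (by positivity)
  have htan : sin t * (sin t - cos t * tan d) ≤ max (t - d) 0 / cos t₁ :=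
    (mul_le_mul_of_nonneg_left (sin_sub_cos_mul_tan_le htt₁ ht₁ ht hd hd₁) hsin).trans
      (mul_le_of_le_one_left (by positivity) (sin_le_one t))
  have hl' : (l - 3) * sin t ^ 2 ≤ l - 3 :=
    mul_le_of_le_one_right (by linarith) (sin_sq_le_one t)
  calc prueferRate l p₂ t + prueferRate l p₁ (-t)
      = 2 + 2 * ((l - 3) * sin t ^ 2) + 4 * sin t ^ 2 - 2 * ((p₂ - p₁) * (sin t * cos t)) := by
        rw [prueferRate, prueferRate, cos_neg, sin_neg]
        linear_combination 2 * hsq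
    _ ≤ 2 + 2 * (l - 3) + 4 * (sin t * (sin t - cos t * tan d)) := by linarith
    _ ≤ 2 + 2 * (l - 3) + 4 * (max (t - d) 0 / cos t₁) := by linarith
    _ = 2 * (1 + (2 / cos t₁ * max (t - d) 0 + (l - 3))) := by ring

/-- The bound `(l - 3) exp(2 t₁ / cos t₁)` that Grönwall's inequality gives for the deviation of an
arc from the diagonal on `[-t₁, t₁]`. -/
def arcError (l t₁ : ℝ) : ℝ := (l - 3) * exp (2 / cos t₁ * t₁)

lemma arcError_nonneg {l : ℝ} (hl : 3 ≤ l) (t₁ : ℝ) : 0 ≤ arcError l t₁ :=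
  mul_nonneg (sub_nonneg.2 hl) (exp_pos _).le

lemma mul_gronwallBound_zero_add (K ε x : ℝ) :
    K * gronwallBound 0 K ε x + ε = ε * exp (K * x) := by
  rcases eq_or_ne K 0 with rfl | hK
  · simp
  · rw [gronwallBound_of_K_ne_0 hK]; field_simp; ring

lemma mem_Icc_neg_pi_div_two {t t₁ : ℝ} (ht : t ∈ Icc 0 t₁) (ht₁ : t₁ < π / 2) :
    t ∈ Icc (-(π / 2)) (π / 2) :=
  ⟨by linarith [ht.1, pi_pos], ht.2.trans ht₁.le⟩

namespace PrueferArc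

variable {l : ℝ} {p : ℝ → ℝ} {θ : ℝ ≃o ℝ} {a b t t₁ : ℝ}

/-- The derivative at `t` of the inverse of the angle. -/
def invDeriv (l : ℝ) (p : ℝ → ℝ) (θ : ℝ ≃o ℝ) (t : ℝ) : ℝ :=
  (truncPrueferRate l (p (θ.symm t)) t)⁻¹

lemma symm_mem (h : PrueferArc l p θ a b) (ht : t ∈ Icc (-(π / 2)) (π / 2)) :
    θ.symm t ∈ Icc a b :=
  ⟨θ.le_symm_apply.2 (h.map_left.trans_le ht.1), θ.symm_apply_le.2 (ht.2.trans_eq h.map_right.symm)⟩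

lemma hasDerivAt_symm (h : PrueferArc l p θ a b) (ht : t ∈ Icc (-(π / 2)) (π / 2)) :
    HasDerivAt θ.symm (invDeriv l p θ t) t := by
  have hder := h.hasDerivAt _ (h.symm_mem ht)
  rw [θ.apply_symm_apply] at hder
  exact hder.of_local_left_inverse θ.symm.continuous.continuousAt (truncPrueferRate_pos _ _ _).ne'
    (Eventually.of_forall θ.apply_symm_apply)

lemma hasDerivAt_symm_neg (h : PrueferArc l p θ a b) (ht : t ∈ Icc (-(π / 2)) (π / 2)) :
    HasDerivAt (fun t => θ.symm (-t)) (-invDeriv l p θ (-t)) t :=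
  ((h.hasDerivAt_symm (t := -t) ⟨neg_le_neg ht.2, neg_le.1 ht.1⟩).comp t
    (hasDerivAt_neg t)).congr_deriv (mul_neg_one _)

lemma hasDerivAt_angleHalfWidth (h : PrueferArc l p θ a b) (ht : t ∈ Icc (-(π / 2)) (π / 2)) :
    HasDerivAt (angleHalfWidth θ) ((invDeriv l p θ t + invDeriv l p θ (-t)) / 2) t :=
  (((h.hasDerivAt_symm ht).sub (h.hasDerivAt_symm_neg ht)).div_const 2).congr_deriv (by ring)

lemma hasDerivAt_angleMidpoint (h : PrueferArc l p θ a b) (ht : t ∈ Icc (-(π / 2)) (π / 2)) :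
    HasDerivAt (angleMidpoint θ) ((invDeriv l p θ t - invDeriv l p θ (-t)) / 2) t :=
  (((h.hasDerivAt_symm ht).add (h.hasDerivAt_symm_neg ht)).div_const 2).congr_deriv (by ring)

lemma abs_angleMidpoint_add_angleHalfWidth_lt (h : PrueferArc l p θ a b)
    (ht : t ∈ Icc (-(π / 2)) (π / 2)) : |angleMidpoint θ t| + angleHalfWidth θ t < π / 2 := by
  have hpos := h.symm_mem ht
  have hneg := h.symm_mem (t := -t) ⟨neg_le_neg ht.2, neg_le.1 ht.1⟩
  have hleft := h.neg_pi_div_two_lt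
  have hright := h.lt_pi_div_two
  rw [angleMidpoint, angleHalfWidth, ← lt_sub_iff_add_lt, abs_lt]
  constructor <;> linarith [hpos.2, hneg.1]

lemma angleHalfWidth_lt (h : PrueferArc l p θ a b) (ht : t ∈ Icc (-(π / 2)) (π / 2)) :
    angleHalfWidth θ t < π / 2 :=
  (le_add_of_nonneg_left (abs_nonneg _)).trans_lt (h.abs_angleMidpoint_add_angleHalfWidth_lt ht)

/-- The gap condition at the two points where the angle is `±t` bounds the sum of the two rates,
so the derivatives of the midpoint and of the half-width control each other. -/
lemma sq_sub_invDeriv_le (h : PrueferArc l p θ a b) (hl : 3 ≤ l) (ht₁ : t₁ < π / 2)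
    (ht : t ∈ Icc 0 t₁) :
    ((invDeriv l p θ t - invDeriv l p θ (-t)) / 2) ^ 2 ≤
      4 * ((invDeriv l p θ t + invDeriv l p θ (-t)) / 2 - 1 +
        (2 / cos t₁ * max (t - angleHalfWidth θ t) 0 + (l - 3))) := by
  have hcos : 0 < cos t₁ := cos_pos_of_mem_Ioo ⟨by linarith [ht.1, ht.2, pi_pos], ht₁⟩
  have htpi := mem_Icc_neg_pi_div_two ht ht₁
  refine sq_sub_inv_max_le (by have := sub_nonneg.2 hl; positivity)
    (prueferRate_add_prueferRate_neg_le hl ht.1 ht.2 ht₁ (angleHalfWidth_nonneg θ ht.1)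
      (h.angleHalfWidth_lt htpi) ?_)
  rcases (neg_le_self ht.1).eq_or_lt with heq | hlt
  · simp [angleHalfWidth, heq]
  · exact h.gap _ (h.symm_mem ⟨neg_le_neg htpi.2, neg_le.1 htpi.1⟩) _ (h.symm_mem htpi)
      (θ.symm.strictMono hlt)

lemma sub_angleHalfWidth_le_gronwallBound (h : PrueferArc l p θ a b) (hl : 3 ≤ l)
    (ht₁ : t₁ < π / 2) (ht : t ∈ Icc 0 t₁) :
    t - angleHalfWidth θ t ≤ gronwallBound 0 (2 / cos t₁) (l - 3) t := by
  have hcos : 0 < cos t₁ := cos_pos_of_mem_Ioo ⟨by linarith [ht.1, ht.2, pi_pos], ht₁⟩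
  have hgronwall := le_gronwallBound_of_deriv_le_max_zero (K := 2 / cos t₁) (ε := l - 3)
    (by positivity) (sub_nonneg.2 hl)
    (fun s hs => (hasDerivAt_id s).sub
      (h.hasDerivAt_angleHalfWidth (mem_Icc_neg_pi_div_two hs ht₁)))
    (by simp [angleHalfWidth_zero])
    (fun s hs => by
      have hsq := (sq_nonneg _).trans (h.sq_sub_invDeriv_le hl ht₁ hs)
      simp only [Pi.sub_apply, id_eq]
      linarith) t ht
  simpa using hgronwall

lemma mul_max_sub_angleHalfWidth_add_le (h : PrueferArc l p θ a b) (hl : 3 ≤ l)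
    (ht₁ : t₁ < π / 2) (ht : t ∈ Icc 0 t₁) :
    2 / cos t₁ * max (t - angleHalfWidth θ t) 0 + (l - 3) ≤ arcError l t₁ := by
  have hcos : 0 < cos t₁ := cos_pos_of_mem_Ioo ⟨by linarith [ht.1, ht.2, pi_pos], ht₁⟩
  have hmax : max (t - angleHalfWidth θ t) 0 ≤ gronwallBound 0 (2 / cos t₁) (l - 3) t :=
    max_le (h.sub_angleHalfWidth_le_gronwallBound hl ht₁ ht)
      (gronwallBound_zero_nonneg (by positivity) (sub_nonneg.2 hl) ht.1)
  calc 2 / cos t₁ * max (t - angleHalfWidth θ t) 0 + (l - 3)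
      ≤ 2 / cos t₁ * gronwallBound 0 (2 / cos t₁) (l - 3) t + (l - 3) := by gcongr
    _ = (l - 3) * exp (2 / cos t₁ * t) := mul_gronwallBound_zero_add _ _ _
    _ ≤ arcError l t₁ := by
      have := sub_nonneg.2 hl
      rw [arcError]
      gcongr
      exact ht.2

lemma sub_angleHalfWidth_le (h : PrueferArc l p θ a b) (hl : 3 ≤ l) (ht₁ : t₁ < π / 2)
    (ht : t ∈ Icc 0 t₁) : t - angleHalfWidth θ t ≤ arcError l t₁ := by
  have hcos : 0 < cos t₁ := cos_pos_of_mem_Ioo ⟨by linarith [ht.1, ht.2, pi_pos], ht₁⟩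
  have hone : 1 ≤ 2 / cos t₁ := (one_le_div hcos).2 ((cos_le_one t₁).trans one_le_two)
  calc t - angleHalfWidth θ t ≤ max (t - angleHalfWidth θ t) 0 := le_max_left _ _
    _ ≤ 2 / cos t₁ * max (t - angleHalfWidth θ t) 0 := le_mul_of_one_le_left (le_max_right _ _) hone
    _ ≤ 2 / cos t₁ * max (t - angleHalfWidth θ t) 0 + (l - 3) := by linarith
    _ ≤ arcError l t₁ := h.mul_max_sub_angleHalfWidth_add_le hl ht₁ ht

lemma not_three : ¬ PrueferArc 3 p θ a b := by
  intro h
  have hend : (π / 2) ∈ Icc (-(π / 2)) (π / 2) := ⟨by linarith [pi_pos], le_rfl⟩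
  have hlt := h.angleHalfWidth_lt hend
  obtain ⟨t, hwidth, ht⟩ := exists_between hlt
  have ht0 : 0 ≤ t := (angleHalfWidth_nonneg θ pi_div_two_pos.le).trans hwidth.le
  have hle := h.sub_angleHalfWidth_le le_rfl ht ⟨ht0, le_rfl⟩
  have hmono : angleHalfWidth θ t ≤ angleHalfWidth θ (π / 2) := by
    rw [angleHalfWidth, angleHalfWidth]
    linarith [θ.symm.monotone ht.le, θ.symm.monotone (neg_le_neg ht.le)]
  simp only [arcError, sub_self, zero_mul] at hle
  linarith

lemma sq_angleMidpoint_sub_le (h : PrueferArc l p θ a b) (hl : 3 ≤ l) (ht₁ : t₁ < π / 2)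
    (ht : t ∈ Icc 0 t₁) :
    (angleMidpoint θ t₁ - angleMidpoint θ t) ^ 2 ≤
      4 * (t₁ - t) * ((angleHalfWidth θ t₁ - t₁) - (angleHalfWidth θ t - t) +
        arcError l t₁ * (t₁ - t)) := by
  have hmem : ∀ s ∈ Icc t t₁, s ∈ Icc 0 t₁ := fun s hs => ⟨ht.1.trans hs.1, hs.2⟩
  have hder : ∀ s ∈ Icc t t₁, HasDerivAt
      (fun s => 4 * (angleHalfWidth θ s - s + arcError l t₁ * s))
      (4 * ((invDeriv l p θ s + invDeriv l p θ (-s)) / 2 - 1 + arcError l t₁)) s := fun s hs => by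
    have hwidth := h.hasDerivAt_angleHalfWidth (mem_Icc_neg_pi_div_two (hmem s hs) ht₁)
    simpa using ((hwidth.sub (hasDerivAt_id s)).add
      ((hasDerivAt_id s).const_mul (arcError l t₁))).const_mul 4
  have hsq := sq_sub_le_mul_sub_of_sq_deriv_le ht.2
    (fun s hs => h.hasDerivAt_angleMidpoint (mem_Icc_neg_pi_div_two (hmem s hs) ht₁)) hder
    fun s hs => (h.sq_sub_invDeriv_le hl ht₁ (hmem s hs)).trans <| by
      gcongr
      exact h.mul_max_sub_angleHalfWidth_add_le hl ht₁ (hmem s hs)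
  exact hsq.trans_eq (by ring)

lemma angleHalfWidth_sub_le (h : PrueferArc l p θ a b) (hl : 3 ≤ l) (ht₁ : t₁ < π / 2)
    (ht : t ∈ Icc 0 t₁) :
    angleHalfWidth θ t - t ≤ angleHalfWidth θ t₁ - t₁ + arcError l t₁ * (t₁ - t) := by
  rcases ht.2.eq_or_lt with rfl | hlt
  · simp
  have hnonneg := (sq_nonneg _).trans (h.sq_angleMidpoint_sub_le hl ht₁ ht)
  linarith [nonneg_of_mul_nonneg_right hnonneg (by linarith : 0 < 4 * (t₁ - t))]

lemma abs_angleMidpoint_add_abs_angleHalfWidth_sub_le {κ ε : ℝ} (h : PrueferArc l p θ a b)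
    (hl : 3 ≤ l) (ht₁ : t₁ < π / 2) (hκt₁ : π / 2 - t₁ ≤ κ) (herr : arcError l t₁ ≤ κ)
    (hκε : 10 * κ ≤ ε) (hκε2 : 128 * κ ≤ ε ^ 2)
    (ht : t ∈ Icc 0 t₁) : |angleMidpoint θ t| + |angleHalfWidth θ t - t| ≤ ε := by
  have ht₁mem : t₁ ∈ Icc 0 t₁ := ⟨ht.1.trans ht.2, le_rfl⟩
  have := arcError_nonneg hl t₁
  have ht₁le : t₁ ≤ 2 := by linarith [pi_le_four]
  have hend := h.abs_angleMidpoint_add_angleHalfWidth_lt (mem_Icc_neg_pi_div_two ht₁mem ht₁)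
  have habs := abs_nonneg (angleMidpoint θ t₁)
  have hwidth_end := h.sub_angleHalfWidth_le hl ht₁ ht₁mem
  have hwidth := h.sub_angleHalfWidth_le hl ht₁ ht
  have hwidth' := h.angleHalfWidth_sub_le hl ht₁ ht
  have hdrift : arcError l t₁ * (t₁ - t) ≤ 2 * κ :=
    (mul_le_mul herr (by linarith [ht.1]) (by linarith [ht.2]) (by linarith)).trans_eq
      (mul_comm _ _)
  have hsq : (angleMidpoint θ t₁ - angleMidpoint θ t) ^ 2 ≤ (ε / 2) ^ 2 :=
    calc _ ≤ 4 * (t₁ - t) * ((angleHalfWidth θ t₁ - t₁) - (angleHalfWidth θ t - t) +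
        arcError l t₁ * (t₁ - t)) := h.sq_angleMidpoint_sub_le hl ht₁ ht
      _ ≤ (4 * 2) * (4 * κ) := by
        refine mul_le_mul ?_ ?_ ?_ ?_ <;> linarith [ht.1, ht.2]
      _ ≤ (ε / 2) ^ 2 := by linarith
  have hmid := abs_le_of_sq_le_sq hsq (by linarith)
  have htri := abs_sub_abs_le_abs_sub (angleMidpoint θ t) (angleMidpoint θ t₁)
  rw [abs_sub_comm] at htri
  have hhalf : |angleHalfWidth θ t - t| ≤ 3 * κ := abs_le.2 ⟨by linarith, by linarith⟩
  linarith

end PrueferArc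

lemma abs_orderIso_symm_sub_le (θ : ℝ ≃o ℝ) (t : ℝ) :
    |θ.symm t - t| ≤ |angleMidpoint θ (|t|)| + |angleHalfWidth θ (|t|) - (|t|)| := by
  rcases abs_cases t with ⟨ht, -⟩ | ⟨ht, -⟩ <;> rw [ht]
  · calc |θ.symm t - t| = |angleMidpoint θ t + (angleHalfWidth θ t - t)| := by
          rw [angleMidpoint, angleHalfWidth]; ring_nf
      _ ≤ _ := abs_add_le _ _
  · calc |θ.symm t - t| = |angleMidpoint θ (-t) - (angleHalfWidth θ (-t) - -t)| := by
          rw [angleMidpoint, angleHalfWidth, neg_neg]; ring_nf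
      _ ≤ _ := abs_sub _ _

lemma exists_forall_prueferArc_abs_symm_sub_le {t₀ ε : ℝ} (ht₀ : t₀ < π / 2) (hε : 0 < ε) :
    ∃ μ > 0, ∀ l ∈ Icc 3 (3 + μ), ∀ (p : ℝ → ℝ) (θ : ℝ ≃o ℝ) (a b : ℝ), PrueferArc l p θ a b →
      ∀ t ∈ Icc (-t₀) t₀, |θ.symm t - t| ≤ ε := by
  obtain ⟨κ, hκ0, hκ⟩ : ∃ κ > 0, 10 * κ ≤ ε ∧ 128 * κ ≤ ε ^ 2 := by
    refine ⟨min (ε / 10) (ε ^ 2 / 128), by positivity, ?_, ?_⟩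
    · linarith [min_le_left (ε / 10) (ε ^ 2 / 128)]
    · linarith [min_le_right (ε / 10) (ε ^ 2 / 128)]
  obtain ⟨t₁, hlow, ht₁⟩ : ∃ t₁, max t₀ (π / 2 - κ) < t₁ ∧ t₁ < π / 2 :=
    exists_between (max_lt ht₀ (by linarith))
  refine ⟨κ / exp (2 / cos t₁ * t₁), by positivity, fun l hl p θ a b h t ht => ?_⟩
  have herr : arcError l t₁ ≤ κ :=
    (le_div_iff₀ (exp_pos _)).1 (by linarith [hl.2])
  refine (abs_orderIso_symm_sub_le θ t).trans ?_
  exact h.abs_angleMidpoint_add_abs_angleHalfWidth_sub_le hl.1 ht₁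
    (by linarith [(le_max_right t₀ (π / 2 - κ)).trans_lt hlow]) herr hκ.1 hκ.2
    ⟨abs_nonneg t, (abs_le.2 ht).trans ((le_max_left _ _).trans hlow.le)⟩

/-! ### Soft thresholding -/

/-- Soft thresholding: `s` is moved towards `0` by `η`, and to `0` if `|s| ≤ η`. Its square is
differentiable, and `softThreshold η ∘ v` is supported in the compact set `{η ≤ |v|}`. -/
def softThreshold (η s : ℝ) : ℝ := max (s - η) 0 - max (-s - η) 0

@[fun_prop]
lemma continuous_softThreshold {X : Type*} [TopologicalSpace X] {η s : X → ℝ} (hη : Continuous η)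
    (hs : Continuous s) : Continuous fun x => softThreshold (η x) (s x) := by
  unfold softThreshold
  fun_prop

lemma softThreshold_zero_left (s : ℝ) : softThreshold 0 s = s := by
  simp [softThreshold]

lemma softThreshold_eq_zero {η s : ℝ} (h : |s| ≤ η) : softThreshold η s = 0 := by
  obtain ⟨hneg, hpos⟩ := abs_le.1 h
  rw [softThreshold, max_eq_right (by linarith), max_eq_right (by linarith), sub_zero]

lemma softThreshold_of_le {η s : ℝ} (hη : 0 ≤ η) (hs : η ≤ s) : softThreshold η s = s - η := by
  rw [softThreshold, max_eq_left (by linarith), max_eq_right (by linarith), sub_zero]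

lemma softThreshold_of_le_neg {η s : ℝ} (hη : 0 ≤ η) (hs : s ≤ -η) :
    softThreshold η s = s + η := by
  rw [softThreshold, max_eq_right (by linarith), max_eq_left (by linarith)]
  ring

lemma sq_softThreshold_le {η : ℝ} (hη : 0 ≤ η) (s : ℝ) : softThreshold η s ^ 2 ≤ s ^ 2 := by
  rcases le_total s (-η) with hs | hs
  · rw [softThreshold_of_le_neg hη hs]; nlinarith
  rcases le_total η s with hs' | hs'
  · rw [softThreshold_of_le hη hs']; nlinarith
  · simpa [softThreshold_eq_zero (abs_le.2 ⟨hs, hs'⟩)] using sq_nonneg s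

lemma abs_sq_softThreshold_sub_le {η : ℝ} (hη : 0 ≤ η) (s y : ℝ) :
    |softThreshold η y ^ 2 - softThreshold η s ^ 2 - 2 * softThreshold η s * (y - s)| ≤
      (y - s) ^ 2 := by
  have hcases (r : ℝ) : (r ≤ -η ∧ softThreshold η r = r + η) ∨
      ((-η ≤ r ∧ r ≤ η) ∧ softThreshold η r = 0) ∨ (η ≤ r ∧ softThreshold η r = r - η) := by
    rcases le_total r (-η) with hr | hr
    · exact .inl ⟨hr, softThreshold_of_le_neg hη hr⟩
    rcases le_total η r with hr' | hr'
    · exact .inr (.inr ⟨hr', softThreshold_of_le hη hr'⟩)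
    · exact .inr (.inl ⟨⟨hr, hr'⟩, softThreshold_eq_zero (abs_le.2 ⟨hr, hr'⟩)⟩)
  rw [abs_le]
  rcases hcases s with ⟨hs, hs'⟩ | ⟨hs, hs'⟩ | ⟨hs, hs'⟩ <;>
    rcases hcases y with ⟨hy, hy'⟩ | ⟨hy, hy'⟩ | ⟨hy, hy'⟩ <;>
    rw [hs', hy'] <;> constructor <;> nlinarith

lemma hasDerivAt_of_abs_sub_le_sq {f : ℝ → ℝ} {f' x : ℝ}
    (h : ∀ y, |f y - f x - f' * (y - x)| ≤ (y - x) ^ 2) : HasDerivAt f f' x := by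
  refine .of_isLittleO <| .of_norm_right <| Asymptotics.IsBigO.trans_isLittleO
    (g := fun y => (y - x) ^ 2) ?_ ?_
  · refine .of_bound 1 (.of_forall fun y => ?_)
    simpa [mul_comm] using h y
  · simpa using Asymptotics.isLittleO_pow_sub_sub x one_lt_two

lemma hasDerivAt_sq_softThreshold {η : ℝ} (hη : 0 ≤ η) (s : ℝ) :
    HasDerivAt (fun y => softThreshold η y ^ 2) (2 * softThreshold η s) s :=
  hasDerivAt_of_abs_sub_le_sq (abs_sq_softThreshold_sub_le hη s)

/-! ### Steklov means -/

/-- The mean of `f` over `[x, x + ε]`, rescaled to `[0, 1]`: a continuous approximation of a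
monotone `f` that inherits lower bounds on increments. -/
def steklovMean (f : ℝ → ℝ) (ε x : ℝ) : ℝ := ∫ s in (0 : ℝ)..1, f (x + ε * s)

section steklovMean

variable {f : ℝ → ℝ} {ε : ℝ}

lemma intervalIntegrable_comp_add_mul (hf : Monotone f) (hε : 0 ≤ ε) (x a b : ℝ) :
    IntervalIntegrable (fun s => f (x + ε * s)) volume a b :=
  Monotone.intervalIntegrable fun _ _ hst =>
    hf (add_le_add_right (mul_le_mul_of_nonneg_left hst hε) x)

lemma steklovMean_mem_Icc (hf : Monotone f) (hε : 0 ≤ ε) (x : ℝ) :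
    steklovMean f ε x ∈ Icc (f x) (f (x + ε)) := by
  have hint := intervalIntegrable_comp_add_mul hf hε x 0 1
  have hle : ∀ s ∈ Icc (0 : ℝ) 1, ε * s ≤ ε := fun s hs => mul_le_of_le_one_right hε hs.2
  constructor
  · simpa [steklovMean] using intervalIntegral.integral_mono_on zero_le_one
      (intervalIntegrable_const (c := f x)) hint
      fun s hs => hf (le_add_of_nonneg_right (mul_nonneg hε hs.1))
  · simpa [steklovMean] using intervalIntegral.integral_mono_on zero_le_one hint
      (intervalIntegrable_const (c := f (x + ε))) fun s hs => hf (by linarith [hle s hs])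

lemma continuous_steklovMean (hf : Monotone f) (hε : ε ≠ 0) : Continuous (steklovMean f ε) := by
  have hint (a b : ℝ) : IntervalIntegrable f volume a b := hf.intervalIntegrable
  have hprim : steklovMean f ε =
      fun x => ε⁻¹ • ((∫ s in (0 : ℝ)..(x + ε), f s) - ∫ s in (0 : ℝ)..x, f s) := by
    funext x
    rw [steklovMean, intervalIntegral.integral_comp_add_mul f hε,
      intervalIntegral.integral_interval_sub_left (hint _ _) (hint _ _)]
    simp
  have hcont := intervalIntegral.continuous_primitive hint 0
  rw [hprim]
  exact ((hcont.comp (continuous_add_const ε)).sub hcont).const_smul ε⁻¹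

lemma le_steklovMean_sub (hf : Monotone f) (hε : 0 ≤ ε) {x y c : ℝ}
    (h : ∀ s ∈ Icc 0 ε, c ≤ f (y + s) - f (x + s)) :
    c ≤ steklovMean f ε y - steklovMean f ε x := by
  have hx := intervalIntegrable_comp_add_mul hf hε x 0 1
  have hy := intervalIntegrable_comp_add_mul hf hε y 0 1
  rw [steklovMean, steklovMean, ← intervalIntegral.integral_sub hy hx]
  simpa using intervalIntegral.integral_mono_on zero_le_one (intervalIntegrable_const (c := c))
    (hy.sub hx) fun s hs => h _ ⟨mul_nonneg hε hs.1, mul_le_of_le_one_right hε hs.2⟩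

lemma abs_steklovMean_le (hf : Monotone f) (hε : 0 ≤ ε) {M : ℝ} (hM : ∀ x, |f x| ≤ M) (x : ℝ) :
    |steklovMean f ε x| ≤ M :=
  have hmem := steklovMean_mem_Icc hf hε x
  abs_le.2 ⟨(abs_le.1 (hM x)).1.trans hmem.1, hmem.2.trans (abs_le.1 (hM (x + ε))).2⟩

lemma tendsto_steklovMean (hf : Monotone f) {x : ℝ} (hx : ContinuousAt f x) :
    Tendsto (fun ε => steklovMean f ε x) (𝓝[>] 0) (𝓝 (f x)) := by
  have hshift : Tendsto (fun ε => f (x + ε)) (𝓝[>] 0) (𝓝 (f x)) := by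
    refine hx.tendsto.comp ?_
    simpa using (continuous_const_add x).tendsto' 0 _ (add_zero x) |>.mono_left nhdsWithin_le_nhds
  exact tendsto_of_tendsto_of_tendsto_of_le_of_le' tendsto_const_nhds hshift
    (eventually_mem_nhdsWithin.mono fun ε hε => (steklovMean_mem_Icc hf (mem_Ioi.1 hε).le x).1)
    (eventually_mem_nhdsWithin.mono fun ε hε => (steklovMean_mem_Icc hf (mem_Ioi.1 hε).le x).2)

end steklovMean

lemma tendsto_integral_sub_steklovMean_mul_sq {f u g : ℝ → ℝ} (hf : Monotone f) {M : ℝ}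
    (hM : ∀ x, |f x| ≤ M) (hu : Continuous u) (hg : Continuous g) (α β : ℝ) :
    Tendsto (fun ε => ∫ x in α..β, (g x - steklovMean f ε x * u x) ^ 2) (𝓝[>] 0)
      (𝓝 (∫ x in α..β, (g x - f x * u x) ^ 2)) := by
  refine tendsto_intervalIntegral_comp_of_bounded (Φ := fun z => (g z.1 - z.2 * u z.1) ^ 2)
    (by fun_prop) (M := M) ?_ ?_ ?_
  · exact eventually_mem_nhdsWithin.mono fun ε hε =>
      (continuous_steklovMean hf (mem_Ioi.1 hε).ne').aestronglyMeasurable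
  · exact eventually_mem_nhdsWithin.mono fun ε hε s _ =>
      abs_steklovMean_le hf (mem_Ioi.1 hε).le hM s
  · filter_upwards [hf.countable_not_continuousAt.ae_notMem volume] with s hs _
    exact tendsto_steklovMean hf (not_not.1 hs)

/-! ### The energy identity -/

lemma setIntegral_intervalIntegral_eq {ν : Measure ℝ} {w : ℝ → ℝ} {α β : ℝ} (hαβ : α ≤ β)
    (hν : ν (Ioc α β) ≠ ∞) (hw : IntervalIntegrable w volume α β) :
    ∫ t in Ioc α β, (∫ s in α..t, w s) ∂ν = ∫ s in α..β, ν.real (Ioc s β) * w s := by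
  have : IsFiniteMeasure (ν.restrict (Ioc α β)) := isFiniteMeasure_restrict.2 hν
  let T : Set (ℝ × ℝ) := {z | z.1 < z.2}
  have hint : Integrable (Function.uncurry fun s t => T.indicator (fun z => w z.1) (s, t))
      ((volume.restrict (Ioc α β)).prod (ν.restrict (Ioc α β))) :=
    (hw.1.comp_fst _).indicator (measurableSet_lt measurable_fst measurable_snd)
  rw [intervalIntegral.integral_of_le hαβ]
  refine Eq.trans ?_ ((integral_integral_swap hint).symm.trans ?_)
  · refine setIntegral_congr_fun measurableSet_Ioc fun t ht => ?_
    have hslice : (fun s => T.indicator (fun z => w z.1) (s, t)) = (Iio t).indicator w := rfl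
    simp only [hslice]
    rw [integral_indicator measurableSet_Iio, Measure.restrict_restrict measurableSet_Iio,
      intervalIntegral.integral_of_le ht.1.le, integral_Ioc_eq_integral_Ioo]
    congr 2
    ext s
    exact ⟨fun hs => ⟨hs.2, hs.1, hs.2.le.trans ht.2⟩, fun hs => ⟨hs.2.1, hs.1⟩⟩
  · refine setIntegral_congr_fun measurableSet_Ioc fun s hs => ?_
    have hslice : (fun t => T.indicator (fun z => w z.1) (s, t)) =
      (Ioi s).indicator fun _ => w s := rfl
    simp only [hslice]
    rw [integral_indicator_const _ measurableSet_Ioi, smul_eq_mul, measureReal_def, measureReal_def,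
      Measure.restrict_apply measurableSet_Ioi]
    congr 3
    ext t
    exact ⟨fun ht => ⟨ht.1, ht.2.2⟩, fun ht => ⟨ht.1, hs.1.trans ht.1, ht.2⟩⟩

lemma setIntegral_Ioc_eq_neg_intervalIntegral {ν : Measure ℝ} {f w w' : ℝ → ℝ} {α β : ℝ}
    (hαβ : α ≤ β) (hf : Monotone f)
    (hν : ∀ x ∈ Icc α β, ν (Ioc x β) = ENNReal.ofReal (f β - f x))
    (hw : ∀ x, HasDerivAt w (w' x) x) (hw' : Continuous w') (hα : w α = 0) (hβ : w β = 0) :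
    ∫ t in Ioc α β, w t ∂ν = -∫ s in α..β, f s * w' s := by
  have hftc (t : ℝ) : ∫ s in α..t, w' s = w t := by
    rw [intervalIntegral.integral_eq_sub_of_hasDerivAt (fun x _ => hw x)
      (hw'.intervalIntegrable _ _), hα, sub_zero]
  have hint : IntervalIntegrable (fun s => f s * w' s) volume α β :=
    hf.intervalIntegrable.mul_continuousOn hw'.continuousOn
  calc ∫ t in Ioc α β, w t ∂ν = ∫ t in Ioc α β, (∫ s in α..t, w' s) ∂ν := by simp only [hftc]
    _ = ∫ s in α..β, ν.real (Ioc s β) * w' s :=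
      setIntegral_intervalIntegral_eq hαβ (by simp [hν α ⟨le_rfl, hαβ⟩])
        (hw'.intervalIntegrable _ _)
    _ = ∫ s in α..β, (f β * w' s - f s * w' s) := by
      refine intervalIntegral.integral_congr fun s hs => ?_
      rw [uIcc_of_le hαβ] at hs
      simp only [measureReal_def, hν s hs, ENNReal.toReal_ofReal (sub_nonneg.2 (hf hs.2)), sub_mul]
    _ = -∫ s in α..β, f s * w' s := by
      rw [intervalIntegral.integral_sub ((hw'.intervalIntegrable _ _).const_mul _) hint,
        intervalIntegral.integral_const_mul, hftc, hβ, mul_zero, zero_sub]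

lemma integral_sq_add_setIntegral_sq_add_eq {ν : Measure ℝ} {f u g : ℝ → ℝ} {α β : ℝ}
    (hαβ : α ≤ β) (hf : Monotone f)
    (hν : ∀ x ∈ Icc α β, ν (Ioc x β) = ENNReal.ofReal (f β - f x))
    (hu : Continuous u) (hg : Continuous g)
    (hug : ∀ x, HasDerivAt (fun y => u y ^ 2) (2 * u x * g x) x) (hα : u α = 0) (hβ : u β = 0) :
    (∫ x in α..β, g x ^ 2) + (∫ x in Ioc α β, u x ^ 2 ∂ν) + ∫ x in α..β, f x ^ 2 * u x ^ 2 =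
      ∫ x in α..β, (g x - f x * u x) ^ 2 := by
  have hparts := setIntegral_Ioc_eq_neg_intervalIntegral hαβ hf hν hug (by fun_prop)
    (by simp [hα]) (by simp [hβ])
  have hsq : IntervalIntegrable (fun x => f x ^ 2) volume α β := by
    rw [intervalIntegrable_iff_integrableOn_Icc_of_le hαβ]
    exact ((hf.monotoneOn _).memLp_isCompact isCompact_Icc).integrable_sq
  have hfug : IntervalIntegrable (fun x => f x * (2 * u x * g x)) volume α β :=
    hf.intervalIntegrable.mul_continuousOn (by fun_prop)
  have hgg : IntervalIntegrable (fun x => g x ^ 2) volume α β := (hg.pow 2).intervalIntegrable _ _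
  have hfu : IntervalIntegrable (fun x => f x ^ 2 * u x ^ 2) volume α β :=
    hsq.mul_continuousOn (by fun_prop)
  rw [hparts, ← sub_eq_add_neg, ← intervalIntegral.integral_sub hgg hfug,
    ← intervalIntegral.integral_add (hgg.sub hfug) hfu]
  exact intervalIntegral.integral_congr fun x _ => by ring

/-! ### Prüfer arcs from test functions -/

lemma pi_div_two_le_of_integral_lt {l : ℝ} (hl : 0 ≤ l) {p u g : ℝ → ℝ} {θ : ℝ ≃o ℝ}
    {α α' β : ℝ} (hp : Continuous p) (hu : Continuous u) (hg : Continuous g)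
    (hug : ∀ x, HasDerivAt (fun y => u y ^ 2) (2 * u x * g x) x) (hα' : α < α') (hαβ : α' ≤ β)
    (hθα : θ α = -(π / 2))
    (hderiv : ∀ x ∈ Icc α β, HasDerivAt θ (truncPrueferRate l (p x) (θ x)) x)
    (huα : u α' = 0) (huβ : u β = 0)
    (h : ∫ x in α'..β, (g x - p x * u x) ^ 2 < l * ∫ x in α'..β, u x ^ 2) : π / 2 ≤ θ β := by
  contrapose! h
  refine mul_integral_sq_le_integral_sub_sq hl hp hu hg hug hαβ θ.continuous
    (fun x hx => hderiv x ⟨hα'.le.trans hx.1, hx.2⟩) (fun x hx => ⟨?_, ?_⟩) huα huβ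
  · exact hθα ▸ θ.strictMono (hα'.trans_le hx.1)
  · exact (θ.monotone hx.2).trans_lt h

/-- A Prüfer arc over `[a, b] ⊆ dom ψ` whose potential approximates `ψ`: it lies between `ψ` and
the shift of `ψ` by `ε`. -/
structure PsiA.ApproxArc (P : PsiA) (l ε : ℝ) (p : ℝ → ℝ) (θ : ℝ ≃o ℝ) (a b : ℝ) : Prop
    extends PrueferArc l p θ a b where
  left_mem : a ∈ P.dom
  right_add_mem : b + ε ∈ P.dom
  continuous : Continuous p
  psi_le : ∀ s ∈ Icc a b, P.psi s ≤ p s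
  le_psi_add : ∀ s ∈ Icc a b, p s ≤ P.psi (s + ε)

namespace PsiA

variable {P : PsiA}

lemma approxArc_steklovMean {f : ℝ → ℝ} (hf : Monotone f) {α β β₀ ε l : ℝ} {θ : ℝ ≃o ℝ}
    (hfψ : EqOn f P.psi (Icc α β₀)) (hα : α ∈ P.dom) (hβ₀ : β₀ ∈ P.dom) (hε : 0 < ε)
    (hεβ : β + ε ≤ β₀) (hθα : θ α = -(π / 2)) (hθβ : π / 2 ≤ θ β)
    (hderiv : ∀ x ∈ Icc α β, HasDerivAt θ (truncPrueferRate l (steklovMean f ε x) (θ x)) x) :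
    P.ApproxArc l ε (steklovMean f ε) θ α (θ.symm (π / 2)) := by
  have hdom : Icc α β₀ ⊆ P.dom := P.domConn.out hα hβ₀
  set b := θ.symm (π / 2)
  have hbβ : b ≤ β := (θ.symm_apply_le).2 hθβ
  have hαb : α ≤ b := (θ.le_symm_apply).2 (by rw [hθα]; linarith [pi_pos])
  have hIcc {x s : ℝ} (hx : x ∈ Icc α b) (hs : s ∈ Icc 0 ε) : x + s ∈ Icc α β₀ :=
    ⟨by linarith [hx.1, hs.1], by linarith [hx.2, hs.2]⟩
  have hleft : (0 : ℝ) ∈ Icc 0 ε := left_mem_Icc.2 hε.le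
  have hright : ε ∈ Icc 0 ε := right_mem_Icc.2 hε.le
  refine
    { neg_pi_div_two_lt := (P.domSub hα).1
      lt_pi_div_two := by linarith [(P.domSub hβ₀).2]
      map_left := hθα
      map_right := θ.apply_symm_apply _
      hasDerivAt := fun x hx => hderiv x ⟨hx.1, hx.2.trans hbβ⟩
      gap := fun x hx y hy hxy => le_steklovMean_sub hf hε.le fun s hs => ?_
      left_mem := hα
      right_add_mem := hdom (hIcc (right_mem_Icc.2 hαb) hright)
      continuous := continuous_steklovMean hf hε.ne'
      psi_le := fun s hs => ?_
      le_psi_add := fun s hs => ?_ }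
  · rw [hfψ (hIcc hx hs), hfψ (hIcc hy hs)]
    simpa using P.gap (hdom (hIcc hx hs)) (hdom (hIcc hy hs)) (by linarith)
  · rw [← hfψ (by simpa using hIcc hs hleft)]
    exact (steklovMean_mem_Icc hf hε.le s).1
  · rw [← hfψ (hIcc hs hright)]
    exact (steklovMean_mem_Icc hf hε.le s).2

lemma integral_sub_mul_sq_eq {f u g : ℝ → ℝ} (hf : Monotone f) {α β : ℝ} (hαβ : α ≤ β)
    (hdom : Icc α β ⊆ P.dom) (hfψ : EqOn f P.psi (Icc α β)) (hu : Continuous u)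
    (hg : Continuous g) (hug : ∀ x, HasDerivAt (fun y => u y ^ 2) (2 * u x * g x) x)
    (huα : u α = 0) (huβ : u β = 0) :
    ∫ x in α..β, (g x - f x * u x) ^ 2 = (∫ x in α..β, g x ^ 2) +
      (∫ x in Ioc α β, u x ^ 2 ∂P.nu) + ∫ x in α..β, P.psi x ^ 2 * u x ^ 2 := by
  have hβ : β ∈ Icc α β := right_mem_Icc.2 hαβ
  have hν : ∀ x ∈ Icc α β, P.nu (Ioc x β) = ENNReal.ofReal (f β - f x) := fun x hx => by
    rw [hfψ hx, hfψ hβ, P.nu_eq (hdom hx) (hdom hβ) hx.2]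
  rw [← integral_sq_add_setIntegral_sq_add_eq hαβ hf hν hu hg hug huα huβ]
  congr 1
  refine intervalIntegral.integral_congr fun x hx => ?_
  simp only [hfψ (uIcc_of_le hαβ ▸ hx)]

lemma exists_approxArc_of_integral_lt {l : ℝ} (hl : 0 ≤ l) {u g : ℝ → ℝ} (hu : Continuous u)
    (hg : Continuous g) (hug : ∀ x, HasDerivAt (fun y => u y ^ 2) (2 * u x * g x) x)
    {α α' β β₀ : ℝ} (hα' : α < α') (hαβ : α' ≤ β) (hβ : β < β₀) (hα : α ∈ P.dom)
    (hβ₀ : β₀ ∈ P.dom) (huα : u α' = 0) (huβ : u β = 0)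
    (h : (∫ x in α'..β, g x ^ 2) + (∫ x in Ioc α' β, u x ^ 2 ∂P.nu) +
      (∫ x in α'..β, P.psi x ^ 2 * u x ^ 2) < l * ∫ x in α'..β, u x ^ 2)
    {ε₀ : ℝ} (hε₀ : 0 < ε₀) :
    ∃ ε ∈ Ioo 0 ε₀, ∃ p θ a b, P.ApproxArc l ε p θ a b := by
  have hsub : Icc α' β ⊆ Icc α β₀ := Icc_subset_Icc hα'.le hβ.le
  have hdom : Icc α β₀ ⊆ P.dom := P.domConn.out hα hβ₀
  obtain ⟨f, hf, hfψ, hfmem⟩ :=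
    exists_monotone_eqOn_Icc (P.mono.mono hdom) (hα'.le.trans (hαβ.trans hβ.le))
  have hfM (x : ℝ) : |f x| ≤ max |P.psi α| |P.psi β₀| := abs_le_max_abs_abs (hfmem x).1 (hfmem x).2
  rw [← integral_sub_mul_sq_eq hf hαβ (hsub.trans hdom) (hfψ.mono hsub) hu hg hug huα huβ] at h
  obtain ⟨ε, hlt, hε⟩ := (((tendsto_integral_sub_steklovMean_mul_sq hf hfM hu hg α' β).eventually
    (gt_mem_nhds h)).and (Ioo_mem_nhdsGT (lt_min hε₀ (sub_pos.2 hβ)))).exists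
  have hp := continuous_steklovMean hf hε.1.ne'
  obtain ⟨θ, hθα, hderiv⟩ := exists_prueferAngle l hp (abs_steklovMean_le hf hε.1.le hfM)
    (hα'.le.trans hαβ) (-(π / 2))
  have hθβ := pi_div_two_le_of_integral_lt hl hp hu hg hug hα' hαβ hθα hderiv huα huβ hlt
  exact ⟨ε, ⟨hε.1, hε.2.trans_le (min_le_left _ _)⟩, _, θ, _, _, approxArc_steklovMean hf hfψ hα hβ₀
    hε.1 (by linarith [hε.2.trans_le (min_le_right _ _)]) hθα hθβ hderiv⟩

end PsiA

/-! ### Truncating a test function -/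

lemma exists_pos_lt_mul_integral_sq_softThreshold {v : ℝ → ℝ} (hv : Continuous v) {a b c l : ℝ}
    (h : c < l * ∫ x in a..b, v x ^ 2) :
    ∃ η > 0, c < l * ∫ x in a..b, softThreshold η (v x) ^ 2 := by
  have hcont : Continuous fun η => l * ∫ x in a..b, softThreshold η (v x) ^ 2 :=
    continuous_const.mul
      (intervalIntegral.continuous_parametric_intervalIntegral_of_continuous' (by fun_prop) a b)
  have hzero : c < l * ∫ x in a..b, softThreshold 0 (v x) ^ 2 := by
    simpa only [softThreshold_zero_left] using h
  obtain ⟨η, hη, hlt⟩ := ((eventually_mem_nhdsWithin (a := (0 : ℝ)) (s := Ioi 0)).and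
    ((hcont.tendsto 0).mono_left nhdsWithin_le_nhds |>.eventually (lt_mem_nhds hzero))).exists
  exact ⟨η, hη, hlt⟩

lemma exists_softThreshold_eq_zero {v : ℝ → ℝ} (hv : Continuous v) {a b η : ℝ}
    (hv0 : ∀ x ∉ Ioo a b, v x = 0) (hη : 0 < η) (hne : ∃ x, softThreshold η (v x) ≠ 0) :
    ∃ α α' β β₀, α < α' ∧ α' ≤ β ∧ β < β₀ ∧ v α ≠ 0 ∧ v β₀ ≠ 0 ∧
      ∀ x ∉ Ioo α' β, softThreshold η (v x) = 0 := by
  let K := {x | η ≤ |v x|}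
  have hKv : K ⊆ {x | v x ≠ 0} := fun x hx => abs_pos.1 (hη.trans_le hx)
  have hKab : K ⊆ Ioo a b := fun x hx => of_not_not fun hn => hKv hx (hv0 x hn)
  have hK : IsCompact K := Metric.isCompact_of_isClosed_isBounded
    (isClosed_le continuous_const hv.abs) ((Metric.isBounded_Ioo a b).subset hKab)
  have hsoft {x : ℝ} (hx : x ∉ K) : softThreshold η (v x) = 0 :=
    softThreshold_eq_zero (not_le.1 hx).le
  have hKne : K.Nonempty := hne.imp fun x hx => of_not_not fun hn => hx (hsoft hn)
  obtain ⟨α, β₀, hα, hβ₀, -, hKo⟩ :=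
    exists_subset_Ioo_of_isCompact (isOpen_ne_fun hv continuous_const) hK hKne hKv
  obtain ⟨α', β, hα', hβ, hlt, hKi⟩ := exists_subset_Ioo_of_isCompact isOpen_Ioo hK hKne hKo
  exact ⟨α, α', β, β₀, hα'.1, hlt.le, hβ.2, hα, hβ₀, fun x hx => hsoft fun hn => hx (hKi hn)⟩

lemma exists_lt_mul_integral_sq_softThreshold {v : ℝ → ℝ} (hv : Continuous v) {a b c l : ℝ}
    (hv0 : ∀ x ∉ Ioo a b, v x = 0) (hc : 0 ≤ c) (h : c < l * ∫ x in a..b, v x ^ 2) :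
    ∃ η > 0, ∃ α α' β β₀, α < α' ∧ α' ≤ β ∧ β < β₀ ∧ v α ≠ 0 ∧ v β₀ ≠ 0 ∧
      softThreshold η (v α') = 0 ∧ softThreshold η (v β) = 0 ∧
      c < l * ∫ x in α'..β, softThreshold η (v x) ^ 2 := by
  obtain ⟨η, hη, hlt⟩ := exists_pos_lt_mul_integral_sq_softThreshold hv h
  have hne : ∃ x, softThreshold η (v x) ≠ 0 := by
    by_contra! hzero
    exact hlt.not_ge (by simpa [hzero] using hc)
  obtain ⟨α, α', β, β₀, hα', hαβ, hβ, hvα, hvβ₀, hzero⟩ :=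
    exists_softThreshold_eq_zero hv hv0 hη hne
  refine ⟨η, hη, α, α', β, β₀, hα', hαβ, hβ, hvα, hvβ₀, hzero _ fun hn => hn.1.false,
    hzero _ fun hn => hn.2.false, ?_⟩
  have hsupp {y z : ℝ} (hsub : ∀ x ∉ Ioo y z, softThreshold η (v x) = 0) :
      ∫ x in y..z, softThreshold η (v x) ^ 2 = ∫ x, softThreshold η (v x) ^ 2 :=
    intervalIntegral.integral_eq_integral_of_support_subset fun x hx => of_not_not fun hn =>
      hx (by simp [hsub x fun hx' => hn (Ioo_subset_Ioc_self hx')])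
  rwa [hsupp hzero, ← hsupp fun x hx => softThreshold_eq_zero (by simp [hv0 x hx, hη.le])]

lemma setIntegral_le_setIntegral_of_subset_of_le {X : Type*} [MeasurableSpace X] {μ : Measure X}
    {f g : X → ℝ} {s t : Set X} (hst : s ⊆ t) (hg : IntegrableOn g t μ) (hf : ∀ x, 0 ≤ f x)
    (hfg : ∀ x, f x ≤ g x) : ∫ x in s, f x ∂μ ≤ ∫ x in t, g x ∂μ :=
  (integral_mono_of_nonneg (.of_forall hf) (hg.mono_set hst) (.of_forall hfg)).trans
    (setIntegral_mono_set hg (.of_forall fun x => (hf x).trans (hfg x)) hst.eventuallyLE)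

lemma lintegral_ofReal_eq_ofReal_integral_of_ne_top {X : Type*} [MeasurableSpace X]
    {μ : Measure X} {f : X → ℝ} (hfm : AEStronglyMeasurable f μ) (hf : ∀ x, 0 ≤ f x)
    (h : ∫⁻ x, ENNReal.ofReal (f x) ∂μ ≠ ∞) :
    Integrable f μ ∧ ∫⁻ x, ENNReal.ofReal (f x) ∂μ = ENNReal.ofReal (∫ x, f x ∂μ) := by
  have hint := (lintegral_ofReal_ne_top_iff_integrable hfm (.of_forall hf)).1 h
  exact ⟨hint, (ofReal_integral_eq_lintegral_ofReal hint (.of_forall hf)).symm⟩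

namespace PsiA

variable {P : PsiA}

lemma measurableSet_dom (P : PsiA) : MeasurableSet P.dom := P.domConn.measurableSet

lemma aemeasurable_psi (P : PsiA) : AEMeasurable P.psi (volume.restrict P.dom) :=
  aemeasurable_restrict_of_monotoneOn P.measurableSet_dom P.mono

lemma lintegral_qM (P : PsiA) {g : ℝ → ℝ≥0∞} (hg : Measurable g) :
    ∫⁻ x in Ioo (-(π / 2)) (π / 2), g x ∂P.qM =
      (∫⁻ x in P.dom, g x ∂P.nu) + (∫⁻ x in P.dom, ENNReal.ofReal (P.psi x ^ 2) * g x) +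
      ∞ * ∫⁻ x in Ioo (-(π / 2)) (π / 2) \ P.dom, g x := by
  rw [qM, Measure.restrict_add, Measure.restrict_add, lintegral_add_measure,
    lintegral_add_measure, Measure.restrict_restrict measurableSet_Ioo, Measure.restrict_smul,
    lintegral_smul_measure, Measure.restrict_restrict measurableSet_Ioo,
    inter_eq_self_of_subset_right P.domSub, inter_eq_self_of_subset_right sdiff_subset,
    restrict_withDensity measurableSet_Ioo, Measure.restrict_restrict measurableSet_Ioo,
    inter_eq_self_of_subset_right P.domSub, lintegral_withDensity_eq_lintegral_mul₀
      (P.aemeasurable_psi.pow_const 2).ennreal_ofReal hg.aemeasurable, smul_eq_mul]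
  rfl

lemma ne_zero_subset_dom {v : ℝ → ℝ} (hv : Continuous v)
    (hv0 : ∀ x ∉ Ioo (-(π / 2)) (π / 2), v x = 0)
    (h : ∫⁻ x in Ioo (-(π / 2)) (π / 2) \ P.dom, ENNReal.ofReal (v x ^ 2) = 0) :
    {x | v x ≠ 0} ⊆ P.dom := by
  refine subset_of_volume_diff_eq_zero (isOpen_ne_fun hv continuous_const) P.domConn ?_
  rw [setLIntegral_eq_zero_iff (measurableSet_Ioo.diff P.measurableSet_dom) (by fun_prop)] at h
  refine measure_mono_null ?_ h
  rintro x ⟨hx, hxd⟩ hc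
  have hxI : x ∈ Ioo (-(π / 2)) (π / 2) := of_not_not fun hn => hx (hv0 x hn)
  exact (ENNReal.ofReal_pos.2 (sq_pos_of_ne_zero hx)).ne' (hc ⟨hxI, hxd⟩)

lemma energy_lt_of_dirRQ_lt {l : ℝ} (hl : 0 ≤ l) {v : ℝ → ℝ}
    (hv : TestFun (-(π / 2)) (π / 2) v)
    (hne : ∫⁻ x in Ioo (-(π / 2)) (π / 2), ENNReal.ofReal (v x ^ 2) ≠ 0)
    (h : dirRQ (-(π / 2)) (π / 2) P.qM v < ENNReal.ofReal l) :
    {x | v x ≠ 0} ⊆ P.dom ∧ IntegrableOn (fun x => v x ^ 2) P.dom P.nu ∧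
      IntegrableOn (fun x => P.psi x ^ 2 * v x ^ 2) P.dom ∧
      (∫ x in (-(π / 2))..(π / 2), deriv v x ^ 2) + (∫ x in P.dom, v x ^ 2 ∂P.nu) +
        (∫ x in P.dom, P.psi x ^ 2 * v x ^ 2) < l * ∫ x in (-(π / 2))..(π / 2), v x ^ 2 := by
  have hcont : Continuous v := hv.1.continuous
  have hsq {w : ℝ → ℝ} (hw : Continuous w) :
      ∫⁻ x in Ioo (-(π / 2)) (π / 2), ENNReal.ofReal (w x ^ 2) =
        ENNReal.ofReal (∫ x in (-(π / 2))..(π / 2), w x ^ 2) :=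
    setLIntegral_Ioo_ofReal_eq_intervalIntegral (by linarith [pi_pos]) (hw.pow 2)
      fun x => sq_nonneg (w x)
  rw [dirRQ, ENNReal.div_lt_iff (.inl hne) (.inl (by simp [hsq hcont])), hsq hcont,
    hsq (hv.1.continuous_deriv le_rfl), ← ENNReal.ofReal_mul hl, lintegral_qM P (by fun_prop)] at h
  simp only [← ENNReal.ofReal_mul (sq_nonneg (P.psi _))] at h
  have htop := (h.trans ENNReal.ofReal_lt_top).ne
  simp only [ne_eq, ENNReal.add_eq_top, ENNReal.mul_eq_top, not_or] at htop
  obtain ⟨-, ⟨hnu, hpsi⟩, -, hout⟩ := htop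
  have hzero : ∫⁻ x in Ioo (-(π / 2)) (π / 2) \ P.dom, ENNReal.ofReal (v x ^ 2) = 0 := by
    simpa using hout
  obtain ⟨hintnu, heqnu⟩ := lintegral_ofReal_eq_ofReal_integral_of_ne_top
    (f := fun x => v x ^ 2) (hcont.pow 2).aestronglyMeasurable (fun x => sq_nonneg (v x)) hnu
  obtain ⟨hintpsi, heqpsi⟩ := lintegral_ofReal_eq_ofReal_integral_of_ne_top
    (f := fun x => P.psi x ^ 2 * v x ^ 2)
    ((P.aemeasurable_psi.pow_const 2).mul (hcont.pow 2).aemeasurable).aestronglyMeasurable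
    (fun x => mul_nonneg (sq_nonneg (P.psi x)) (sq_nonneg (v x))) hpsi
  refine ⟨ne_zero_subset_dom hcont hv.2 hzero, hintnu, hintpsi, ?_⟩
  have hderiv0 : 0 ≤ ∫ x in (-(π / 2))..(π / 2), deriv v x ^ 2 :=
    intervalIntegral.integral_nonneg (by linarith [pi_pos]) fun x _ => sq_nonneg _
  have hnu0 : 0 ≤ ∫ x in P.dom, v x ^ 2 ∂P.nu := integral_nonneg fun x => sq_nonneg _
  have hpsi0 : 0 ≤ ∫ x in P.dom, P.psi x ^ 2 * v x ^ 2 := integral_nonneg fun x => by positivity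
  rw [hzero, mul_zero, add_zero, heqnu, heqpsi, ← ENNReal.ofReal_add hnu0 hpsi0,
    ← ENNReal.ofReal_add hderiv0 (by positivity),
    ENNReal.ofReal_lt_ofReal_iff_of_nonneg (by positivity), ← add_assoc] at h
  exact h

lemma energy_le_energy {u v g : ℝ → ℝ} (hg : Continuous g) (huv : ∀ x, u x ^ 2 ≤ v x ^ 2)
    (hnu : IntegrableOn (fun x => v x ^ 2) P.dom P.nu)
    (hpsi : IntegrableOn (fun x => P.psi x ^ 2 * v x ^ 2) P.dom) {α β : ℝ} (hαβ : α ≤ β)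
    (hdom : Icc α β ⊆ P.dom) :
    (∫ x in α..β, g x ^ 2) + (∫ x in Ioc α β, u x ^ 2 ∂P.nu) +
        (∫ x in α..β, P.psi x ^ 2 * u x ^ 2) ≤
      (∫ x in (-(π / 2))..(π / 2), g x ^ 2) + (∫ x in P.dom, v x ^ 2 ∂P.nu) +
        ∫ x in P.dom, P.psi x ^ 2 * v x ^ 2 := by
  have hIoc : Ioc α β ⊆ P.dom := Ioc_subset_Icc_self.trans hdom
  have hα := P.domSub (hdom (left_mem_Icc.2 hαβ))
  have hβ := P.domSub (hdom (right_mem_Icc.2 hαβ))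
  refine add_le_add (add_le_add ?_ ?_) ?_
  · exact intervalIntegral.integral_mono_interval hα.1.le hαβ hβ.2.le
      (.of_forall fun x => sq_nonneg (g x)) ((hg.pow 2).intervalIntegrable _ _)
  · exact setIntegral_le_setIntegral_of_subset_of_le hIoc hnu (fun x => sq_nonneg (u x)) huv
  · rw [intervalIntegral.integral_of_le hαβ]
    exact setIntegral_le_setIntegral_of_subset_of_le hIoc hpsi (fun x => by positivity)
      fun x => mul_le_mul_of_nonneg_left (huv x) (sq_nonneg _)

lemma exists_approxArc_of_dirRQ_lt {l : ℝ} (hl : 0 ≤ l) {v : ℝ → ℝ}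
    (hv : TestFun (-(π / 2)) (π / 2) v)
    (hne : ∫⁻ x in Ioo (-(π / 2)) (π / 2), ENNReal.ofReal (v x ^ 2) ≠ 0)
    (h : dirRQ (-(π / 2)) (π / 2) P.qM v < ENNReal.ofReal l) {ε₀ : ℝ} (hε₀ : 0 < ε₀) :
    ∃ ε ∈ Ioo 0 ε₀, ∃ p θ a b, P.ApproxArc l ε p θ a b := by
  obtain ⟨hdom, hintnu, hintpsi, hE⟩ := energy_lt_of_dirRQ_lt hl hv hne h
  have hcont : Continuous v := hv.1.continuous
  have hderiv : Continuous (deriv v) := hv.1.continuous_deriv le_rfl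
  have hderiv0 : 0 ≤ ∫ x in (-(π / 2))..(π / 2), deriv v x ^ 2 :=
    intervalIntegral.integral_nonneg (by linarith [pi_pos]) fun x _ => sq_nonneg _
  obtain ⟨η, hη, α, α', β, β₀, hα', hαβ, hβ, hvα, hvβ₀, huα, huβ, hEη⟩ :=
    exists_lt_mul_integral_sq_softThreshold hcont hv.2 (by positivity) hE
  have hug (x : ℝ) : HasDerivAt (fun y => softThreshold η (v y) ^ 2)
      (2 * softThreshold η (v x) * deriv v x) x :=
    (hasDerivAt_sq_softThreshold hη.le (v x)).comp x
      (hv.1.differentiable one_ne_zero x).hasDerivAt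
  have hIcc : Icc α' β ⊆ P.dom := (Icc_subset_Icc hα'.le hβ.le).trans
    (P.domConn.out (hdom hvα) (hdom hvβ₀))
  have hle := energy_le_energy hderiv (fun x => sq_softThreshold_le hη.le (v x)) hintnu hintpsi
    hαβ hIcc
  exact exists_approxArc_of_integral_lt hl (by fun_prop) hderiv hug hα' hαβ hβ (hdom hvα)
    (hdom hvβ₀) huα huβ (hle.trans_lt hEη) hε₀

end PsiA

/-! ### Rigidity -/

lemma ae_continuousAt_of_monotoneOn {f : ℝ → ℝ} {U : Set ℝ} (hU : IsOpen U)
    (hf : MonotoneOn f U) : ∀ᵐ s, s ∈ U → ContinuousAt f s := by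
  filter_upwards [hf.countable_not_continuousWithinAt.ae_notMem volume] with s hs hsU
  have hcont : ContinuousWithinAt f U s := of_not_not fun hn => hs ⟨hsU, hn⟩
  exact hcont.continuousAt (hU.mem_nhds hsU)

lemma ae_eq_of_forall_intervalIntegral_eq_sub {f F F' : ℝ → ℝ} {a b : ℝ}
    (hf : ∀ x ∈ Ioo a b, ∀ y ∈ Ioo a b, x < y → IntervalIntegrable f volume x y)
    (hF : ∀ s ∈ Ioo a b, HasDerivAt F (F' s) s)
    (h : ∀ x ∈ Ioo a b, ∀ y ∈ Ioo a b, x < y → ∫ s in x..y, f s = F y - F x) :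
    ∀ᵐ s, s ∈ Ioo a b → f s = F' s := by
  rw [ae_iff]
  refine measure_null_of_locally_null _ fun s hs => ?_
  obtain ⟨hsI, -⟩ := Classical.not_imp.1 hs
  obtain ⟨x, hax, hxs⟩ := exists_between hsI.1
  obtain ⟨y, hsy, hyb⟩ := exists_between hsI.2
  have hx : x ∈ Ioo a b := ⟨hax, hxs.trans hsI.2⟩
  have hy : y ∈ Ioo a b := ⟨hsI.1.trans hsy, hyb⟩
  refine ⟨_, inter_mem_nhdsWithin _ (Ioo_mem_nhds hxs hsy), ?_⟩
  refine measure_mono_null ?_ (ae_iff.1 (hf x hx y hy (hxs.trans hsy)).ae_hasDerivAt_integral)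
  rintro t ⟨ht, htxy⟩ hderiv
  obtain ⟨htI, hne⟩ := Classical.not_imp.1 ht
  refine hne (HasDerivAt.unique (hderiv (Icc_subset_uIcc (Ioo_subset_Icc_self htxy)) x
    left_mem_uIcc) (((hF t htI).sub_const (F x)).congr_of_eventuallyEq ?_))
  filter_upwards [Ioo_mem_nhds htxy.1 htxy.2] with z hz
  exact h x hx z ⟨hax.trans hz.1, hz.2.trans hyb⟩ hz.1

lemma eq_tan_of_truncPrueferRate_three_eq_one {p t : ℝ} (ht : t ∈ Ioo (-(π / 2)) (π / 2))
    (ht₀ : t ≠ 0) (h : truncPrueferRate 3 p t = 1) : p = tan t := by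
  have hcos : cos t ≠ 0 := (cos_pos_of_mem_Ioo ht).ne'
  have hsin : sin t ≠ 0 := fun hn => ht₀
    ((sin_eq_zero_iff_of_lt_of_lt (by linarith [ht.1, pi_pos]) (by linarith [ht.2, pi_pos])).1 hn)
  have hrate : prueferRate 3 p t = 1 := by
    rcases max_choice (prueferRate 3 p t) (1 / 4) with hmax | hmax
    · exact hmax ▸ h
    · rw [truncPrueferRate, hmax] at h
      norm_num at h
  have hmul : sin t * (p * cos t) = sin t * sin t := by
    rw [prueferRate] at hrate
    linarith [sin_sq_add_cos_sq t]
  rw [tan_eq_sin_div_cos, eq_div_iff hcos]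
  exact mul_left_cancel₀ hsin hmul

lemma PrueferArc.mem_Icc_and_abs_sub_le {l : ℝ} {p : ℝ → ℝ} {θ : ℝ ≃o ℝ} {a b x r : ℝ}
    (h : PrueferArc l p θ a b) (hr : 0 ≤ r) (hx : |x| + r ≤ π / 2)
    (hclose : ∀ t ∈ Icc (-(|x| + r)) (|x| + r), |θ.symm t - t| ≤ r) :
    x ∈ Icc a b ∧ |θ x - x| ≤ r := by
  have hxle := le_abs_self x
  have hxge := neg_abs_le x
  have hadd : x + r ∈ Icc (-(|x| + r)) (|x| + r) := ⟨by linarith, by linarith⟩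
  have hsub : x - r ∈ Icc (-(|x| + r)) (|x| + r) := ⟨by linarith, by linarith⟩
  have hIcc : Icc (-(|x| + r)) (|x| + r) ⊆ Icc (-(π / 2)) (π / 2) :=
    Icc_subset_Icc (neg_le_neg hx) hx
  have hright : x ≤ θ.symm (x + r) := by linarith [(abs_le.1 (hclose _ hadd)).1]
  have hleft : θ.symm (x - r) ≤ x := by linarith [(abs_le.1 (hclose _ hsub)).2]
  refine ⟨⟨(h.symm_mem (hIcc hsub)).1.trans hleft, hright.trans (h.symm_mem (hIcc hadd)).2⟩, ?_⟩
  rw [abs_le]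
  constructor <;> linarith [θ.le_symm_apply.1 hright, θ.symm_apply_le.1 hleft]

/-- A sequence of approximate Prüfer arcs for `ψ` whose eigenvalue parameters tend to `3` from above
and whose shifts tend to `0`; it exists when `λ₁(I_π, q) = 3`. -/
structure PsiA.ApproxArcSeq (P : PsiA) (l ε : ℕ → ℝ) (p : ℕ → ℝ → ℝ) (θ : ℕ → ℝ ≃o ℝ)
    (a b : ℕ → ℝ) : Prop where
  arc : ∀ n, P.ApproxArc (l n) (ε n) (p n) (θ n) (a n) (b n)
  tendsto_eigenvalue : Tendsto l atTop (𝓝[≥] 3)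
  tendsto_shift : Tendsto ε atTop (𝓝[>] 0)

namespace PsiA

theorem three_le_lam1 (P : PsiA) : 3 ≤ lam1 (-(π / 2)) (π / 2) P.qM := by
  refine le_iInf₂ fun v hv => ?_
  by_contra! hlt
  rw [← ENNReal.ofReal_ofNat] at hlt
  obtain ⟨ε, -, p, θ, a, b, harc⟩ :=
    exists_approxArc_of_dirRQ_lt zero_le_three hv.1 hv.2 hlt one_pos
  exact harc.toPrueferArc.not_three

variable {P : PsiA}

lemma exists_approxArc_of_lam1_eq_three (h : lam1 (-(π / 2)) (π / 2) P.qM = 3) {l ε₀ : ℝ}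
    (hl : 3 < l) (hε₀ : 0 < ε₀) : ∃ ε ∈ Ioo 0 ε₀, ∃ p θ a b, P.ApproxArc l ε p θ a b := by
  have hl₀ : 0 < l := zero_lt_three.trans hl
  have hlt : lam1 (-(π / 2)) (π / 2) P.qM < ENNReal.ofReal l := by
    rw [h, ← ENNReal.ofReal_ofNat]
    exact (ENNReal.ofReal_lt_ofReal_iff hl₀).2 hl
  simp only [lam1, iInf_lt_iff] at hlt
  obtain ⟨v, hv, hlt⟩ := hlt
  exact exists_approxArc_of_dirRQ_lt hl₀.le hv.1 hv.2 hlt hε₀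

lemma exists_approxArcSeq_of_lam1_eq_three (h : lam1 (-(π / 2)) (π / 2) P.qM = 3) :
    ∃ l ε p θ a b, P.ApproxArcSeq l ε p θ a b := by
  obtain ⟨δ, -, hδ, hlim⟩ := exists_seq_strictAnti_tendsto (0 : ℝ)
  have harc (n : ℕ) := exists_approxArc_of_lam1_eq_three h (lt_add_of_pos_right 3 (hδ n)) (hδ n)
  choose ε hε p θ a b harc using harc
  refine ⟨_, ε, p, θ, a, b, harc, tendsto_nhdsWithin_iff.2 ⟨?_, .of_forall fun n => ?_⟩,
    tendsto_nhdsWithin_iff.2 ⟨?_, .of_forall fun n => (hε n).1⟩⟩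
  · simpa using hlim.const_add 3
  · exact le_add_of_nonneg_right (hδ n).le
  · exact squeeze_zero (fun n => (hε n).1.le) (fun n => (hε n).2.le) hlim

namespace ApproxArcSeq

variable {l ε : ℕ → ℝ} {p : ℕ → ℝ → ℝ} {θ : ℕ → ℝ ≃o ℝ} {a b : ℕ → ℝ}

lemma eventually_mem_Icc_and_abs_sub_le (h : P.ApproxArcSeq l ε p θ a b) {x r : ℝ}
    (hx : x ∈ Ioo (-(π / 2)) (π / 2)) (hr : 0 < r) :
    ∀ᶠ n in atTop, x ∈ Icc (a n) (b n) ∧ |θ n x - x| ≤ r := by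
  obtain ⟨r', hr', hlt⟩ := exists_between (lt_min hr (sub_pos.2 (abs_lt.2 hx)))
  have hxr' : |x| + r' < π / 2 := by linarith [hlt.trans_le (min_le_right _ _)]
  obtain ⟨μ, hμ, hclose⟩ := exists_forall_prueferArc_abs_symm_sub_le hxr' hr'
  filter_upwards [h.tendsto_eigenvalue (Icc_mem_nhdsGE (lt_add_of_pos_right 3 hμ))] with n hn
  have harc := (h.arc n).toPrueferArc
  exact (harc.mem_Icc_and_abs_sub_le hr'.le hxr'.le (hclose _ hn _ _ _ _ harc)).imp_right
    fun hle => hle.trans (hlt.trans_le (min_le_left _ _)).le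

lemma eventually_mem_Icc (h : P.ApproxArcSeq l ε p θ a b) {x : ℝ}
    (hx : x ∈ Ioo (-(π / 2)) (π / 2)) : ∀ᶠ n in atTop, x ∈ Icc (a n) (b n) :=
  (h.eventually_mem_Icc_and_abs_sub_le hx one_pos).mono fun _ => And.left

lemma tendsto_angle (h : P.ApproxArcSeq l ε p θ a b) {x : ℝ} (hx : x ∈ Ioo (-(π / 2)) (π / 2)) :
    Tendsto (fun n => θ n x) atTop (𝓝 x) :=
  Metric.nhds_basis_closedBall.tendsto_right_iff.2 fun _ hr =>
    (h.eventually_mem_Icc_and_abs_sub_le hx hr).mono fun _ => And.right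

lemma dom_eq (h : P.ApproxArcSeq l ε p θ a b) : P.dom = Ioo (-(π / 2)) (π / 2) := by
  refine P.domSub.antisymm fun x hx => ?_
  obtain ⟨n, hxn, hε⟩ :=
    ((h.eventually_mem_Icc hx).and (h.tendsto_shift self_mem_nhdsWithin)).exists
  exact P.domConn.out (h.arc n).left_mem (h.arc n).right_add_mem
    ⟨hxn.1, hxn.2.trans (le_add_of_nonneg_right (le_of_lt hε))⟩

lemma tendsto_potential (h : P.ApproxArcSeq l ε p θ a b) {s : ℝ}
    (hs : s ∈ Ioo (-(π / 2)) (π / 2)) (hψ : ContinuousAt P.psi s) :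
    Tendsto (fun n => p n s) atTop (𝓝 (P.psi s)) := by
  have hshift : Tendsto (fun n => s + ε n) atTop (𝓝 s) := by
    simpa using (tendsto_nhds_of_tendsto_nhdsWithin h.tendsto_shift).const_add s
  exact tendsto_of_tendsto_of_tendsto_of_le_of_le' tendsto_const_nhds (hψ.tendsto.comp hshift)
    ((h.eventually_mem_Icc hs).mono fun n hn => (h.arc n).psi_le s hn)
    ((h.eventually_mem_Icc hs).mono fun n hn => (h.arc n).le_psi_add s hn)

lemma exists_eventually_forall_norm_le (h : P.ApproxArcSeq l ε p θ a b) {x y : ℝ}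
    (hx : x ∈ Ioo (-(π / 2)) (π / 2)) (hy : y ∈ Ioo (-(π / 2)) (π / 2)) :
    ∃ M, ∀ᶠ n in atTop, ∀ s ∈ Icc x y, ‖(l n, p n s, θ n s)‖ ≤ M := by
  obtain ⟨y', hyy', hy'⟩ := exists_between hy.2
  have hy' : y' ∈ Ioo (-(π / 2)) (π / 2) := ⟨hy.1.trans hyy', hy'⟩
  refine ⟨max 4 (max (max |P.psi x| |P.psi y'|) (π / 2)), ?_⟩
  filter_upwards [h.eventually_mem_Icc hx, h.eventually_mem_Icc hy,
    h.tendsto_eigenvalue (Icc_mem_nhdsGE (by norm_num : (3 : ℝ) < 4)),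
    h.tendsto_shift (Ioo_mem_nhdsGT (sub_pos.2 hyy'))] with n hxn hyn hl hε s hs
  have hsn : s ∈ Icc (a n) (b n) := ⟨hxn.1.trans hs.1, hs.2.trans hyn.2⟩
  have hdom {z : ℝ} (hz : z ∈ Icc x y') : z ∈ P.dom :=
    h.dom_eq ▸ ⟨hx.1.trans_le hz.1, hz.2.trans_lt hy'.2⟩
  have hxs : P.psi x ≤ P.psi s :=
    P.mono (hdom ⟨le_rfl, by linarith [hs.1, hs.2]⟩) (hdom ⟨hs.1, by linarith [hs.2]⟩) hs.1
  have hsy : P.psi (s + ε n) ≤ P.psi y' :=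
    P.mono (hdom ⟨by linarith [hs.1, hε.1], by linarith [hs.2, hε.2]⟩)
      (hdom ⟨by linarith [hs.1, hs.2], le_rfl⟩) (by linarith [hs.2, hε.2])
  refine max_le_max ?_ (max_le_max ?_ ?_)
  · exact abs_le.2 ⟨by linarith [hl.1], hl.2⟩
  · exact abs_le_max_abs_abs (hxs.trans ((h.arc n).psi_le s hsn))
      (((h.arc n).le_psi_add s hsn).trans hsy)
  · exact abs_le.2 ⟨(h.arc n).map_left ▸ (θ n).monotone hsn.1,
      (h.arc n).map_right ▸ (θ n).monotone hsn.2⟩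

lemma tendsto_integral_truncPrueferRate (h : P.ApproxArcSeq l ε p θ a b) {x y : ℝ}
    (hx : x ∈ Ioo (-(π / 2)) (π / 2)) (hy : y ∈ Ioo (-(π / 2)) (π / 2)) (hxy : x ≤ y) :
    Tendsto (fun n => ∫ s in x..y, truncPrueferRate (l n) (p n s) (θ n s)) atTop
      (𝓝 (∫ s in x..y, truncPrueferRate 3 (P.psi s) s)) := by
  have hcont (n : ℕ) : Continuous fun s => (l n, p n s, θ n s) :=
    continuous_const.prodMk ((h.arc n).continuous.prodMk (θ n).continuous)
  obtain ⟨M, hM⟩ := h.exists_eventually_forall_norm_le hx hy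
  refine tendsto_intervalIntegral_comp_of_bounded
    (Φ := fun q : ℝ × ℝ × ℝ × ℝ => truncPrueferRate q.2.1 q.2.2.1 q.2.2.2)
    (g := fun n s => (l n, p n s, θ n s)) (g₀ := fun s => (3, P.psi s, s)) (M := M) (by fun_prop)
    (.of_forall fun n => (hcont n).aestronglyMeasurable) ?_ ?_
  · filter_upwards [hM] with n hn s hs
    exact hn s (Ioc_subset_Icc_self (uIoc_of_le hxy ▸ hs))
  · filter_upwards [ae_continuousAt_of_monotoneOn isOpen_Ioo (h.dom_eq ▸ P.mono)] with s hψ hs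
    rw [uIoc_of_le hxy] at hs
    have hsI : s ∈ Ioo (-(π / 2)) (π / 2) := ⟨hx.1.trans hs.1, hs.2.trans_lt hy.2⟩
    exact (tendsto_nhds_of_tendsto_nhdsWithin h.tendsto_eigenvalue).prodMk_nhds
      ((h.tendsto_potential hsI (hψ hsI)).prodMk_nhds (h.tendsto_angle hsI))

lemma integral_truncPrueferRate_three (h : P.ApproxArcSeq l ε p θ a b) {x y : ℝ}
    (hx : x ∈ Ioo (-(π / 2)) (π / 2)) (hy : y ∈ Ioo (-(π / 2)) (π / 2)) (hxy : x ≤ y) :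
    ∫ s in x..y, truncPrueferRate 3 (P.psi s) s = y - x := by
  refine tendsto_nhds_unique (h.tendsto_integral_truncPrueferRate hx hy hxy)
    (((h.tendsto_angle hy).sub (h.tendsto_angle hx)).congr' ?_)
  filter_upwards [h.eventually_mem_Icc hx, h.eventually_mem_Icc hy] with n hxn hyn
  have hp := (h.arc n).continuous
  have hθ := (θ n).continuous
  refine (intervalIntegral.integral_eq_sub_of_hasDerivAt (fun s hs => ?_)
    (Continuous.intervalIntegrable (by fun_prop) _ _)).symm
  rw [uIcc_of_le hxy] at hs
  exact (h.arc n).hasDerivAt s ⟨hxn.1.trans hs.1, hs.2.trans hyn.2⟩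

lemma eqOn_psi_tan (h : P.ApproxArcSeq l ε p θ a b) :
    EqOn P.psi tan (Ioo (-(π / 2)) (π / 2)) := by
  refine eqOn_of_monotoneOn_of_ae_eq (h.dom_eq ▸ P.mono) continuousOn_tan_Ioo ?_
  have hrate := ae_eq_of_forall_intervalIntegral_eq_sub
    (f := fun s => truncPrueferRate 3 (P.psi s) s) (F' := fun _ => 1)
    (fun x hx y hy hxy => intervalIntegral.intervalIntegrable_of_integral_ne_zero <| by
      rw [h.integral_truncPrueferRate_three hx hy hxy.le]
      exact (sub_pos.2 hxy).ne')
    (fun s _ => hasDerivAt_id' s)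
    fun x hx y hy hxy => h.integral_truncPrueferRate_three hx hy hxy.le
  filter_upwards [hrate, Measure.ae_ne volume 0] with s hs hs₀ hsI
  exact eq_tan_of_truncPrueferRate_three_eq_one hsI hs₀ (hs hsI)

end ApproxArcSeq

end PsiA

/-! ### The equality case -/

lemma hasDerivAt_tan_one_add_tan_sq {x : ℝ} (hx : cos x ≠ 0) :
    HasDerivAt tan (1 + tan x ^ 2) x :=
  (Real.hasDerivAt_tan hx).congr_deriv (by rw [one_div, ← inv_one_add_tan_sq hx, inv_inv])

lemma setLIntegral_Ioc_ofReal_one_add_tan_sq {x y : ℝ} (hx : -(π / 2) < x) (hy : y < π / 2)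
    (hxy : x ≤ y) :
    ∫⁻ s in Ioc x y, ENNReal.ofReal (1 + tan s ^ 2) = ENNReal.ofReal (tan y - tan x) := by
  have hcos : ∀ s ∈ uIcc x y, cos s ≠ 0 := fun s hs => by
    rw [uIcc_of_le hxy] at hs
    exact (cos_pos_of_mem_Ioo ⟨hx.trans_le hs.1, hs.2.trans_lt hy⟩).ne'
  have hint : IntervalIntegrable (fun s => 1 + tan s ^ 2) volume x y :=
    ContinuousOn.intervalIntegrable fun s hs =>
      (continuousAt_const.add ((continuousAt_tan.2 (hcos s hs)).pow 2)).continuousWithinAt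
  rw [← intervalIntegral.integral_eq_sub_of_hasDerivAt
      (fun s hs => hasDerivAt_tan_one_add_tan_sq (hcos s hs)) hint,
    intervalIntegral.integral_of_le hxy,
    ofReal_integral_eq_lintegral_ofReal hint.1 (.of_forall fun s => by positivity)]

lemma measurable_tan : Measurable tan := by
  rw [funext tan_eq_sin_div_cos]
  exact measurable_sin.div measurable_cos

namespace PsiA

variable {P : PsiA}

lemma nu_restrict_eq_of_eqOn_tan (hdom : P.dom = Ioo (-(π / 2)) (π / 2))
    (hψ : EqOn P.psi tan (Ioo (-(π / 2)) (π / 2))) :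
    P.nu.restrict (Ioo (-(π / 2)) (π / 2)) =
      (volume.restrict (Ioo (-(π / 2)) (π / 2))).withDensity
        fun s => ENNReal.ofReal (1 + tan s ^ 2) := by
  have hν : ∀ x ∈ Ioo (-(π / 2)) (π / 2), ∀ y ∈ Ioo (-(π / 2)) (π / 2), x ≤ y →
      P.nu (Ioc x y) = ENNReal.ofReal (tan y - tan x) := fun x hx y hy hxy => by
    rw [P.nu_eq (hdom ▸ hx) (hdom ▸ hy) hxy, hψ hx, hψ hy]
  rw [← restrict_withDensity measurableSet_Ioo]
  refine restrict_Ioo_eq_of_forall_Ioc (by linarith [pi_pos]) (fun x hx y hy => ?_)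
    fun x hx y hy hxy => ?_
  · rcases le_total x y with hxy | hyx
    · exact (hν x hx y hy hxy).trans_ne ENNReal.ofReal_ne_top
    · simp [Ioc_eq_empty hyx.not_gt]
  · rw [hν x hx y hy hxy, withDensity_apply _ measurableSet_Ioc,
      setLIntegral_Ioc_ofReal_one_add_tan_sq hx.1 hy.2 hxy]

lemma qM_eq_tanWeight_of_eqOn_tan (hdom : P.dom = Ioo (-(π / 2)) (π / 2))
    (hψ : EqOn P.psi tan (Ioo (-(π / 2)) (π / 2))) : P.qM = tanWeight := by
  have hsq : (volume.restrict (Ioo (-(π / 2)) (π / 2))).withDensity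
      (fun x => ENNReal.ofReal (P.psi x ^ 2)) =
      (volume.restrict (Ioo (-(π / 2)) (π / 2))).withDensity
        fun x => ENNReal.ofReal (tan x ^ 2) := by
    refine withDensity_congr_ae ?_
    filter_upwards [ae_restrict_mem measurableSet_Ioo] with x hx
    rw [hψ hx]
  rw [qM, hdom, hsq, nu_restrict_eq_of_eqOn_tan hdom hψ, sdiff_self, Measure.restrict_empty,
    smul_zero, add_zero,
    ← withDensity_add_left ((measurable_tan.pow_const 2).const_add 1).ennreal_ofReal, tanWeight]
  congr 1
  funext x
  rw [Pi.add_apply, ← ENNReal.ofReal_add (by positivity) (by positivity)]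
  ring_nf

theorem qM_eq_tanWeight_of_lam1_eq_three (h : lam1 (-(π / 2)) (π / 2) P.qM = 3) :
    P.qM = tanWeight := by
  obtain ⟨l, ε, p, θ, a, b, harc⟩ := exists_approxArcSeq_of_lam1_eq_three h
  exact qM_eq_tanWeight_of_eqOn_tan harc.dom_eq harc.eqOn_psi_tan

end PsiA

lemma hasDerivAt_indicator {F : Type*} [NormedAddCommGroup F] [NormedSpace ℝ F] {s : Set ℝ}
    {f f' : ℝ → F} {x : ℝ} (hf : HasDerivAt f (f' x) x)
    (hx : x ∈ frontier s → f x = 0 ∧ f' x = 0) :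
    HasDerivAt (s.indicator f) (s.indicator f' x) x := by
  by_cases hint : x ∈ interior s
  · rw [indicator_of_mem (interior_subset hint)]
    refine hf.congr_of_eventuallyEq ?_
    filter_upwards [mem_interior_iff_mem_nhds.1 hint] with y hy
    exact indicator_of_mem hy f
  by_cases hcl : x ∈ closure s
  · obtain ⟨hf₀, hf'₀⟩ := hx ⟨hcl, hint⟩
    rw [hasDerivAt_iff_isLittleO, hf₀, hf'₀] at hf
    rw [hasDerivAt_iff_isLittleO, indicator_apply_eq_zero.2 fun _ => hf₀,
      indicator_apply_eq_zero.2 fun _ => hf'₀]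
    refine Asymptotics.IsBigO.trans_isLittleO (Asymptotics.isBigO_of_le _ fun y => ?_) hf
    simpa using norm_indicator_le_norm_self f y
  · rw [indicator_of_notMem fun hxs => hcl (subset_closure hxs)]
    refine (hasDerivAt_const x (0 : F)).congr_of_eventuallyEq ?_
    filter_upwards [isClosed_closure.isOpen_compl.mem_nhds hcl] with y hy
    exact indicator_of_notMem (fun hys => hy (subset_closure hys)) f

lemma cos_eq_zero_of_mem_frontier_Ioo {x : ℝ} (hx : x ∈ frontier (Ioo (-(π / 2)) (π / 2))) :
    cos x = 0 := by
  rw [frontier_Ioo (by linarith [pi_pos])] at hx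
  rcases hx with rfl | rfl <;> simp

lemma cosSq_of_mem {x : ℝ} (hx : x ∈ Ioo (-(π / 2)) (π / 2)) : cosSq x = cos x ^ 2 := if_pos hx

lemma cosSq_eq_indicator :
    cosSq = (Ioo (-(π / 2)) (π / 2)).indicator fun x => cos x ^ 2 := by
  funext x
  rw [cosSq, indicator_apply]

lemma hasDerivAt_cosSq (x : ℝ) :
    HasDerivAt cosSq
      ((Ioo (-(π / 2)) (π / 2)).indicator (fun y => -(2 * (cos y * sin y))) x) x := by
  have hderiv : HasDerivAt (fun y => cos y ^ 2) (-(2 * (cos x * sin x))) x :=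
    ((hasDerivAt_cos x).pow 2).congr_deriv (by simp; ring)
  rw [cosSq_eq_indicator]
  refine hasDerivAt_indicator (f' := fun y => -(2 * (cos y * sin y))) hderiv fun hx => ?_
  simp [cos_eq_zero_of_mem_frontier_Ioo hx]

lemma testFun_cosSq : TestFun (-(π / 2)) (π / 2) cosSq := by
  refine ⟨contDiff_one_iff_deriv.2 ⟨fun x => (hasDerivAt_cosSq x).differentiableAt, ?_⟩,
    fun x hx => if_neg hx⟩
  rw [deriv_eq hasDerivAt_cosSq]
  refine continuous_indicator (fun x hx => ?_) (by fun_prop)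
  simp [cos_eq_zero_of_mem_frontier_Ioo hx]

lemma lintegral_sq_cosSq : ∫⁻ x in Ioo (-(π / 2)) (π / 2), ENNReal.ofReal (cosSq x ^ 2) =
    ENNReal.ofReal (∫ x in (-(π / 2))..(π / 2), cos x ^ 4) := by
  rw [← setLIntegral_Ioo_ofReal_eq_intervalIntegral (by linarith [pi_pos]) (by fun_prop)
    fun x => by positivity]
  refine setLIntegral_congr_fun measurableSet_Ioo fun x hx => ?_
  simp only [cosSq_of_mem hx, ← pow_mul, Nat.reduceMul]

lemma lintegral_sq_deriv_cosSq :
    ∫⁻ x in Ioo (-(π / 2)) (π / 2), ENNReal.ofReal (deriv cosSq x ^ 2) =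
      ENNReal.ofReal (∫ x in (-(π / 2))..(π / 2), (2 * (cos x * sin x)) ^ 2) := by
  rw [← setLIntegral_Ioo_ofReal_eq_intervalIntegral (by linarith [pi_pos]) (by fun_prop)
    fun x => by positivity]
  refine setLIntegral_congr_fun measurableSet_Ioo fun x hx => ?_
  simp only [(hasDerivAt_cosSq x).deriv, indicator_of_mem hx, neg_sq]

lemma lintegral_sq_cosSq_tanWeight :
    ∫⁻ x in Ioo (-(π / 2)) (π / 2), ENNReal.ofReal (cosSq x ^ 2) ∂tanWeight =
      ENNReal.ofReal (∫ x in (-(π / 2))..(π / 2), (cos x ^ 4 + 2 * (cos x * sin x) ^ 2)) := by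
  have hmeas : Measurable cosSq := testFun_cosSq.1.continuous.measurable
  rw [← setLIntegral_Ioo_ofReal_eq_intervalIntegral (by linarith [pi_pos]) (by fun_prop)
    fun x => by positivity, tanWeight, restrict_withDensity measurableSet_Ioo,
    Measure.restrict_restrict measurableSet_Ioo, inter_self,
    lintegral_withDensity_eq_lintegral_mul _
      (((measurable_tan.pow_const 2).const_mul 2).const_add 1).ennreal_ofReal
      (hmeas.pow_const 2).ennreal_ofReal]
  refine setLIntegral_congr_fun measurableSet_Ioo fun x hx => ?_
  have hcos : cos x ≠ 0 := (cos_pos_of_mem_Ioo hx).ne'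
  rw [Pi.mul_apply, ← ENNReal.ofReal_mul (by positivity), cosSq_of_mem hx, tan_eq_sin_div_cos]
  congr 1
  field_simp

lemma integral_cos_pow_four_pos : 0 < ∫ x in (-(π / 2))..(π / 2), cos x ^ 4 :=
  intervalIntegral.intervalIntegral_pos_of_pos_on
    (Continuous.intervalIntegrable (by fun_prop) _ _)
    (fun _ hx => pow_pos (cos_pos_of_mem_Ioo hx) 4) (by linarith [pi_pos])

lemma three_mul_integral_sq_cos_mul_sin :
    3 * ∫ x in (-(π / 2))..(π / 2), (cos x * sin x) ^ 2 =
      ∫ x in (-(π / 2))..(π / 2), cos x ^ 4 := by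
  have hderiv (x : ℝ) : HasDerivAt (fun y => cos y ^ 3 * sin y)
      (cos x ^ 4 - 3 * (cos x * sin x) ^ 2) x :=
    (((hasDerivAt_cos x).pow 3).mul (hasDerivAt_sin x)).congr_deriv (by simp; ring)
  have hint := intervalIntegral.integral_eq_sub_of_hasDerivAt (a := -(π / 2)) (b := π / 2)
    (fun x _ => hderiv x) (Continuous.intervalIntegrable (by fun_prop) _ _)
  rw [intervalIntegral.integral_sub (Continuous.intervalIntegrable (by fun_prop) _ _)
    (Continuous.intervalIntegrable (by fun_prop) _ _), intervalIntegral.integral_const_mul] at hint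
  simp only [cos_neg, cos_pi_div_two] at hint
  linarith

lemma integral_cosSq_energy :
    (∫ x in (-(π / 2))..(π / 2), (2 * (cos x * sin x)) ^ 2) +
      (∫ x in (-(π / 2))..(π / 2), (cos x ^ 4 + 2 * (cos x * sin x) ^ 2)) =
      3 * ∫ x in (-(π / 2))..(π / 2), cos x ^ 4 := by
  simp only [mul_pow 2 (cos _ * sin _)]
  rw [intervalIntegral.integral_add (Continuous.intervalIntegrable (by fun_prop) _ _)
      (Continuous.intervalIntegrable (by fun_prop) _ _), intervalIntegral.integral_const_mul,
    intervalIntegral.integral_const_mul, ← three_mul_integral_sq_cos_mul_sin]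
  ring

lemma lintegral_sq_cosSq_ne_zero :
    ∫⁻ x in Ioo (-(π / 2)) (π / 2), ENNReal.ofReal (cosSq x ^ 2) ≠ 0 := by
  rw [lintegral_sq_cosSq]
  exact (ENNReal.ofReal_pos.2 integral_cos_pow_four_pos).ne'

lemma dirRQ_tanWeight_cosSq : dirRQ (-(π / 2)) (π / 2) tanWeight cosSq = 3 := by
  have hI : -(π / 2) ≤ π / 2 := by linarith [pi_pos]
  rw [dirRQ, lintegral_sq_deriv_cosSq, lintegral_sq_cosSq_tanWeight, ← ENNReal.ofReal_add
      (intervalIntegral.integral_nonneg hI fun x _ => by positivity)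
      (intervalIntegral.integral_nonneg hI fun x _ => by positivity),
    integral_cosSq_energy, ENNReal.ofReal_mul zero_le_three, ← lintegral_sq_cosSq,
    ENNReal.mul_div_cancel_right lintegral_sq_cosSq_ne_zero
      (lintegral_sq_cosSq.trans_ne ENNReal.ofReal_ne_top), ENNReal.ofReal_ofNat]

lemma lam1_tanWeight_le_three : lam1 (-(π / 2)) (π / 2) tanWeight ≤ 3 :=
  (iInf₂_le cosSq ⟨testFun_cosSq, lintegral_sq_cosSq_ne_zero⟩).trans_eq dirRQ_tanWeight_cosSq

/-- Theorem 1.4 / `t:1d`: for `q = ψ' + ψ²` with `ψ ∈ 𝒜(I_π)` one has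
`λ₁(I_π, q) ≥ 3`, with equality if and only if `q(x) = 1 + 2 tan² x` (as measures on `I_π`),
and in the equality case an eigenfunction is `cos² x`. -/
theorem sharp_one_dimensional_lower_bound (P : PsiA) :
    3 ≤ lam1 (-(π / 2)) (π / 2) P.qM ∧
    (lam1 (-(π / 2)) (π / 2) P.qM = 3 ↔ P.qM = tanWeight) ∧
    (P.qM = tanWeight → dirRQ (-(π / 2)) (π / 2) P.qM cosSq = 3) := by
  refine ⟨P.three_le_lam1, ⟨PsiA.qM_eq_tanWeight_of_lam1_eq_three, fun h => ?_⟩, fun h => ?_⟩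
  · exact le_antisymm (h ▸ lam1_tanWeight_le_three) P.three_le_lam1
  · exact h ▸ dirRQ_tanWeight_cosSq
end
end

section
/- Let Ω be an open bounded convex domain in ℝ^N with first two Dirichlet Laplacian eigenvalues λ₁(Ω), λ₂(Ω) and L²-normalized eigenfunctions u₁, u₂. Then μ₁(Ω, u₁²) = λ₂(Ω) − λ₁(Ω), and an eigenfunction for μ₁(Ω, u₁²) is given by ū := u₂/u₁. -/
open MeasureTheory Real Set Filter Bornology
open scoped ENNReal RealInnerProductSpace

noncomputable section

/-- Dirichlet Rayleigh quotient of `u` on `Ω ⊆ ℝ^N`. -/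
def dRayleigh {N : ℕ} (Ω : Set (EuclideanSpace ℝ (Fin N)))
    (u : EuclideanSpace ℝ (Fin N) → ℝ) : ℝ≥0∞ :=
  (∫⁻ x in Ω, ENNReal.ofReal (‖fderiv ℝ u x‖ ^ 2)) /
    ∫⁻ x in Ω, ENNReal.ofReal ((u x) ^ 2)

/-- The `k`-th Dirichlet Laplacian eigenvalue of `Ω`, via the Courant–Fischer min-max
over `k`-dimensional subspaces of (a core of) `H¹₀(Ω)`. -/
def dirEV {N : ℕ} (Ω : Set (EuclideanSpace ℝ (Fin N))) (k : ℕ) : ℝ≥0∞ :=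
  ⨅ (S : Submodule ℝ (EuclideanSpace ℝ (Fin N) → ℝ))
    (_ : Module.finrank ℝ S = k ∧ ∀ u ∈ S, ContDiff ℝ 1 u ∧ tsupport u ⊆ Ω),
    ⨆ (u : EuclideanSpace ℝ (Fin N) → ℝ) (_ : u ∈ S ∧ u ≠ 0), dRayleigh Ω u

/-- Weighted Rayleigh quotient of `u` on `Ω` with weight `p`. -/
def wRayleigh {N : ℕ} (Ω : Set (EuclideanSpace ℝ (Fin N)))
    (p u : EuclideanSpace ℝ (Fin N) → ℝ) : ℝ≥0∞ :=
  (∫⁻ x in Ω, ENNReal.ofReal (‖fderiv ℝ u x‖ ^ 2 * p x)) /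
    ∫⁻ x in Ω, ENNReal.ofReal ((u x) ^ 2 * p x)

/-- Admissibility of `u` for the weighted Neumann eigenvalue `μ₁(Ω, p)`:
`u ∈ H¹_loc(Ω) ∩ L²(Ω, p dx)`, `u ≠ 0`, with zero `p`-mean. -/
def wAdm {N : ℕ} (Ω : Set (EuclideanSpace ℝ (Fin N)))
    (p u : EuclideanSpace ℝ (Fin N) → ℝ) : Prop :=
  ContDiffOn ℝ 1 u Ω ∧
    (∫⁻ x in Ω, ENNReal.ofReal ((u x) ^ 2 * p x)) ≠ 0 ∧
    (∫⁻ x in Ω, ENNReal.ofReal ((u x) ^ 2 * p x)) ≠ ∞ ∧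
    (∫ x in Ω, u x * p x) = 0

/-- `μ₁(Ω, p)`, the first nontrivial weighted Neumann eigenvalue of `Ω`.
For `p ≡ 1` this is the first nontrivial Neumann Laplacian eigenvalue. -/
def wEV {N : ℕ} (Ω : Set (EuclideanSpace ℝ (Fin N)))
    (p : EuclideanSpace ℝ (Fin N) → ℝ) : ℝ≥0∞ :=
  ⨅ (u : EuclideanSpace ℝ (Fin N) → ℝ) (_ : wAdm Ω p u), wRayleigh Ω p u

/-- The width of `Ω`: the minimal distance between two parallel supporting hyperplanes,
i.e. the infimum over unit directions of the breadth of `Ω` in that direction. -/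
def width {N : ℕ} (Ω : Set (EuclideanSpace ℝ (Fin N))) : ℝ :=
  ⨅ v : Metric.sphere (0 : EuclideanSpace ℝ (Fin N)) 1,
    (sSup ((fun x => ⟪x, (v : EuclideanSpace ℝ (Fin N))⟫) '' Ω) -
      sInf ((fun x => ⟪x, (v : EuclideanSpace ℝ (Fin N))⟫) '' Ω))

/-- `u` is a first Dirichlet eigenfunction of `Ω` (positive, `L²`-normalized):
it lies in (an avatar of) `H¹₀(Ω)` and achieves `λ₁(Ω)` as a Rayleigh quotient. -/
def IsFirstDirichletEF {N : ℕ} (Ω : Set (EuclideanSpace ℝ (Fin N)))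
    (u : EuclideanSpace ℝ (Fin N) → ℝ) : Prop :=
  Continuous u ∧ (∀ x ∉ Ω, u x = 0) ∧ ContDiffOn ℝ 1 u Ω ∧
    (∫⁻ x in Ω, ENNReal.ofReal (‖fderiv ℝ u x‖ ^ 2)) ≠ ∞ ∧
    (∀ x ∈ Ω, 0 < u x) ∧
    (∫⁻ x in Ω, ENNReal.ofReal ((u x) ^ 2)) = 1 ∧
    dRayleigh Ω u = dirEV Ω 1

/-- `u2` is a second Dirichlet eigenfunction of `Ω` (`L²`-normalized, orthogonal to the
first eigenfunction `u1`), achieving `λ₂(Ω)` as a Rayleigh quotient. -/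
def IsSecondDirichletEF {N : ℕ} (Ω : Set (EuclideanSpace ℝ (Fin N)))
    (u1 u2 : EuclideanSpace ℝ (Fin N) → ℝ) : Prop :=
  Continuous u2 ∧ (∀ x ∉ Ω, u2 x = 0) ∧ ContDiffOn ℝ 1 u2 Ω ∧
    (∫⁻ x in Ω, ENNReal.ofReal (‖fderiv ℝ u2 x‖ ^ 2)) ≠ ∞ ∧
    (∫ x in Ω, u1 x * u2 x) = 0 ∧
    (∫⁻ x in Ω, ENNReal.ofReal ((u2 x) ^ 2)) = 1 ∧
    dRayleigh Ω u2 = dirEV Ω 2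

/-!
The weak equation for `u₁`, tested with `v² u₁`, gives the ground-state identity
`∫ |∇(v u₁)|² - λ₁ ∫ (v u₁)² = ∫ |∇v|² u₁²`. So `v ↦ v u₁` carries the weighted Neumann quotient of
`v` to the Dirichlet quotient of `v u₁` shifted by `λ₁`, and the condition `∫ v u₁² = 0` to
orthogonality of `v u₁` and `u₁`. The identity itself needs `v` bounded; the two inequalities then
follow by truncation.

* For admissible `v`, truncate `v` at large values to get `wₙ ∈ H¹₀(Ω)` with `wₙ → v u₁` in `L²` and
  shifted energy at most `∫ |∇v|² u₁²`. Whenever `c - λ₁` exceeds the weighted quotient of `v`, the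
  form of `-Δ - c` is negative definite on `span {u₁, wₙ}` for large `n`, whence `λ₂ ≤ c`.
* For `v = u₂ / u₁`, truncate `u₂` near its zero set: the quotients by `u₁` are bounded because
  the truncations are supported in a compact subset of `Ω`, and Fatou's lemma gives
  `∫ |∇(u₂ / u₁)|² u₁² ≤ λ₂ - λ₁`.

The weak equation comes from Cauchy–Schwarz for the form of `-Δ - λ₁`, which is nonnegative and
vanishes at `u₁`.
-/

open scoped Topology

section Gradient

open InnerProductSpace Gradient

variable {E : Type*} [NormedAddCommGroup E] [InnerProductSpace ℝ E] [CompleteSpace E]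
  {f g : E → ℝ} {x : E}

theorem norm_gradient (f : E → ℝ) (x : E) : ‖∇ f x‖ = ‖fderiv ℝ f x‖ :=
  LinearIsometryEquiv.norm_map _ _

theorem gradient_add (hf : DifferentiableAt ℝ f x) (hg : DifferentiableAt ℝ g x) :
    ∇ (f + g) x = ∇ f x + ∇ g x := by
  rw [gradient, fderiv_add hf hg, map_add, gradient, gradient]

theorem gradient_const_smul (c : ℝ) (hf : DifferentiableAt ℝ f x) :
    ∇ (c • f) x = c • ∇ f x := by
  rw [gradient, fderiv_const_smul hf, map_smulₛₗ, gradient]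
  rfl

theorem gradient_fun_mul (hf : DifferentiableAt ℝ f x) (hg : DifferentiableAt ℝ g x) :
    ∇ (fun y => f y * g y) x = f x • ∇ g x + g x • ∇ f x := by
  simp [gradient, fderiv_fun_mul hf hg]

theorem gradient_fun_comp {φ : ℝ → ℝ} {φ' : ℝ} (hφ : HasDerivAt φ φ' (f x))
    (hf : DifferentiableAt ℝ f x) : ∇ (fun y => φ (f y)) x = φ' • ∇ f x := by
  have h : fderiv ℝ (fun y => φ (f y)) x = φ' • fderiv ℝ f x :=
    (hφ.comp_hasFDerivAt x hf.hasFDerivAt).fderiv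
  simp [gradient, h]

theorem smul_gradient_fun_div (hf : DifferentiableAt ℝ f x) (hg : DifferentiableAt ℝ g x)
    (hx : g x ≠ 0) : g x • ∇ (fun y => f y / g y) x = ∇ f x - (f x / g x) • ∇ g x := by
  have hdiv : DifferentiableAt ℝ (fun y => f y / g y) x := by
    simpa only [div_eq_mul_inv] using hf.fun_mul (hg.fun_inv hx)
  have hmul := gradient_fun_mul hdiv hg
  have heq : (fun y => f y / g y * g y) =ᶠ[𝓝 x] f := by
    filter_upwards [hg.continuousAt.eventually_ne hx] with y hy
    exact div_mul_cancel₀ _ hy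
  rw [heq.gradient_eq] at hmul
  rw [hmul, add_sub_cancel_left]

theorem continuousOn_gradient_of_isOpen {s : Set E} (hf : ContDiffOn ℝ 1 f s)
    (hs : IsOpen s) : ContinuousOn (∇ f) s :=
  (LinearIsometryEquiv.continuous _).comp_continuousOn
    (hf.continuousOn_fderiv_of_isOpen hs le_rfl)

end Gradient

theorem differentiableAt_of_contDiffOn_of_isOpen {E F : Type*} [NormedAddCommGroup E]
    [NormedSpace ℝ E] [NormedAddCommGroup F] [NormedSpace ℝ F] {s : Set E} {f : E → F}
    (hf : ContDiffOn ℝ 1 f s) (hs : IsOpen s) {x : E} (hx : x ∈ s) : DifferentiableAt ℝ f x :=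
  (hf.differentiableOn one_ne_zero).differentiableAt (hs.mem_nhds hx)

theorem contDiff_of_tsupport_subset {E F : Type*} [NormedAddCommGroup E]
    [NormedSpace ℝ E] [NormedAddCommGroup F] [NormedSpace ℝ F] {n : WithTop ℕ∞} {s : Set E}
    {f : E → F} (hf : ContDiffOn ℝ n f s) (hs : IsOpen s) (hsupp : tsupport f ⊆ s) :
    ContDiff ℝ n f := by
  rw [contDiff_iff_contDiffAt]
  intro x
  by_cases hx : x ∈ tsupport f
  · exact hf.contDiffAt (hs.mem_nhds (hsupp hx))
  · exact contDiffAt_const.congr_of_eventuallyEq (notMem_tsupport_iff_eventuallyEq.1 hx)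

theorem ae_fderiv_eq_zero_of_eqOn_zero {E : Type*} [NormedAddCommGroup E] [NormedSpace ℝ E]
    [FiniteDimensional ℝ E] [MeasurableSpace E] [BorelSpace E] (μ : Measure E)
    [μ.IsAddHaarMeasure] {f : E → ℝ} {s : Set E} (hs : MeasurableSet s)
    (hf : ∀ x ∈ s, DifferentiableAt ℝ f x) (h0 : EqOn f 0 s) :
    ∀ᵐ x ∂μ.restrict s, fderiv ℝ f x = 0 := by
  rcases subsingleton_or_nontrivial E with _ | _
  · exact Eventually.of_forall fun x => Subsingleton.elim _ _
  obtain ⟨e, he⟩ := exists_ne (0 : E)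
  -- `f • e` maps `E` to itself and is approximated by `0` on `s` with constant `0`.
  have happrox : ApproximatesLinearOn (fun x => f x • e) (0 : E →L[ℝ] E) s 0 := by
    intro x hx y hy
    simp [h0 hx, h0 hy]
  filter_upwards [happrox.norm_fderiv_sub_le μ hs (fun x => (fderiv ℝ f x).smulRight e)
    fun x hx => ((hf x hx).hasFDerivAt.smul_const e).hasFDerivWithinAt] with x hx
  simpa [he] using hx

theorem tendsto_toLp_of_norm_le {α F : Type*} [MeasurableSpace α] {μ : Measure α}
    [NormedAddCommGroup F] {p : ℝ≥0∞} [Fact (1 ≤ p)] (hp : p ≠ ∞) {f : α → F} {fn : ℕ → α → F}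
    (hf : MemLp f p μ) (hfn : ∀ n, MemLp (fn n) p μ) (hle : ∀ n, ∀ᵐ x ∂μ, ‖fn n x‖ ≤ ‖f x‖)
    (hlim : ∀ᵐ x ∂μ, Tendsto (fun n => fn n x) atTop (𝓝 (f x))) :
    Tendsto (fun n => (hfn n).toLp (fn n)) atTop (𝓝 (hf.toLp f)) := by
  have hp0 : 0 < p.toReal := ENNReal.toReal_pos (zero_lt_one.trans_le Fact.out).ne' hp
  rw [Lp.tendsto_Lp_iff_tendsto_eLpNorm'']
  simp only [eLpNorm_eq_lintegral_rpow_enorm_toReal (zero_lt_one.trans_le Fact.out).ne' hp,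
    Pi.sub_apply]
  have hint : Tendsto (fun n => ∫⁻ x, ‖fn n x - f x‖ₑ ^ p.toReal ∂μ) atTop (𝓝 0) := by
    rw [← lintegral_zero (μ := μ)]
    refine tendsto_lintegral_of_dominated_convergence' (fun x => (2 * ‖f x‖ₑ) ^ p.toReal)
      (fun n => ((hfn n).1.sub hf.1).enorm.pow_const _) (fun n => ?_) ?_ ?_
    · filter_upwards [hle n] with x hx
      gcongr
      rw [two_mul]
      exact enorm_sub_le.trans (add_le_add_left (enorm_le_iff_norm_le.2 hx) _)
    · simp only [ENNReal.mul_rpow_of_nonneg _ _ hp0.le]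
      rw [lintegral_const_mul' _ _ (by finiteness)]
      exact ENNReal.mul_ne_top (by finiteness)
        (lintegral_rpow_enorm_lt_top_of_eLpNorm_lt_top
          (zero_lt_one.trans_le Fact.out).ne' hp hf.2).ne
    · filter_upwards [hlim] with x hx
      have hsub := (hx.sub_const (f x)).enorm
      rw [sub_self, enorm_zero] at hsub
      simpa [ENNReal.zero_rpow_of_pos hp0] using hsub.ennrpow_const p.toReal
  simpa [ENNReal.zero_rpow_of_pos (inv_pos.2 hp0)] using hint.ennrpow_const (1 / p.toReal)

theorem memLp_smul_of_norm_le {X F : Type*} [TopologicalSpace X] [MeasurableSpace X]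
    [OpensMeasurableSpace X] {μ : Measure X} [NormedAddCommGroup F] [NormedSpace ℝ F] {p : ℝ≥0∞}
    {s : Set X} (hs : MeasurableSet s) {v : X → ℝ} (hv : ContinuousOn v s) {M : ℝ}
    (hM : ∀ x ∈ s, ‖v x‖ ≤ M) {f : X → F} (hf : MemLp f p (μ.restrict s)) :
    MemLp (fun x => v x • f x) p (μ.restrict s) :=
  hf.smul (memLp_top_of_bound (hv.aestronglyMeasurable hs) M (ae_restrict_of_forall_mem hs hM))

theorem continuous_mul_of_norm_le {X : Type*} [TopologicalSpace X] {s : Set X} (hs : IsOpen s)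
    {v w : X → ℝ} (hv : ContinuousOn v s) {M : ℝ} (hM : ∀ x ∈ s, ‖v x‖ ≤ M) (hw : Continuous w)
    (hw0 : ∀ x ∉ s, w x = 0) : Continuous fun x => v x * w x := by
  rw [continuous_iff_continuousAt]
  intro x
  by_cases hx : x ∈ s
  · exact (hv.continuousAt (hs.mem_nhds hx)).mul hw.continuousAt
  · have hbound : Tendsto (fun y => M * ‖w y‖) (𝓝 x) (𝓝 0) := by
      simpa [hw0 x hx] using (hw.norm.const_mul M).tendsto x
    rw [ContinuousAt, hw0 x hx, mul_zero]
    refine squeeze_zero_norm (fun y => ?_) hbound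
    by_cases hy : y ∈ s
    · rw [norm_mul]
      gcongr
      exact hM y hy
    · simp [hw0 y hy]

section LintegralNormSq

variable {α F : Type*} [MeasurableSpace α] {μ : Measure α} [NormedAddCommGroup F] {f : α → F}

theorem memLp_two_of_lintegral_ne_top (hf : AEStronglyMeasurable f μ)
    (hfin : ∫⁻ x, ENNReal.ofReal (‖f x‖ ^ 2) ∂μ ≠ ∞) : MemLp f 2 μ :=
  (memLp_two_iff_integrable_sq_norm hf).2
    ((lintegral_ofReal_ne_top_iff_integrable (hf.norm.pow 2)
      (ae_of_all _ fun _ => sq_nonneg _)).1 hfin)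

theorem lintegral_ofReal_norm_sq_of_memLp (hf : MemLp f 2 μ) :
    ∫⁻ x, ENNReal.ofReal (‖f x‖ ^ 2) ∂μ = ENNReal.ofReal (∫ x, ‖f x‖ ^ 2 ∂μ) :=
  (ofReal_integral_eq_lintegral_ofReal (hf.integrable_norm_pow two_ne_zero)
    (ae_of_all _ fun _ => sq_nonneg _)).symm

theorem lintegral_ofReal_norm_sq_le_of_tendsto {fn : ℕ → α → F} {a : ℝ≥0∞}
    (hfn : ∀ n, AEStronglyMeasurable (fn n) μ)
    (hf : ∀ᵐ x ∂μ, Tendsto (fun n => fn n x) atTop (𝓝 (f x)))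
    (ha : Tendsto (fun n => ∫⁻ x, ENNReal.ofReal (‖fn n x‖ ^ 2) ∂μ) atTop (𝓝 a)) :
    ∫⁻ x, ENNReal.ofReal (‖f x‖ ^ 2) ∂μ ≤ a := by
  have hliminf : ∀ᵐ x ∂μ, ENNReal.ofReal (‖f x‖ ^ 2) =
      liminf (fun n => ENNReal.ofReal (‖fn n x‖ ^ 2)) atTop :=
    hf.mono fun x hx => (ENNReal.tendsto_ofReal (hx.norm.pow 2)).liminf_eq.symm
  rw [lintegral_congr_ae hliminf, ← ha.liminf_eq]
  exact lintegral_liminf_le' fun n =>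
    ((hfn n).norm.aemeasurable.pow_const 2).ennreal_ofReal

end LintegralNormSq

section Inner

variable {α F : Type*} [MeasurableSpace α] {μ : Measure α} [NormedAddCommGroup F]
  [InnerProductSpace ℝ F] {f g : α → F}

theorem inner_coeFn_toLp_ae_eq (hf : MemLp f 2 μ) (hg : MemLp g 2 μ) :
    (fun x => ⟪hf.toLp f x, hg.toLp g x⟫) =ᵐ[μ] fun x => ⟪f x, g x⟫ := by
  filter_upwards [hf.coeFn_toLp, hg.coeFn_toLp] with x hfx hgx
  rw [hfx, hgx]

theorem integrable_inner_of_memLp (hf : MemLp f 2 μ) (hg : MemLp g 2 μ) :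
    Integrable (fun x => ⟪f x, g x⟫) μ :=
  (L2.integrable_inner (𝕜 := ℝ) _ _).congr (inner_coeFn_toLp_ae_eq hf hg)

theorem inner_toLp_eq_integral (hf : MemLp f 2 μ) (hg : MemLp g 2 μ) :
    ⟪hf.toLp f, hg.toLp g⟫ = ∫ x, ⟪f x, g x⟫ ∂μ :=
  integral_congr_ae (inner_coeFn_toLp_ae_eq hf hg)

end Inner

section Primitive

/-- The primitive vanishing at `0` of a cutoff `χ`. Composing with it truncates a function `w`:
the gradient of `primitive χ ∘ w` is `χ ∘ w` times that of `w`. -/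
def primitive (χ : ℝ → ℝ) (s : ℝ) : ℝ := ∫ t in (0 : ℝ)..s, χ t

variable {χ : ℝ → ℝ}

theorem primitive_zero (χ : ℝ → ℝ) : primitive χ 0 = 0 := intervalIntegral.integral_same

theorem hasDerivAt_primitive (hχ : Continuous χ) (s : ℝ) : HasDerivAt (primitive χ) (χ s) s :=
  hχ.integral_hasStrictDerivAt 0 s |>.hasDerivAt

theorem contDiff_primitive (hχ : Continuous χ) : ContDiff ℝ 1 (primitive χ) := by
  rw [contDiff_one_iff_deriv, funext fun s => (hasDerivAt_primitive hχ s).deriv]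
  exact ⟨fun s => (hasDerivAt_primitive hχ s).differentiableAt, hχ⟩

theorem norm_primitive_le (hχ : ∀ t, ‖χ t‖ ≤ 1) (s : ℝ) : ‖primitive χ s‖ ≤ ‖s‖ := by
  simpa [primitive] using intervalIntegral.norm_integral_le_of_norm_le_const
    (a := (0 : ℝ)) (b := s) fun t _ => hχ t

theorem norm_primitive_le_integral_norm (hχ : Integrable χ) (s : ℝ) :
    ‖primitive χ s‖ ≤ ∫ t, ‖χ t‖ :=
  intervalIntegral.norm_integral_le_integral_norm_uIoc.trans
    (setIntegral_le_integral hχ.norm (Eventually.of_forall fun _ => norm_nonneg _))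

theorem primitive_eq_zero {s : ℝ} (hχ : ∀ t, |t| ≤ |s| → χ t = 0) : primitive χ s = 0 := by
  rw [primitive, intervalIntegral.integral_congr (g := 0), Pi.zero_def,
    intervalIntegral.integral_zero]
  intro t ht
  exact hχ t (by simpa using abs_sub_left_of_mem_uIcc ht)

/-- A sequence of continuous cutoffs bounded by `1` and converging to `1` away from the origin, so
that the truncations `primitive (χ n) ∘ w` converge to `w`. -/
structure IsCutoffSeq (χ : ℕ → ℝ → ℝ) : Prop where
  continuous : ∀ n, Continuous (χ n)
  norm_le_one : ∀ n t, ‖χ n t‖ ≤ 1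
  tendsto_one : ∀ t ≠ 0, Tendsto (fun n => χ n t) atTop (𝓝 1)

theorem IsCutoffSeq.tendsto_primitive {χ : ℕ → ℝ → ℝ} (hχ : IsCutoffSeq χ) (s : ℝ) :
    Tendsto (fun n => primitive (χ n) s) atTop (𝓝 s) := by
  have h := intervalIntegral.tendsto_integral_filter_of_dominated_convergence (a := 0) (b := s)
    (F := χ) (f := fun _ => (1 : ℝ)) (l := atTop) (μ := volume) (fun _ => 1)
    (Eventually.of_forall fun n => (hχ.continuous n).aestronglyMeasurable)
    (Eventually.of_forall fun n => ae_of_all _ fun t _ => hχ.norm_le_one n t) (by simp)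
    (by filter_upwards [Measure.ae_ne volume (0 : ℝ)] with t ht _ using hχ.tendsto_one t ht)
  simpa [primitive] using h

/-- Cutoffs vanishing near the origin, whose primitives truncate a function near its zeros. -/
def zeroCutoff (n : ℕ) (t : ℝ) : ℝ := smoothTransition (n * |t| - 1)

theorem isCutoffSeq_zeroCutoff : IsCutoffSeq zeroCutoff where
  continuous n := smoothTransition.continuous.comp (by fun_prop)
  norm_le_one n t := by
    rw [zeroCutoff, norm_of_nonneg (smoothTransition.nonneg _)]
    exact smoothTransition.le_one _
  tendsto_one t ht := by
    have hn : Tendsto (fun n : ℕ => n * |t| - 1) atTop atTop :=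
      tendsto_atTop_add_const_right _ _
        (tendsto_natCast_atTop_atTop.atTop_mul_const (abs_pos.2 ht))
    refine tendsto_const_nhds.congr' ?_
    filter_upwards [hn.eventually_ge_atTop 1] with n hn
    exact (smoothTransition.one_of_one_le hn).symm

theorem primitive_zeroCutoff_eq_zero {n : ℕ} {s : ℝ} (hs : n * |s| ≤ 1) :
    primitive (zeroCutoff n) s = 0 := by
  refine primitive_eq_zero fun t ht => smoothTransition.zero_of_nonpos ?_
  rw [sub_nonpos]
  exact (by gcongr : n * |t| ≤ n * |s|).trans hs

/-- Integrable cutoffs, whose primitives truncate a function at large values. -/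
def gaussianCutoff (n : ℕ) (t : ℝ) : ℝ := exp (-(1 / ((n : ℝ) + 1)) * t ^ 2)

theorem isCutoffSeq_gaussianCutoff : IsCutoffSeq gaussianCutoff where
  continuous n := by unfold gaussianCutoff; fun_prop
  norm_le_one n t := by
    rw [gaussianCutoff, norm_of_nonneg (exp_nonneg _), exp_le_one_iff, neg_mul, neg_nonpos]
    positivity
  tendsto_one t _ := by
    simpa [gaussianCutoff] using
      ((tendsto_one_div_add_atTop_nhds_zero_nat (𝕜 := ℝ)).neg.mul_const (t ^ 2)).rexp

theorem integrable_gaussianCutoff (n : ℕ) : Integrable (gaussianCutoff n) :=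
  integrable_exp_neg_mul_sq (by positivity)

end Primitive

section DirichletSpace

open InnerProductSpace Gradient TopologicalSpace

variable {E : Type*} [NormedAddCommGroup E] [InnerProductSpace ℝ E] [CompleteSpace E]
  [MeasurableSpace E] [OpensMeasurableSpace E] (Ω : Opens E) (μ : Measure E)

/-- The part of `H¹₀(Ω)` containing the eigenfunctions: continuous functions vanishing outside `Ω`
that are `C¹` in `Ω` and have finite mass and energy. Every integral is taken over `Ω`, so the
junk values of the gradient outside `Ω` are irrelevant. -/
def dirichletSpace : Submodule ℝ (E → ℝ) where
  carrier := {w | Continuous w ∧ (∀ x ∉ Ω, w x = 0) ∧ ContDiffOn ℝ 1 w Ω ∧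
    MemLp w 2 (μ.restrict Ω) ∧ MemLp (∇ w) 2 (μ.restrict Ω)}
  zero_mem' := ⟨continuous_zero, fun _ _ => rfl, contDiffOn_const, MemLp.zero, by
    simp [Pi.zero_def]⟩
  add_mem' := by
    rintro w z ⟨hw, hw0, hwd, hwL, hwg⟩ ⟨hz, hz0, hzd, hzL, hzg⟩
    refine ⟨hw.add hz, fun x hx => by simp [hw0 x hx, hz0 x hx], hwd.add hzd, hwL.add hzL,
      (hwg.add hzg).ae_eq ?_⟩
    refine ae_restrict_of_forall_mem Ω.isOpen.measurableSet fun x hx => ?_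
    exact (gradient_add (differentiableAt_of_contDiffOn_of_isOpen hwd Ω.isOpen hx)
      (differentiableAt_of_contDiffOn_of_isOpen hzd Ω.isOpen hx)).symm
  smul_mem' := by
    rintro c w ⟨hw, hw0, hwd, hwL, hwg⟩
    refine ⟨hw.const_smul c, fun x hx => by simp [hw0 x hx], hwd.const_smul c, hwL.const_smul c,
      (hwg.const_smul c).ae_eq ?_⟩
    refine ae_restrict_of_forall_mem Ω.isOpen.measurableSet fun x hx => ?_
    exact (gradient_const_smul c
      (differentiableAt_of_contDiffOn_of_isOpen hwd Ω.isOpen hx)).symm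

variable {Ω μ} (w z : dirichletSpace Ω μ)

theorem dirichletSpace.continuous : Continuous w.1 := w.2.1

theorem dirichletSpace.eq_zero {x : E} (hx : x ∉ Ω) : w.1 x = 0 := w.2.2.1 x hx

theorem dirichletSpace.contDiffOn : ContDiffOn ℝ 1 w.1 Ω := w.2.2.2.1

theorem dirichletSpace.differentiableAt {x : E} (hx : x ∈ Ω) : DifferentiableAt ℝ w.1 x :=
  differentiableAt_of_contDiffOn_of_isOpen (dirichletSpace.contDiffOn w) Ω.isOpen hx

theorem dirichletSpace.memLp : MemLp w.1 2 (μ.restrict Ω) := w.2.2.2.2.1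

theorem dirichletSpace.memLp_gradient : MemLp (∇ w.1) 2 (μ.restrict Ω) := w.2.2.2.2.2

theorem mem_dirichletSpace_of_lintegral_ne_top [SecondCountableTopology E]
    {w : E → ℝ} (hw : Continuous w) (hw0 : ∀ x ∉ Ω, w x = 0) (hwd : ContDiffOn ℝ 1 w Ω)
    (hmass : ∫⁻ x in Ω, ENNReal.ofReal (w x ^ 2) ∂μ ≠ ∞)
    (henergy : ∫⁻ x in Ω, ENNReal.ofReal (‖fderiv ℝ w x‖ ^ 2) ∂μ ≠ ∞) :
    w ∈ dirichletSpace Ω μ := by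
  have hgrad : ContinuousOn (∇ w) Ω := continuousOn_gradient_of_isOpen hwd Ω.isOpen
  exact ⟨hw, hw0, hwd,
    memLp_two_of_lintegral_ne_top hw.aestronglyMeasurable (by simpa using hmass),
    memLp_two_of_lintegral_ne_top (hgrad.aestronglyMeasurable Ω.isOpen.measurableSet)
      (by simpa only [norm_gradient] using henergy)⟩

variable (Ω μ) in
/-- Inclusion of the Dirichlet space into `L²(Ω)`. -/
def valueLp : dirichletSpace Ω μ →ₗ[ℝ] Lp ℝ 2 (μ.restrict Ω) where
  toFun w := (dirichletSpace.memLp w).toLp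
  map_add' _ _ := rfl
  map_smul' _ _ := rfl

variable (Ω μ) in
/-- The gradient as a map from the Dirichlet space to `L²(Ω; E)`. -/
def gradientLp : dirichletSpace Ω μ →ₗ[ℝ] Lp E 2 (μ.restrict Ω) where
  toFun w := (dirichletSpace.memLp_gradient w).toLp
  map_add' w z := by
    rw [← MemLp.toLp_add, MemLp.toLp_eq_toLp_iff]
    refine ae_restrict_of_forall_mem Ω.isOpen.measurableSet fun x hx => ?_
    exact gradient_add (dirichletSpace.differentiableAt w hx) (dirichletSpace.differentiableAt z hx)
  map_smul' c w := by
    rw [RingHom.id_apply, ← MemLp.toLp_const_smul, MemLp.toLp_eq_toLp_iff]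
    refine ae_restrict_of_forall_mem Ω.isOpen.measurableSet fun x hx => ?_
    exact gradient_const_smul c (dirichletSpace.differentiableAt w hx)

variable (Ω μ) in
/-- The mass form `∫_Ω w z` of the Rayleigh quotient. -/
def massForm : LinearMap.BilinForm ℝ (dirichletSpace Ω μ) :=
  (innerₗ _).compl₁₂ (valueLp Ω μ) (valueLp Ω μ)

variable (Ω μ) in
/-- The energy form `∫_Ω ⟪∇w, ∇z⟫` of the Rayleigh quotient. -/
def energyForm : LinearMap.BilinForm ℝ (dirichletSpace Ω μ) :=
  (innerₗ _).compl₁₂ (gradientLp Ω μ) (gradientLp Ω μ)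

variable (Ω μ) in
/-- The quadratic form of `-Δ - c`. -/
def shiftedForm (c : ℝ) : LinearMap.BilinForm ℝ (dirichletSpace Ω μ) :=
  energyForm Ω μ - c • massForm Ω μ

theorem shiftedForm_apply (c : ℝ) :
    shiftedForm Ω μ c w z = energyForm Ω μ w z - c * massForm Ω μ w z := rfl

theorem massForm_apply : massForm Ω μ w z = ⟪valueLp Ω μ w, valueLp Ω μ z⟫ := rfl

theorem energyForm_apply : energyForm Ω μ w z = ⟪gradientLp Ω μ w, gradientLp Ω μ z⟫ := rfl

theorem massForm_comm : massForm Ω μ w z = massForm Ω μ z w := by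
  rw [massForm_apply, real_inner_comm, massForm_apply]

theorem energyForm_comm : energyForm Ω μ w z = energyForm Ω μ z w := by
  rw [energyForm_apply, real_inner_comm, energyForm_apply]

theorem shiftedForm_comm (c : ℝ) : shiftedForm Ω μ c w z = shiftedForm Ω μ c z w := by
  rw [shiftedForm_apply, shiftedForm_apply, massForm_comm, energyForm_comm]

theorem massForm_self_nonneg : 0 ≤ massForm Ω μ w w :=
  massForm_apply w w ▸ real_inner_self_nonneg

theorem energyForm_self_nonneg : 0 ≤ energyForm Ω μ w w :=
  energyForm_apply w w ▸ real_inner_self_nonneg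

theorem massForm_eq_integral : massForm Ω μ w z = ∫ x in Ω, w.1 x * z.1 x ∂μ :=
  (inner_toLp_eq_integral (dirichletSpace.memLp w) (dirichletSpace.memLp z)).trans
    (by simp [mul_comm])

theorem energyForm_eq_integral : energyForm Ω μ w z = ∫ x in Ω, ⟪∇ w.1 x, ∇ z.1 x⟫ ∂μ :=
  inner_toLp_eq_integral (dirichletSpace.memLp_gradient w) (dirichletSpace.memLp_gradient z)

theorem lintegral_sq_eq_massForm :
    ∫⁻ x in Ω, ENNReal.ofReal (w.1 x ^ 2) ∂μ = ENNReal.ofReal (massForm Ω μ w w) := by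
  simpa only [massForm_eq_integral, norm_eq_abs, sq_abs, ← sq] using
    lintegral_ofReal_norm_sq_of_memLp (dirichletSpace.memLp w)

theorem lintegral_norm_fderiv_sq_eq_energyForm :
    ∫⁻ x in Ω, ENNReal.ofReal (‖fderiv ℝ w.1 x‖ ^ 2) ∂μ =
      ENNReal.ofReal (energyForm Ω μ w w) := by
  simpa only [energyForm_eq_integral, real_inner_self_eq_norm_sq, norm_gradient] using
    lintegral_ofReal_norm_sq_of_memLp (dirichletSpace.memLp_gradient w)

theorem tendsto_shiftedForm (c : ℝ) {wn zn : ℕ → dirichletSpace Ω μ}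
    (hw : Tendsto (fun n => valueLp Ω μ (wn n)) atTop (𝓝 (valueLp Ω μ w)))
    (hgw : Tendsto (fun n => gradientLp Ω μ (wn n)) atTop (𝓝 (gradientLp Ω μ w)))
    (hz : Tendsto (fun n => valueLp Ω μ (zn n)) atTop (𝓝 (valueLp Ω μ z)))
    (hgz : Tendsto (fun n => gradientLp Ω μ (zn n)) atTop (𝓝 (gradientLp Ω μ z))) :
    Tendsto (fun n => shiftedForm Ω μ c (wn n) (zn n)) atTop (𝓝 (shiftedForm Ω μ c w z)) :=
  (hgw.inner hgz).sub ((hw.inner hz).const_mul c)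

end DirichletSpace

section GroundState

open InnerProductSpace Gradient TopologicalSpace

variable {E : Type*} [NormedAddCommGroup E] [InnerProductSpace ℝ E] [CompleteSpace E]
  [MeasurableSpace E] [OpensMeasurableSpace E] {Ω : Opens E} {μ : Measure E}
  {v : E → ℝ} {M : ℝ}

theorem mul_mem_dirichletSpace (u : dirichletSpace Ω μ) (hv : ContDiffOn ℝ 1 v Ω)
    (hM : ∀ x ∈ Ω, ‖v x‖ ≤ M) (huv : MemLp (fun x => u.1 x • ∇ v x) 2 (μ.restrict Ω)) :
    (fun x => v x * u.1 x) ∈ dirichletSpace Ω μ := by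
  refine ⟨continuous_mul_of_norm_le Ω.isOpen hv.continuousOn hM (dirichletSpace.continuous u)
    fun _ => dirichletSpace.eq_zero u, fun x hx => by simp [dirichletSpace.eq_zero u hx],
    hv.mul (dirichletSpace.contDiffOn u),
    memLp_smul_of_norm_le Ω.isOpen.measurableSet hv.continuousOn hM (dirichletSpace.memLp u),
    ((memLp_smul_of_norm_le Ω.isOpen.measurableSet hv.continuousOn hM
      (dirichletSpace.memLp_gradient u)).add huv).ae_eq ?_⟩
  refine ae_restrict_of_forall_mem Ω.isOpen.measurableSet fun x hx => ?_
  exact (gradient_fun_mul (differentiableAt_of_contDiffOn_of_isOpen hv Ω.isOpen hx)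
    (dirichletSpace.differentiableAt u hx)).symm

variable {u w : dirichletSpace Ω μ}

theorem gradient_eq_of_eq_mul (hv : ContDiffOn ℝ 1 v Ω) (hw : ∀ x ∈ Ω, w.1 x = v x * u.1 x)
    {x : E} (hx : x ∈ Ω) : ∇ w.1 x = v x • ∇ u.1 x + u.1 x • ∇ v x := by
  have heq : w.1 =ᶠ[𝓝 x] fun y => v y * u.1 y :=
    eventually_of_mem (Ω.isOpen.mem_nhds hx) hw
  rw [heq.gradient_eq, gradient_fun_mul
    (differentiableAt_of_contDiffOn_of_isOpen hv Ω.isOpen hx)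
    (dirichletSpace.differentiableAt u hx)]

theorem memLp_smul_gradient_of_eq_mul (hv : ContDiffOn ℝ 1 v Ω) (hM : ∀ x ∈ Ω, ‖v x‖ ≤ M)
    (hw : ∀ x ∈ Ω, w.1 x = v x * u.1 x) :
    MemLp (fun x => u.1 x • ∇ v x) 2 (μ.restrict Ω) := by
  refine ((dirichletSpace.memLp_gradient w).sub
    (memLp_smul_of_norm_le Ω.isOpen.measurableSet hv.continuousOn hM
      (dirichletSpace.memLp_gradient u))).ae_eq ?_
  refine ae_restrict_of_forall_mem Ω.isOpen.measurableSet fun x hx => ?_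
  simp [gradient_eq_of_eq_mul hv hw hx]

theorem shiftedForm_self_of_eq_mul {c : ℝ} (hu : ∀ z, shiftedForm Ω μ c u z = 0)
    (hv : ContDiffOn ℝ 1 v Ω) (hM : ∀ x ∈ Ω, ‖v x‖ ≤ M)
    (hw : ∀ x ∈ Ω, w.1 x = v x * u.1 x) :
    shiftedForm Ω μ c w w = ∫ x in Ω, ‖u.1 x • ∇ v x‖ ^ 2 ∂μ := by
  have huv := memLp_smul_gradient_of_eq_mul hv hM hw
  have hwv : MemLp (fun x => w.1 x • ∇ v x) 2 (μ.restrict Ω) := by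
    refine (memLp_smul_of_norm_le Ω.isOpen.measurableSet hv.continuousOn hM huv).ae_eq ?_
    refine ae_restrict_of_forall_mem Ω.isOpen.measurableSet fun x hx => ?_
    simp only [hw x hx, mul_smul]
  -- The equation for `u` is tested with `v w = v² u`.
  set z : dirichletSpace Ω μ := ⟨_, mul_mem_dirichletSpace w hv hM hwv⟩ with hz
  have hmass : massForm Ω μ w w = massForm Ω μ u z := by
    simp only [massForm_eq_integral]
    refine setIntegral_congr_fun Ω.isOpen.measurableSet fun x hx => ?_
    simp only [hz, hw x hx]
    ring
  have henergy : energyForm Ω μ w w = energyForm Ω μ u z + ∫ x in Ω, ‖u.1 x • ∇ v x‖ ^ 2 ∂μ := by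
    simp only [energyForm_eq_integral]
    rw [← integral_add (integrable_inner_of_memLp (dirichletSpace.memLp_gradient u)
      (dirichletSpace.memLp_gradient z))
      (huv.integrable_norm_pow two_ne_zero)]
    refine setIntegral_congr_fun Ω.isOpen.measurableSet fun x hx => ?_
    simp only [gradient_eq_of_eq_mul (u := w) (w := z) hv (fun _ _ => rfl) hx,
      gradient_eq_of_eq_mul hv hw hx, hw x hx, ← real_inner_self_eq_norm_sq, inner_add_left,
      inner_add_right, inner_smul_left, inner_smul_right, RCLike.conj_to_real,
      real_inner_comm (∇ u.1 x) (∇ v x)]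
    ring
  have hweak := hu z
  rw [shiftedForm_apply] at hweak ⊢
  rw [henergy, hmass]
  linear_combination hweak

end GroundState

section Truncation

open InnerProductSpace Gradient TopologicalSpace

variable {E : Type*} [NormedAddCommGroup E] [InnerProductSpace ℝ E] [CompleteSpace E]
  [MeasurableSpace E] [OpensMeasurableSpace E] {Ω : Opens E} {μ : Measure E}

theorem primitive_comp_mem_dirichletSpace {χ : ℝ → ℝ} (hχ : Continuous χ)
    (hχ1 : ∀ t, ‖χ t‖ ≤ 1) (w : dirichletSpace Ω μ) :
    (fun x => primitive χ (w.1 x)) ∈ dirichletSpace Ω μ := by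
  have hcont : Continuous fun x => primitive χ (w.1 x) :=
    (contDiff_primitive hχ).continuous.comp (dirichletSpace.continuous w)
  refine ⟨hcont, fun x hx => by simp [dirichletSpace.eq_zero w hx, primitive_zero],
    (contDiff_primitive hχ).comp_contDiffOn (dirichletSpace.contDiffOn w),
    (dirichletSpace.memLp w).mono hcont.aestronglyMeasurable
      (ae_of_all _ fun x => norm_primitive_le hχ1 _),
    (memLp_smul_of_norm_le Ω.isOpen.measurableSet
      (hχ.comp (dirichletSpace.continuous w)).continuousOn (fun x _ => hχ1 (w.1 x))
      (dirichletSpace.memLp_gradient w)).ae_eq ?_⟩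
  refine ae_restrict_of_forall_mem Ω.isOpen.measurableSet fun x hx => ?_
  exact (gradient_fun_comp (hasDerivAt_primitive hχ _) (dirichletSpace.differentiableAt w hx)).symm

/-- Truncation of `w` near its zero set, making its support a subset of `Ω`. -/
def truncate (n : ℕ) (w : dirichletSpace Ω μ) : dirichletSpace Ω μ :=
  ⟨fun x => primitive (zeroCutoff n) (w.1 x), primitive_comp_mem_dirichletSpace
    (isCutoffSeq_zeroCutoff.continuous n) (isCutoffSeq_zeroCutoff.norm_le_one n) w⟩

variable (n : ℕ) (w : dirichletSpace Ω μ)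

theorem norm_truncate_le (x : E) : ‖(truncate n w).1 x‖ ≤ ‖w.1 x‖ :=
  norm_primitive_le (isCutoffSeq_zeroCutoff.norm_le_one n) _

theorem tendsto_truncate (x : E) : Tendsto (fun n => (truncate n w).1 x) atTop (𝓝 (w.1 x)) :=
  isCutoffSeq_zeroCutoff.tendsto_primitive _

theorem tendsto_valueLp_truncate :
    Tendsto (fun n => valueLp Ω μ (truncate n w)) atTop (𝓝 (valueLp Ω μ w)) :=
  tendsto_toLp_of_norm_le ENNReal.ofNat_ne_top (dirichletSpace.memLp w)
    (fun n => dirichletSpace.memLp (truncate n w))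
    (fun n => ae_of_all _ (norm_truncate_le n w)) (ae_of_all _ (tendsto_truncate w))

theorem gradient_truncate {x : E} (hx : x ∈ Ω) :
    ∇ (truncate n w).1 x = zeroCutoff n (w.1 x) • ∇ w.1 x :=
  gradient_fun_comp (hasDerivAt_primitive (isCutoffSeq_zeroCutoff.continuous n) _)
    (dirichletSpace.differentiableAt w hx)

theorem isClosed_one_le_mul_abs : IsClosed {x | 1 ≤ n * |w.1 x|} :=
  isClosed_le continuous_const (continuous_const.mul (dirichletSpace.continuous w).abs)

theorem one_le_mul_abs_subset : {x | 1 ≤ n * |w.1 x|} ⊆ (Ω : Set E) := by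
  intro x hx
  by_contra hxΩ
  norm_num [dirichletSpace.eq_zero w hxΩ] at hx

theorem truncate_eq_zero {x : E} (hx : ¬1 ≤ n * |w.1 x|) : (truncate n w).1 x = 0 :=
  primitive_zeroCutoff_eq_zero (not_le.1 hx).le

theorem tsupport_truncate_subset : tsupport (truncate n w).1 ⊆ Ω :=
  (closure_minimal (fun _ hx => not_imp_comm.1 (truncate_eq_zero n w) hx)
    (isClosed_one_le_mul_abs n w)).trans (one_le_mul_abs_subset n w)

theorem contDiff_truncate : ContDiff ℝ 1 (truncate n w).1 :=
  contDiff_of_tsupport_subset (dirichletSpace.contDiffOn _) Ω.isOpen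
    (tsupport_truncate_subset n w)

end Truncation

section TruncationLimit

open InnerProductSpace Gradient TopologicalSpace

variable {E : Type*} [NormedAddCommGroup E] [InnerProductSpace ℝ E] [FiniteDimensional ℝ E]
  [MeasurableSpace E] [BorelSpace E] {Ω : Opens E} {μ : Measure E} [μ.IsAddHaarMeasure]
  (w z : dirichletSpace Ω μ)

theorem ae_gradient_eq_zero_of_eq_zero : ∀ᵐ x ∂μ.restrict Ω, w.1 x = 0 → ∇ w.1 x = 0 := by
  have hzero : MeasurableSet {x | w.1 x = 0} :=
    ((isClosed_singleton (x := (0 : ℝ))).preimage (dirichletSpace.continuous w)).measurableSet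
  have h := ae_fderiv_eq_zero_of_eqOn_zero μ (f := w.1)
    (Ω.isOpen.measurableSet.inter hzero)
    (fun x hx => dirichletSpace.differentiableAt w hx.1) fun x hx => hx.2
  rw [ae_restrict_iff' (Ω.isOpen.measurableSet.inter hzero)] at h
  rw [ae_restrict_iff' Ω.isOpen.measurableSet]
  filter_upwards [h] with x hx hxΩ hx0
  rw [gradient, hx ⟨hxΩ, hx0⟩, map_zero]

theorem tendsto_gradient_truncate :
    ∀ᵐ x ∂μ.restrict Ω, Tendsto (fun n => ∇ (truncate n w).1 x) atTop (𝓝 (∇ w.1 x)) := by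
  filter_upwards [ae_gradient_eq_zero_of_eq_zero w, ae_restrict_mem Ω.isOpen.measurableSet]
    with x hx hxΩ
  simp only [gradient_truncate _ w hxΩ]
  by_cases hx0 : w.1 x = 0
  · simp [hx hx0]
  · simpa using (isCutoffSeq_zeroCutoff.tendsto_one _ hx0).smul_const (∇ w.1 x)

theorem tendsto_gradientLp_truncate :
    Tendsto (fun n => gradientLp Ω μ (truncate n w)) atTop (𝓝 (gradientLp Ω μ w)) := by
  refine tendsto_toLp_of_norm_le ENNReal.ofNat_ne_top (dirichletSpace.memLp_gradient w)
    (fun n => dirichletSpace.memLp_gradient (truncate n w)) (fun n => ?_)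
    (tendsto_gradient_truncate w)
  refine ae_restrict_of_forall_mem Ω.isOpen.measurableSet fun x hx => ?_
  rw [gradient_truncate n w hx, norm_smul]
  exact mul_le_of_le_one_left (norm_nonneg _) (isCutoffSeq_zeroCutoff.norm_le_one n _)

theorem tendsto_shiftedForm_truncate (c : ℝ) :
    Tendsto (fun n => shiftedForm Ω μ c (truncate n w) (truncate n z)) atTop
      (𝓝 (shiftedForm Ω μ c w z)) :=
  tendsto_shiftedForm w z c (tendsto_valueLp_truncate w) (tendsto_gradientLp_truncate w)
    (tendsto_valueLp_truncate z) (tendsto_gradientLp_truncate z)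

end TruncationLimit

section Variational

open Matrix TopologicalSpace

theorem eventually_forall_dotProduct_mulVec_neg {ι : Type*} [Fintype ι] {A : Matrix ι ι ℝ}
    (hA : ∀ a ≠ 0, a ⬝ᵥ A *ᵥ a < 0) : ∀ᶠ B in 𝓝 A, ∀ a ≠ 0, a ⬝ᵥ B *ᵥ a < 0 := by
  have hsphere : ∀ᶠ B in 𝓝 A, ∀ a ∈ Metric.sphere (0 : ι → ℝ) 1, a ⬝ᵥ B *ᵥ a < 0 := by
    refine (isCompact_sphere _ _).eventually_forall_of_forall_eventually fun a ha => ?_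
    have hcont : Continuous fun p : Matrix ι ι ℝ × (ι → ℝ) => p.2 ⬝ᵥ p.1 *ᵥ p.2 := by fun_prop
    exact (hcont.tendsto (A, a)).eventually_lt_const (hA a (ne_zero_of_mem_unit_sphere ⟨a, ha⟩))
  filter_upwards [hsphere] with B hB a ha
  have hunit := hB (‖a‖⁻¹ • a) (by simp [norm_smul, ha])
  rw [mulVec_smul, smul_dotProduct, dotProduct_smul, smul_smul, smul_eq_mul] at hunit
  exact (pos_iff_neg_of_mul_neg hunit).1 (by positivity)

theorem bilinForm_linearCombination_self {V ι : Type*} [AddCommGroup V] [Module ℝ V] [Fintype ι]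
    (B : LinearMap.BilinForm ℝ V) (b : ι → V) (a : ι → ℝ) :
    B (Fintype.linearCombination ℝ b a) (Fintype.linearCombination ℝ b a) =
      a ⬝ᵥ (of fun i j => B (b i) (b j)) *ᵥ a := by
  simp only [Fintype.linearCombination_apply, map_sum, map_smul, LinearMap.sum_apply,
    LinearMap.smul_apply, dotProduct, mulVec, of_apply, smul_eq_mul, Finset.mul_sum]
  rw [Finset.sum_comm]
  exact Finset.sum_congr rfl fun i _ => Finset.sum_congr rfl fun j _ => by ring

variable {N : ℕ} {Ω : Opens (EuclideanSpace ℝ (Fin N))} {c : ℝ}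

theorem dRayleigh_eq (w : dirichletSpace Ω volume) : dRayleigh Ω w.1 =
    ENNReal.ofReal (energyForm Ω volume w w) / ENNReal.ofReal (massForm Ω volume w w) := by
  rw [dRayleigh, lintegral_sq_eq_massForm, lintegral_norm_fderiv_sq_eq_energyForm]

theorem dRayleigh_le_ofReal {w : dirichletSpace Ω volume} (hw : shiftedForm Ω volume c w w ≤ 0) :
    dRayleigh Ω w.1 ≤ ENNReal.ofReal c := by
  rw [dRayleigh_eq]
  refine ENNReal.div_le_of_le_mul ?_
  rw [← ENNReal.ofReal_mul' (massForm_self_nonneg w)]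
  exact ENNReal.ofReal_le_ofReal (sub_nonpos.1 hw)

theorem dirEV_le_ofReal_of_contDiff {k : ℕ} {b : Fin k → dirichletSpace Ω volume}
    (hb : ∀ i, ContDiff ℝ 1 (b i).1) (hbΩ : ∀ i, tsupport (b i).1 ⊆ Ω)
    (hneg : ∀ a ≠ 0, a ⬝ᵥ (of fun i j => shiftedForm Ω volume c (b i) (b j)) *ᵥ a < 0) :
    dirEV (N := N) Ω k ≤ ENNReal.ofReal c := by
  simp only [← bilinForm_linearCombination_self] at hneg
  set f := Fintype.linearCombination ℝ b
  have hf : Function.Injective f := by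
    refine (injective_iff_map_eq_zero f).2 fun a ha => by_contra fun ha0 => (hneg a ha0).ne ?_
    rw [ha, map_zero]
  have hcoe (a : Fin k → ℝ) : (f a).1 = fun x => ∑ i, a i * (b i).1 x := by
    ext x
    simp [f, Fintype.linearCombination_apply]
  refine iInf₂_le_of_le ((dirichletSpace Ω volume).subtype ∘ₗ f).range ⟨?_, ?_⟩ (iSup₂_le ?_)
  · rw [LinearMap.finrank_range_of_inj (Subtype.val_injective.comp hf :), Module.finrank_fin_fun]
  · rintro _ ⟨a, rfl⟩
    rw [LinearMap.comp_apply, Submodule.subtype_apply, hcoe]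
    refine ⟨by fun_prop, (closure_minimal (fun x hx => ?_)
      (isClosed_iUnion_of_finite fun i => isClosed_tsupport (b i).1)).trans (iUnion_subset hbΩ)⟩
    obtain ⟨i, -, hi⟩ := Finset.exists_ne_zero_of_sum_ne_zero hx
    exact mem_iUnion.2 ⟨i, subset_tsupport _ (right_ne_zero_of_mul hi)⟩
  · rintro _ ⟨⟨a, rfl⟩, ha⟩
    exact dRayleigh_le_ofReal (hneg a fun h => ha (by simp [h])).le

theorem dirEV_le_ofReal {k : ℕ} {b : Fin k → dirichletSpace Ω volume}
    (hneg : ∀ a ≠ 0, a ⬝ᵥ (of fun i j => shiftedForm Ω volume c (b i) (b j)) *ᵥ a < 0) :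
    dirEV (N := N) Ω k ≤ ENNReal.ofReal c := by
  have hlim : Tendsto (fun n => of fun i j =>
      shiftedForm Ω volume c (truncate n (b i)) (truncate n (b j))) atTop
      (𝓝 (of fun i j => shiftedForm Ω volume c (b i) (b j))) :=
    tendsto_pi_nhds.2 fun i => tendsto_pi_nhds.2 fun j => tendsto_shiftedForm_truncate _ _ c
  obtain ⟨n, hn⟩ := (hlim.eventually (eventually_forall_dotProduct_mulVec_neg hneg)).exists
  exact dirEV_le_ofReal_of_contDiff (fun i => contDiff_truncate n (b i))
    (fun i => tsupport_truncate_subset n (b i)) hn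

theorem dirEV_one_le_ofReal {w : dirichletSpace Ω volume} (hw : shiftedForm Ω volume c w w < 0) :
    dirEV (N := N) Ω 1 ≤ ENNReal.ofReal c := by
  refine dirEV_le_ofReal (b := fun _ => w) fun a ha => ?_
  have ha0 : a 0 ≠ 0 := fun h => ha (funext fun i => by rwa [Subsingleton.elim i 0])
  simp only [dotProduct, mulVec, of_apply, Finset.univ_unique, Fin.default_eq_zero,
    Finset.sum_singleton]
  nlinarith [mul_neg_of_neg_of_pos hw (sq_pos_of_ne_zero ha0)]

theorem dirEV_two_le_ofReal_of_orthogonal {w z : dirichletSpace Ω volume}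
    (hw : shiftedForm Ω volume c w w < 0) (hz : shiftedForm Ω volume c z z < 0)
    (hwz : shiftedForm Ω volume c w z = 0) : dirEV (N := N) Ω 2 ≤ ENNReal.ofReal c := by
  refine dirEV_le_ofReal (b := ![w, z]) fun a ha => ?_
  have hzw : shiftedForm Ω volume c z w = 0 := by rw [shiftedForm_comm, hwz]
  have heq : a ⬝ᵥ (of fun i j => shiftedForm Ω volume c (![w, z] i) (![w, z] j)) *ᵥ a =
      a 0 ^ 2 * shiftedForm Ω volume c w w + a 1 ^ 2 * shiftedForm Ω volume c z z := by
    simp only [dotProduct, mulVec, of_apply, Fin.sum_univ_two, cons_val_zero, cons_val_one, hwz,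
      hzw]
    ring
  rw [heq]
  by_cases ha0 : a 0 = 0
  · have ha1 : a 1 ≠ 0 := fun ha1 => ha (by ext i; fin_cases i <;> simpa)
    rw [ha0, zero_pow two_ne_zero, zero_mul, zero_add]
    exact mul_neg_of_pos_of_neg (sq_pos_of_ne_zero ha1) hz
  · exact add_neg_of_neg_of_nonpos (mul_neg_of_pos_of_neg (sq_pos_of_ne_zero ha0) hw)
      (mul_nonpos_of_nonneg_of_nonpos (sq_nonneg _) hz.le)

theorem shiftedForm_self_nonneg (hc : ENNReal.ofReal c ≤ dirEV (N := N) Ω 1)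
    (w : dirichletSpace Ω volume) : 0 ≤ shiftedForm Ω volume c w w := by
  by_contra! hneg
  have hlt : energyForm Ω volume w w < c * massForm Ω volume w w := sub_neg.1 hneg
  have hcm : 0 < c * massForm Ω volume w w := (energyForm_self_nonneg w).trans_lt hlt
  have hm : 0 < massForm Ω volume w w :=
    (massForm_self_nonneg w).lt_of_ne' (right_ne_zero_of_mul hcm.ne')
  obtain ⟨d, hd, hdc⟩ := exists_between ((div_lt_iff₀ hm).2 hlt)
  have hdw : shiftedForm Ω volume d w w < 0 := sub_neg.2 ((div_lt_iff₀ hm).1 hd)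
  exact (hc.trans (dirEV_one_le_ofReal hdw)).not_gt
    ((ENNReal.ofReal_lt_ofReal_iff (pos_of_mul_pos_left hcm hm.le)).2 hdc)

variable {u w : dirichletSpace Ω volume}

theorem shiftedForm_eq_zero_of_self_eq_zero (hc : ENNReal.ofReal c ≤ dirEV (N := N) Ω 1)
    (hu : shiftedForm Ω volume c u u = 0) (z : dirichletSpace Ω volume) :
    shiftedForm Ω volume c u z = 0 := by
  have h := (shiftedForm Ω volume c).apply_sq_le_of_symm (shiftedForm_self_nonneg hc)
    ⟨fun x y => shiftedForm_comm x y c⟩ u z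
  rw [hu, zero_mul] at h
  exact pow_eq_zero_iff two_ne_zero |>.1 (h.antisymm (sq_nonneg _))

theorem dirEV_two_le_ofReal {l : ℝ} (hlc : l < c) (hu : ∀ z, shiftedForm Ω volume l u z = 0)
    (hu1 : massForm Ω volume u u = 1)
    (hw : shiftedForm Ω volume l w w <
      (c - l) * (massForm Ω volume w w - massForm Ω volume u w ^ 2)) :
    dirEV (N := N) Ω 2 ≤ ENNReal.ofReal c := by
  have hshift (x y : dirichletSpace Ω volume) : shiftedForm Ω volume c x y =
      shiftedForm Ω volume l x y - (c - l) * massForm Ω volume x y := by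
    simp only [shiftedForm_apply]
    ring
  have hwu : shiftedForm Ω volume l w u = 0 := by rw [shiftedForm_comm, hu]
  refine dirEV_two_le_ofReal_of_orthogonal (w := u) (z := w - massForm Ω volume u w • u) ?_ ?_ ?_
  · simpa [hshift, hu, hu1] using hlc
  · simp only [map_sub, map_smul, LinearMap.sub_apply, LinearMap.smul_apply, smul_eq_mul, hshift,
      hu, hwu, hu1, massForm_comm w u]
    linarith
  · simp [hshift, hu, hu1]

end Variational

section LowerBound

open InnerProductSpace Gradient TopologicalSpace

variable {E : Type*} [NormedAddCommGroup E] [InnerProductSpace ℝ E] [CompleteSpace E]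
  [MeasurableSpace E] [OpensMeasurableSpace E] {Ω : Opens E} {μ : Measure E}
  {u : dirichletSpace Ω μ} {v : E → ℝ}

theorem smul_gradient_primitive_comp {χ : ℝ → ℝ} (hχ : Continuous χ)
    (hv : ContDiffOn ℝ 1 v Ω) {x : E} (hx : x ∈ Ω) :
    u.1 x • ∇ (fun y => primitive χ (v y)) x = χ (v x) • u.1 x • ∇ v x := by
  rw [gradient_fun_comp (hasDerivAt_primitive hχ _)
    (differentiableAt_of_contDiffOn_of_isOpen hv Ω.isOpen hx), smul_comm]

theorem primitive_comp_mul_mem_dirichletSpace {χ : ℝ → ℝ} (hχ : Continuous χ)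
    (hχ1 : ∀ t, ‖χ t‖ ≤ 1) (hχi : Integrable χ) (hv : ContDiffOn ℝ 1 v Ω)
    (huv : MemLp (fun x => u.1 x • ∇ v x) 2 (μ.restrict Ω)) :
    (fun x => primitive χ (v x) * u.1 x) ∈ dirichletSpace Ω μ := by
  refine mul_mem_dirichletSpace u ((contDiff_primitive hχ).comp_contDiffOn hv)
    (fun x _ => norm_primitive_le_integral_norm hχi (v x)) ?_
  refine (memLp_smul_of_norm_le Ω.isOpen.measurableSet (hχ.comp_continuousOn hv.continuousOn)
    (fun x _ => hχ1 (v x)) huv).ae_eq ?_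
  refine ae_restrict_of_forall_mem Ω.isOpen.measurableSet fun x hx => ?_
  exact (smul_gradient_primitive_comp hχ hv hx).symm

/-- The approximation of `v u` by elements of the Dirichlet space obtained by truncating `v` at
large values. -/
def truncatedMul (hv : ContDiffOn ℝ 1 v Ω)
    (huv : MemLp (fun x => u.1 x • ∇ v x) 2 (μ.restrict Ω)) (n : ℕ) : dirichletSpace Ω μ :=
  ⟨_, primitive_comp_mul_mem_dirichletSpace (isCutoffSeq_gaussianCutoff.continuous n)
    (isCutoffSeq_gaussianCutoff.norm_le_one n) (integrable_gaussianCutoff n) hv huv⟩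

theorem shiftedForm_truncatedMul_le {l : ℝ} (hu : ∀ z, shiftedForm Ω μ l u z = 0)
    (hv : ContDiffOn ℝ 1 v Ω) (huv : MemLp (fun x => u.1 x • ∇ v x) 2 (μ.restrict Ω)) (n : ℕ) :
    shiftedForm Ω μ l (truncatedMul hv huv n) (truncatedMul hv huv n) ≤
      ∫ x in Ω, ‖u.1 x • ∇ v x‖ ^ 2 ∂μ := by
  have hχ := isCutoffSeq_gaussianCutoff.continuous n
  rw [shiftedForm_self_of_eq_mul hu ((contDiff_primitive hχ).comp_contDiffOn hv)
    (fun x _ => norm_primitive_le_integral_norm (integrable_gaussianCutoff n) (v x))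
    fun x _ => rfl]
  refine integral_mono_of_nonneg (ae_of_all _ fun x => sq_nonneg _)
    (huv.integrable_norm_pow two_ne_zero)
    (ae_restrict_of_forall_mem Ω.isOpen.measurableSet fun x hx => ?_)
  simp only [Function.comp_def, smul_gradient_primitive_comp hχ hv hx]
  rw [norm_smul]
  gcongr
  exact mul_le_of_le_one_left (norm_nonneg _) (isCutoffSeq_gaussianCutoff.norm_le_one n _)

theorem tendsto_valueLp_truncatedMul (hv : ContDiffOn ℝ 1 v Ω)
    (huv : MemLp (fun x => u.1 x • ∇ v x) 2 (μ.restrict Ω))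
    (hvu : MemLp (fun x => v x * u.1 x) 2 (μ.restrict Ω)) :
    Tendsto (fun n => valueLp Ω μ (truncatedMul hv huv n)) atTop (𝓝 hvu.toLp) := by
  refine tendsto_toLp_of_norm_le ENNReal.ofNat_ne_top hvu
    (fun n => dirichletSpace.memLp (truncatedMul hv huv n)) (fun n => ae_of_all _ fun x => ?_)
    (ae_of_all _ fun x => (isCutoffSeq_gaussianCutoff.tendsto_primitive (v x)).mul_const (u.1 x))
  simp only [truncatedMul, norm_mul]
  gcongr
  exact norm_primitive_le (isCutoffSeq_gaussianCutoff.norm_le_one n) _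

theorem exists_shiftedForm_lt {l c : ℝ} (hu : ∀ z, shiftedForm Ω μ l u z = 0)
    (hv : ContDiffOn ℝ 1 v Ω) (huv : MemLp (fun x => u.1 x • ∇ v x) 2 (μ.restrict Ω))
    (hvu : MemLp (fun x => v x * u.1 x) 2 (μ.restrict Ω))
    (hmean : ∫ x in Ω, v x * u.1 x ^ 2 ∂μ = 0)
    (hlt : ∫ x in Ω, ‖u.1 x • ∇ v x‖ ^ 2 ∂μ < (c - l) * ∫ x in Ω, ‖v x * u.1 x‖ ^ 2 ∂μ) :
    ∃ w, shiftedForm Ω μ l w w <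
      (c - l) * (massForm Ω μ w w - massForm Ω μ u w ^ 2) := by
  set wn := truncatedMul hv huv
  have hlim := tendsto_valueLp_truncatedMul hv huv hvu
  have hmass : Tendsto (fun n => massForm Ω μ (wn n) (wn n)) atTop
      (𝓝 (∫ x in Ω, ‖v x * u.1 x‖ ^ 2 ∂μ)) := by
    have hinner : inner ℝ (hvu.toLp _) (hvu.toLp _) = ∫ x in Ω, ‖v x * u.1 x‖ ^ 2 ∂μ :=
      (inner_toLp_eq_integral hvu hvu).trans (by simp only [real_inner_self_eq_norm_sq])
    exact hinner ▸ hlim.inner hlim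
  have horth : Tendsto (fun n => massForm Ω μ u (wn n)) atTop (𝓝 0) := by
    rw [← hmean]
    have hinner : inner ℝ (valueLp Ω μ u) hvu.toLp =
        ∫ x in Ω, v x * u.1 x ^ 2 ∂μ :=
      (inner_toLp_eq_integral (dirichletSpace.memLp u) hvu).trans (by simp [mul_assoc, sq])
    exact hinner ▸ tendsto_const_nhds.inner hlim
  have hright := (hmass.sub (horth.pow 2)).const_mul (c - l)
  rw [zero_pow two_ne_zero, sub_zero] at hright
  obtain ⟨n, hn⟩ := (hright.eventually_const_lt hlt).exists
  exact ⟨wn n, (shiftedForm_truncatedMul_le hu hv huv n).trans_lt hn⟩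

end LowerBound

section WeightedRayleigh

open InnerProductSpace Gradient TopologicalSpace

variable {N : ℕ} {Ω : Opens (EuclideanSpace ℝ (Fin N))} {u : dirichletSpace Ω volume}
  {l : ℝ} {v : EuclideanSpace ℝ (Fin N) → ℝ}

theorem le_ofReal_of_forall_lt {a : ℝ≥0∞} {r : ℝ} (h : ∀ c, r < c → a ≤ ENNReal.ofReal c) :
    a ≤ ENNReal.ofReal r :=
  ge_of_tendsto (ENNReal.continuous_ofReal.continuousWithinAt (s := Ioi r))
    (eventually_mem_nhdsWithin.mono h)

theorem lintegral_sq_mul_sq (u v : EuclideanSpace ℝ (Fin N) → ℝ) :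
    ∫⁻ x in Ω, ENNReal.ofReal (v x ^ 2 * u x ^ 2) =
      ∫⁻ x in Ω, ENNReal.ofReal (‖v x * u x‖ ^ 2) := by
  simp only [norm_eq_abs, sq_abs, mul_pow]

theorem lintegral_norm_fderiv_sq_mul_sq (u v : EuclideanSpace ℝ (Fin N) → ℝ) :
    ∫⁻ x in Ω, ENNReal.ofReal (‖fderiv ℝ v x‖ ^ 2 * u x ^ 2) =
      ∫⁻ x in Ω, ENNReal.ofReal (‖u x • ∇ v x‖ ^ 2) := by
  simp only [norm_smul, norm_gradient, mul_pow, norm_eq_abs, sq_abs, mul_comm]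

theorem dirEV_two_le_wRayleigh_add (hu : ∀ z, shiftedForm Ω volume l u z = 0)
    (hu1 : massForm Ω volume u u = 1) (hv : wAdm Ω (fun x => u.1 x ^ 2) v) :
    dirEV (N := N) Ω 2 ≤ wRayleigh Ω (fun x => u.1 x ^ 2) v + ENNReal.ofReal l := by
  obtain ⟨hvd, hmass0, hmass, hmean⟩ := hv
  rw [lintegral_sq_mul_sq] at hmass0 hmass
  rw [wRayleigh, lintegral_norm_fderiv_sq_mul_sq, lintegral_sq_mul_sq u.1 v]
  by_cases henergy : ∫⁻ x in Ω, ENNReal.ofReal (‖u.1 x • ∇ v x‖ ^ 2) = ∞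
  · rw [henergy, ENNReal.top_div_of_ne_top hmass, top_add]
    exact le_top
  have hucont := (dirichletSpace.continuous u).continuousOn (s := Ω)
  have hvu : MemLp (fun x => v x * u.1 x) 2 (volume.restrict Ω) :=
    memLp_two_of_lintegral_ne_top
      ((hvd.continuousOn.mul hucont).aestronglyMeasurable Ω.isOpen.measurableSet) hmass
  have huv : MemLp (fun x => u.1 x • ∇ v x) 2 (volume.restrict Ω) :=
    memLp_two_of_lintegral_ne_top
      ((hucont.smul (continuousOn_gradient_of_isOpen hvd Ω.isOpen)).aestronglyMeasurable
        Ω.isOpen.measurableSet) henergy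
  rw [lintegral_ofReal_norm_sq_of_memLp hvu] at hmass0 ⊢
  have hm := ENNReal.ofReal_pos.1 hmass0.bot_lt
  rw [lintegral_ofReal_norm_sq_of_memLp huv, ← ENNReal.ofReal_div_of_pos hm]
  refine le_trans ?_ ENNReal.ofReal_add_le
  refine le_ofReal_of_forall_lt fun c hc => ?_
  have hlt := (div_lt_iff₀ hm).1 (lt_sub_iff_add_lt.2 hc)
  obtain ⟨w, hw⟩ := exists_shiftedForm_lt hu hvd huv hvu hmean hlt
  refine dirEV_two_le_ofReal (sub_pos.1 (pos_of_mul_pos_left ?_ hm.le)) hu hu1 hw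
  exact (integral_nonneg fun x => sq_nonneg _).trans_lt hlt

end WeightedRayleigh

section UpperBound

open InnerProductSpace Gradient TopologicalSpace

variable {E : Type*} [NormedAddCommGroup E] [InnerProductSpace ℝ E] [FiniteDimensional ℝ E]
  [MeasurableSpace E] [BorelSpace E] {Ω : Opens E} {μ : Measure E}
  {u : dirichletSpace Ω μ}

theorem exists_norm_truncate_div_le (hΩ : IsBounded (Ω : Set E)) (hu0 : ∀ x ∈ Ω, u.1 x ≠ 0)
    (n : ℕ) (w : dirichletSpace Ω μ) : ∃ M, ∀ x ∈ Ω, ‖(truncate n w).1 x / u.1 x‖ ≤ M := by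
  have hK : IsCompact {x | 1 ≤ n * |w.1 x|} :=
    Metric.isCompact_of_isClosed_isBounded (isClosed_one_le_mul_abs n w)
      (hΩ.subset (one_le_mul_abs_subset n w))
  obtain ⟨M, hM⟩ := hK.exists_bound_of_continuousOn (f := fun x => (truncate n w).1 x / u.1 x)
    ((dirichletSpace.continuous _).continuousOn.div (dirichletSpace.continuous u).continuousOn
      fun x hx => hu0 x (one_le_mul_abs_subset n w hx))
  refine ⟨max M 0, fun x _ => ?_⟩
  by_cases hx : 1 ≤ n * |w.1 x|
  · exact (hM x hx).trans (le_max_left _ _)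
  · simp [truncate_eq_zero n w hx]

theorem lintegral_smul_gradient_truncate_div {l : ℝ} (hΩ : IsBounded (Ω : Set E))
    (hu0 : ∀ x ∈ Ω, u.1 x ≠ 0) (hu : ∀ z, shiftedForm Ω μ l u z = 0) (n : ℕ)
    (w : dirichletSpace Ω μ) :
    ∫⁻ x in Ω, ENNReal.ofReal (‖u.1 x • ∇ (fun y => (truncate n w).1 y / u.1 y) x‖ ^ 2) ∂μ =
      ENNReal.ofReal (shiftedForm Ω μ l (truncate n w) (truncate n w)) := by
  obtain ⟨M, hM⟩ := exists_norm_truncate_div_le hΩ hu0 n w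
  have hdiv := (dirichletSpace.contDiffOn (truncate n w)).div (dirichletSpace.contDiffOn u) hu0
  have hmul : ∀ x ∈ Ω, (truncate n w).1 x = (truncate n w).1 x / u.1 x * u.1 x :=
    fun x hx => (div_mul_cancel₀ _ (hu0 x hx)).symm
  rw [shiftedForm_self_of_eq_mul hu hdiv hM hmul]
  exact lintegral_ofReal_norm_sq_of_memLp (memLp_smul_gradient_of_eq_mul hdiv hM hmul)

theorem tendsto_smul_gradient_truncate_div [μ.IsAddHaarMeasure] (hu0 : ∀ x ∈ Ω, u.1 x ≠ 0)
    (w : dirichletSpace Ω μ) : ∀ᵐ x ∂μ.restrict Ω,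
      Tendsto (fun n => u.1 x • ∇ (fun y => (truncate n w).1 y / u.1 y) x) atTop
        (𝓝 (u.1 x • ∇ (fun y => w.1 y / u.1 y) x)) := by
  filter_upwards [tendsto_gradient_truncate w, ae_restrict_mem Ω.isOpen.measurableSet]
    with x hx hxΩ
  have hquot (z : dirichletSpace Ω μ) := smul_gradient_fun_div
    (dirichletSpace.differentiableAt z hxΩ) (dirichletSpace.differentiableAt u hxΩ) (hu0 x hxΩ)
  simp only [hquot]
  exact hx.sub (((tendsto_truncate w x).div_const _).smul_const _)

theorem lintegral_smul_gradient_div_le [μ.IsAddHaarMeasure] {l : ℝ} (hΩ : IsBounded (Ω : Set E))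
    (hu0 : ∀ x ∈ Ω, u.1 x ≠ 0) (hu : ∀ z, shiftedForm Ω μ l u z = 0)
    (w : dirichletSpace Ω μ) :
    ∫⁻ x in Ω, ENNReal.ofReal (‖u.1 x • ∇ (fun y => w.1 y / u.1 y) x‖ ^ 2) ∂μ ≤
      ENNReal.ofReal (shiftedForm Ω μ l w w) := by
  refine lintegral_ofReal_norm_sq_le_of_tendsto (fun n => ?_)
    (tendsto_smul_gradient_truncate_div hu0 w) ?_
  · have hdiv := (dirichletSpace.contDiffOn (truncate n w)).div (dirichletSpace.contDiffOn u) hu0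
    exact ((dirichletSpace.continuous u).continuousOn.smul
      (continuousOn_gradient_of_isOpen hdiv Ω.isOpen)).aestronglyMeasurable
        Ω.isOpen.measurableSet
  · simpa only [lintegral_smul_gradient_truncate_div hΩ hu0 hu] using
      ENNReal.tendsto_ofReal (tendsto_shiftedForm_truncate w w l)

end UpperBound

section Eigenfunctions

open TopologicalSpace

variable {N : ℕ} {Ω : Opens (EuclideanSpace ℝ (Fin N))}

theorem IsFirstDirichletEF.mem_dirichletSpace {u : EuclideanSpace ℝ (Fin N) → ℝ}
    (h : IsFirstDirichletEF Ω u) : u ∈ dirichletSpace Ω volume := by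
  obtain ⟨hc, h0, hd, henergy, -, hmass, -⟩ := h
  exact mem_dirichletSpace_of_lintegral_ne_top hc h0 hd (hmass ▸ ENNReal.one_ne_top) henergy

theorem IsSecondDirichletEF.mem_dirichletSpace {u w : EuclideanSpace ℝ (Fin N) → ℝ}
    (h : IsSecondDirichletEF Ω u w) : w ∈ dirichletSpace Ω volume := by
  obtain ⟨hc, h0, hd, henergy, -, hmass, -⟩ := h
  exact mem_dirichletSpace_of_lintegral_ne_top hc h0 hd (hmass ▸ ENNReal.one_ne_top) henergy

variable {u w : dirichletSpace Ω volume}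

theorem massForm_self_eq_one (h : ∫⁻ x in Ω, ENNReal.ofReal (w.1 x ^ 2) = 1) :
    massForm Ω volume w w = 1 := by
  rwa [lintegral_sq_eq_massForm, ENNReal.ofReal_eq_one] at h

theorem dRayleigh_eq_energyForm (h : massForm Ω volume w w = 1) :
    dRayleigh Ω w.1 = ENNReal.ofReal (energyForm Ω volume w w) := by
  rw [dRayleigh_eq, h, ENNReal.ofReal_one, div_one]

theorem IsFirstDirichletEF.massForm_self (h : IsFirstDirichletEF Ω u.1) :
    massForm Ω volume u u = 1 :=
  massForm_self_eq_one h.2.2.2.2.2.1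

theorem IsFirstDirichletEF.dirEV_one_eq (h : IsFirstDirichletEF Ω u.1) :
    dirEV (N := N) Ω 1 = ENNReal.ofReal (energyForm Ω volume u u) :=
  h.2.2.2.2.2.2.symm.trans (dRayleigh_eq_energyForm h.massForm_self)

theorem IsFirstDirichletEF.shiftedForm_eq_zero (h : IsFirstDirichletEF Ω u.1)
    (z : dirichletSpace Ω volume) : shiftedForm Ω volume (energyForm Ω volume u u) u z = 0 :=
  shiftedForm_eq_zero_of_self_eq_zero h.dirEV_one_eq.ge
    (by rw [shiftedForm_apply, h.massForm_self, mul_one, sub_self]) z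

theorem IsSecondDirichletEF.massForm_self (h : IsSecondDirichletEF Ω u.1 w.1) :
    massForm Ω volume w w = 1 :=
  massForm_self_eq_one h.2.2.2.2.2.1

theorem IsSecondDirichletEF.dirEV_two_eq (h : IsSecondDirichletEF Ω u.1 w.1) :
    dirEV (N := N) Ω 2 = ENNReal.ofReal (energyForm Ω volume w w) :=
  h.2.2.2.2.2.2.symm.trans (dRayleigh_eq_energyForm h.massForm_self)

theorem IsSecondDirichletEF.massForm_eq_zero (h : IsSecondDirichletEF Ω u.1 w.1) :
    massForm Ω volume u w = 0 :=
  (massForm_eq_integral u w).trans h.2.2.2.2.1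

theorem ofReal_shiftedForm_eq_dirEV_sub (hu : IsFirstDirichletEF Ω u.1)
    (hw : IsSecondDirichletEF Ω u.1 w.1) :
    ENNReal.ofReal (shiftedForm Ω volume (energyForm Ω volume u u) w w) =
      dirEV (N := N) Ω 2 - dirEV (N := N) Ω 1 := by
  rw [shiftedForm_apply, hw.massForm_self, mul_one, ENNReal.ofReal_sub _ (energyForm_self_nonneg u),
    hu.dirEV_one_eq, hw.dirEV_two_eq]

theorem dirEV_one_le_dirEV_two (hu : IsFirstDirichletEF Ω u.1)
    (hw : IsSecondDirichletEF Ω u.1 w.1) : dirEV (N := N) Ω 1 ≤ dirEV (N := N) Ω 2 := by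
  have hnonneg := shiftedForm_self_nonneg hu.dirEV_one_eq.ge w
  rw [shiftedForm_apply, hw.massForm_self, mul_one, sub_nonneg] at hnonneg
  rw [hu.dirEV_one_eq, hw.dirEV_two_eq]
  exact ENNReal.ofReal_le_ofReal hnonneg

end Eigenfunctions

section Quotient

open InnerProductSpace Gradient TopologicalSpace

variable {N : ℕ} {Ω : Opens (EuclideanSpace ℝ (Fin N))} {u w : dirichletSpace Ω volume}

theorem lintegral_div_sq_mul_sq (hu0 : ∀ x ∈ Ω, u.1 x ≠ 0) :
    ∫⁻ x in Ω, ENNReal.ofReal ((w.1 x / u.1 x) ^ 2 * u.1 x ^ 2) =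
      ENNReal.ofReal (massForm Ω volume w w) := by
  rw [← lintegral_sq_eq_massForm]
  refine setLIntegral_congr_fun Ω.isOpen.measurableSet fun x hx => ?_
  simp only [← mul_pow, div_mul_cancel₀ _ (hu0 x hx)]

theorem wAdm_div (hu0 : ∀ x ∈ Ω, u.1 x ≠ 0) (hw : massForm Ω volume w w ≠ 0)
    (huw : massForm Ω volume u w = 0) :
    wAdm (N := N) Ω (fun x => u.1 x ^ 2) (fun x => w.1 x / u.1 x) := by
  have hmass := lintegral_div_sq_mul_sq (w := w) hu0
  refine ⟨(dirichletSpace.contDiffOn w).div (dirichletSpace.contDiffOn u) hu0, ?_, ?_, ?_⟩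
  · rw [hmass]
    exact (ENNReal.ofReal_pos.2 ((massForm_self_nonneg w).lt_of_ne' hw)).ne'
  · exact hmass ▸ ENNReal.ofReal_ne_top
  · rw [← huw, massForm_eq_integral]
    refine setIntegral_congr_fun Ω.isOpen.measurableSet fun x hx => ?_
    have hux := hu0 x hx
    field_simp

theorem wRayleigh_div_le {l : ℝ} (hΩ : IsBounded (Ω : Set (EuclideanSpace ℝ (Fin N))))
    (hu0 : ∀ x ∈ Ω, u.1 x ≠ 0) (hu : ∀ z, shiftedForm Ω volume l u z = 0)
    (hw1 : massForm Ω volume w w = 1) :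
    wRayleigh (N := N) Ω (fun x => u.1 x ^ 2) (fun x => w.1 x / u.1 x) ≤
      ENNReal.ofReal (shiftedForm Ω volume l w w) := by
  rw [wRayleigh, lintegral_div_sq_mul_sq hu0, hw1, ENNReal.ofReal_one, div_one,
    lintegral_norm_fderiv_sq_mul_sq]
  exact lintegral_smul_gradient_div_le hΩ hu0 hu w

end Quotient

theorem weighted_neumann_eq_gap_general {N : ℕ} {Ω : Set (EuclideanSpace ℝ (Fin N))}
    (hΩ : IsOpen Ω) (hb : IsBounded Ω) {u1 u2 : EuclideanSpace ℝ (Fin N) → ℝ}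
    (h1 : IsFirstDirichletEF Ω u1) (h2 : IsSecondDirichletEF Ω u1 u2) :
    wEV Ω (fun x => (u1 x) ^ 2) + dirEV Ω 1 = dirEV Ω 2 ∧
      wAdm Ω (fun x => (u1 x) ^ 2) (fun x => u2 x / u1 x) ∧
      wRayleigh Ω (fun x => (u1 x) ^ 2) (fun x => u2 x / u1 x) =
        wEV Ω (fun x => (u1 x) ^ 2) := by
  lift Ω to TopologicalSpace.Opens (EuclideanSpace ℝ (Fin N)) using hΩ
  lift u1 to dirichletSpace Ω volume using h1.mem_dirichletSpace
  lift u2 to dirichletSpace Ω volume using h2.mem_dirichletSpace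
  have hu0 : ∀ x ∈ Ω, u1.1 x ≠ 0 := fun x hx => (h1.2.2.2.2.1 x hx).ne'
  have hadm := wAdm_div hu0 (h2.massForm_self ▸ one_ne_zero) h2.massForm_eq_zero
  have hupper := wRayleigh_div_le hb hu0 h1.shiftedForm_eq_zero h2.massForm_self
  rw [ofReal_shiftedForm_eq_dirEV_sub h1 h2] at hupper
  have hlower : dirEV (N := N) Ω 2 - dirEV (N := N) Ω 1 ≤ wEV (N := N) Ω fun x => u1.1 x ^ 2 := by
    refine le_iInf₂ fun v hv => tsub_le_iff_right.2 ?_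
    rw [h1.dirEV_one_eq]
    exact dirEV_two_le_wRayleigh_add h1.shiftedForm_eq_zero h1.massForm_self hv
  have hwEV : wEV (N := N) Ω _ ≤ wRayleigh (N := N) Ω _ _ := iInf₂_le _ hadm
  refine ⟨?_, hadm, (hupper.trans hlower).antisymm hwEV⟩
  rw [(hwEV.trans hupper).antisymm hlower]
  exact tsub_add_cancel_of_le (dirEV_one_le_dirEV_two h1 h2)

/-- Proposition 7.1 / `p:yau`: for an open bounded convex domain
`Ω ⊂ ℝ^N` with first two Dirichlet eigenvalues `λ₁(Ω), λ₂(Ω)` and `L²`-normalized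
eigenfunctions `u₁, u₂`, the weighted Neumann eigenvalue satisfies
`μ₁(Ω, u₁²) = λ₂(Ω) - λ₁(Ω)` (stated as `μ₁(Ω,u₁²) + λ₁(Ω) = λ₂(Ω)`), and an
eigenfunction for `μ₁(Ω, u₁²)` is `ū := u₂/u₁`. -/
theorem weighted_neumann_eq_gap :
    ∀ (N : ℕ), 0 < N →
      ∀ Ω : Set (EuclideanSpace ℝ (Fin N)),
        IsOpen Ω → IsBounded Ω → Convex ℝ Ω → Ω.Nonempty →
        ∀ u1 u2 : EuclideanSpace ℝ (Fin N) → ℝ,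
          IsFirstDirichletEF Ω u1 → IsSecondDirichletEF Ω u1 u2 →
          wEV Ω (fun x => (u1 x) ^ 2) + dirEV Ω 1 = dirEV Ω 2 ∧
          wAdm Ω (fun x => (u1 x) ^ 2) (fun x => u2 x / u1 x) ∧
          wRayleigh Ω (fun x => (u1 x) ^ 2) (fun x => u2 x / u1 x) =
            wEV Ω (fun x => (u1 x) ^ 2) :=
  fun _ _ _ hΩ hb _ _ _ _ => weighted_neumann_eq_gap_general hΩ hb
end
end
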